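/- arXiv:1901.07248 — 7 statements merged into one kernel-verified Lean document; each statement's English description precedes it below -/
import Mathlib

section
/- If G is a finite tree, then the sages lose the 'Hats' game on G. -/
/-!
The proof removes one leaf at a time. Let `l` be a leaf with neighbour `p`, and let `f` be a winning
strategy on `G`. The guess of `l` depends only on the color of `p`, say as `g (c p)`. On `G - l`,
say that the sage at `v`, seeing `h`, is *forced* to `x` if `f v` returns `x` for every color
`y ≠ g x` given to `l`. Distinct `x`, `x'` cannot both be forced: with three colors available,
some `y` avoids both `g x` and `g x'`, and then both are the guess of `v` at `y`
(`ForcedColor.unique`). Hence guessing the forced color, if there is one, is a strategy on `G - l`.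
If it failed on some placement, the color of `p` would not be forced, which gives a color
`y ≠ g (c p)` for `l` that makes both `p` and `l` wrong; the other sages do
not see `l`, so they err as well, their own colors not being forced either. Thus `f` would fail
on the extended placement, and therefore the sages win on `G - l` (`SagesWin.of_leaf`).
Repeating this reduces any finite tree to a single vertex, where a constant guess loses.
-/

/-- A strategy in the "Hats" game: each sage `v` maps a coloring of his
neighbourhood to a guess in `Fin 3`. -/
def HatStrategy {V : Type*} (G : SimpleGraph V) : Type _ :=
  ∀ v : V, (G.neighborSet v → Fin 3) → Fin 3

/-- The sage at `v` guesses his own hat color correctly for placement `c`. -/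
def GuessesRight {V : Type*} {G : SimpleGraph V} (f : HatStrategy G)
    (c : V → Fin 3) (v : V) : Prop :=
  f v (fun u => c u.1) = c v

/-- The sages win the "Hats" game on `G`. -/
def SagesWin {V : Type*} (G : SimpleGraph V) : Prop :=
  ∃ f : HatStrategy G, ∀ c : V → Fin 3, ∃ v : V, GuessesRight f c v

open Classical in
/-- The coloring of the neighbourhood of `v` in `G` that agrees with `h` away from `l` and gives
`l` the color `y`; the value `y` is unused when `l` is not a neighbour of `v`. -/
noncomputable def extendNbhd {V : Type*} {G : SimpleGraph V} (l : V) (v : ({l}ᶜ : Set V))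
    (h : (G.induce {l}ᶜ).neighborSet v → Fin 3) (y : Fin 3) : G.neighborSet v.1 → Fin 3 :=
  fun u => if hu : u.1 = l then y else h ⟨⟨u.1, hu⟩, u.2⟩

/-- The sage at `v` guesses `x` under `f` whenever `l` has a color different from `g x`. -/
def ForcedColor {V : Type*} {G : SimpleGraph V} (f : HatStrategy G) (l : V) (g : Fin 3 → Fin 3)
    (v : ({l}ᶜ : Set V)) (h : (G.induce {l}ᶜ).neighborSet v → Fin 3) (x : Fin 3) : Prop :=
  ∀ y, y ≠ g x → f v.1 (extendNbhd l v h y) = x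

theorem ForcedColor.unique {V : Type*} {G : SimpleGraph V} {f : HatStrategy G} {l : V}
    {g : Fin 3 → Fin 3} {v : ({l}ᶜ : Set V)} {h : (G.induce {l}ᶜ).neighborSet v → Fin 3}
    {x x' : Fin 3} (hx : ForcedColor f l g v h x) (hx' : ForcedColor f l g v h x') : x = x' := by
  have key : ∀ a b : Fin 3, ∃ y, y ≠ a ∧ y ≠ b := by decide
  obtain ⟨y, h1, h2⟩ := key (g x) (g x')
  rw [← hx y h1, hx' y h2]

/-- Deleting a leaf preserves the existence of a winning strategy. -/
theorem SagesWin.of_leaf {V : Type*} {G : SimpleGraph V} {l p : V} (hlp : G.Adj l p)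
    (huniq : ∀ w, G.Adj l w → w = p) (hwin : SagesWin G) : SagesWin (G.induce {l}ᶜ) := by
  classical
  obtain ⟨f, hf⟩ := hwin
  let g : Fin 3 → Fin 3 := fun x => f l (fun _ => x)
  refine ⟨fun v h => if hx : ∃ x, ForcedColor f l g v h x then hx.choose else 0, ?_⟩
  intro c'
  by_contra hlose
  push Not at hlose
  have hnot : ∀ v : ({l}ᶜ : Set V),
      ∃ y, y ≠ g (c' v) ∧ f v.1 (extendNbhd l v (fun u => c' u.1) y) ≠ c' v := by
    intro v
    by_contra hcon
    push Not at hcon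
    have hforced : ForcedColor f l g v (fun u => c' u.1) (c' v) := hcon
    apply hlose v
    have hex : ∃ x, ForcedColor f l g v (fun u => c' u.1) x := ⟨_, hforced⟩
    exact (dif_pos hex).trans (hex.choose_spec.unique hforced)
  have hpl : p ≠ l := hlp.ne'
  obtain ⟨y, hy, hyp⟩ := hnot ⟨p, hpl⟩
  obtain ⟨v, hv⟩ := hf (fun u => if hu : u = l then y else c' ⟨u, hu⟩)
  unfold GuessesRight at hv
  by_cases hvl : v = l
  · subst hvl
    -- The leaf sees only the color of `p`, so it guesses `g (c' p)`, which is not `y`.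
    apply hy
    replace hv := hv.trans (dif_pos rfl)
    rw [← hv]
    show f v _ = f v _
    congr 1
    funext ⟨u, hu⟩
    obtain rfl := huniq u hu
    simp [hpl]
  · by_cases hvp : v = p
    · subst hvp
      replace hv := hv.trans (dif_neg hvl)
      exact hyp hv
    · -- The color of `l` is invisible to `v`, so `y` may be replaced by the color from `hnot`.
      obtain ⟨z, -, hz⟩ := hnot ⟨v, hvl⟩
      replace hv := hv.trans (dif_neg hvl)
      apply hz
      rw [← hv]
      show f v _ = f v _
      congr 1
      funext ⟨u, hu⟩
      have hul : u ≠ l := by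
        rintro rfl
        exact hvp (huniq v (SimpleGraph.Adj.symm hu))
      simp [extendNbhd, hul]

theorem sages_lose_on_tree {V : Type*} [Fintype V] (G : SimpleGraph V)
    (hG : G.IsTree) : ¬ SagesWin G := by
  classical
  induction hn : Fintype.card V using Nat.strong_induction_on generalizing V with
  | _ n ih =>
    rcases subsingleton_or_nontrivial V with hV | hV
    · rintro ⟨f, hf⟩
      have hempty : ∀ v, IsEmpty (G.neighborSet v) := fun v =>
        ⟨fun u => G.ne_of_adj u.2 (Subsingleton.elim _ _)⟩
      obtain ⟨v, hv⟩ := hf (fun v => f v (fun u => (hempty v).elim u) + 1)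
      unfold GuessesRight at hv
      have hsub : (fun u : G.neighborSet v => f u.1 (fun w => (hempty u.1).elim w) + 1)
          = fun u => (hempty v).elim u := funext fun u => (hempty v).elim u
      rw [hsub] at hv
      have key : ∀ a : Fin 3, a ≠ a + 1 := by decide
      exact key _ hv
    · intro hwin
      obtain ⟨l, hl⟩ := hG.exists_vert_degree_one_of_nontrivial
      obtain ⟨p, hlp, huniq⟩ := SimpleGraph.degree_eq_one_iff_existsUnique_adj.mp hl
      have htree : (G.induce {l}ᶜ).IsTree :=
        ⟨hG.connected.induce_compl_singleton_of_degree_eq_one hl, hG.isAcyclic.induce _⟩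
      have hcard : Fintype.card ({l}ᶜ : Set V) < n := by
        rw [← hn]
        exact Fintype.card_subtype_lt (x := l) (by simp)
      exact ih _ hcard _ htree rfl (hwin.of_leaf hlp huniq)
end

section
/- For every n ≥ 3, the sages win the 'Hats' game on the cycle graph C_n if and only if 3 divides n or n = 4. -/
/-! ### Sequences of tables and reachable colors -/

/-- A guessing table: `T a e` is the guess of a sage seeing `a` on the left and `e` on the right. -/
abbrev HatTable : Type := Fin 3 → Fin 3 → Fin 3

/-- The tables `F i` win on the `n`-cycle. Colorings of the cycle are `n`-periodic sequences, and
`F i` is the table of the sage at position `i + 1`. -/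
def TablesWin (n : ℕ) (F : ℕ → HatTable) : Prop :=
  ∀ c : ℕ → Fin 3, (∀ i, c (i + n) = c i) → ∃ i, c (i + 1) = F i (c i) (c (i + 2))

/-- `HatReach F x b k u v`: some sequence of colors `x, b, …, u, v` at positions `0, 1, …, k, k + 1`
makes all the sages at positions `1, …, k` guess wrong. -/
def HatReach (F : ℕ → HatTable) (x b : Fin 3) : ℕ → Fin 3 → Fin 3 → Prop
  | 0, u, v => u = x ∧ v = b
  | k + 1, v, w => ∃ u, HatReach F x b k u v ∧ F k u w ≠ v

theorem HatReach.exists_seq {F : ℕ → HatTable} {x b : Fin 3} {k : ℕ} {u v : Fin 3}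
    (h : HatReach F x b k u v) :
    ∃ c : ℕ → Fin 3, c 0 = x ∧ c 1 = b ∧ c k = u ∧ c (k + 1) = v ∧
      ∀ i < k, F i (c i) (c (i + 2)) ≠ c (i + 1) := by
  induction k generalizing u v with
  | zero =>
    obtain ⟨rfl, rfl⟩ := h
    exact ⟨fun i => if i = 0 then u else v, by simp⟩
  | succ k ih =>
    obtain ⟨t, h1, h2⟩ := h
    obtain ⟨c, h0, hb, hk, hk1, hc⟩ := ih h1
    refine ⟨fun i => if i = k + 2 then v else c i, by simpa using h0, by simpa using hb,
      by simpa using hk1, by simp, fun i hi => ?_⟩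
    rcases Nat.lt_succ_iff_lt_or_eq.1 hi with h | rfl
    · have e1 : i ≠ k + 2 := by omega
      have e2 : i + 2 ≠ k + 2 := by omega
      have e3 : i + 1 ≠ k + 2 := by omega
      simp only [e1, e2, e3, if_false]
      exact hc i h
    · simp [hk, hk1, h2]

theorem TablesWin.not_hatReach {n : ℕ} (hn : 3 ≤ n) {F : ℕ → HatTable}
    (hF : ∀ i, F (i + n) = F i) (hw : TablesWin n F) (x b : Fin 3) :
    ¬ HatReach F x b n x b := by
  intro h
  obtain ⟨c, h0, h1, hn0, hn1, hc⟩ := h.exists_seq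
  have hmod : ∀ i, F (i % n) = F i := fun i =>
    (show Function.Periodic F n from hF).map_mod_nat i
  obtain ⟨i, hi⟩ := hw (fun i => c (i % n)) (fun i => by simp)
  have hr : i % n < n := Nat.mod_lt _ (by omega)
  have key : ∀ j, j ≤ n + 1 → c (j % n) = c j := by
    intro j hj
    rcases Nat.lt_or_ge j n with h | h
    · rw [Nat.mod_eq_of_lt h]
    · rcases (by omega : j = n ∨ j = n + 1) with rfl | rfl
      · simp [h0, hn0]
      · rw [Nat.add_mod_left, Nat.mod_eq_of_lt (by omega), h1, hn1]
  apply hc _ hr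
  rw [hmod, ← key (i % n + 2) (by omega), ← key (i % n + 1) (by omega), Nat.mod_add_mod,
    Nat.mod_add_mod]
  exact hi.symm

/-- Rotating the cycle by `j` positions. -/
theorem TablesWin.shift {n : ℕ} (hn : 3 ≤ n) {F : ℕ → HatTable}
    (hF : ∀ i, F (i + n) = F i) (hw : TablesWin n F) (j : ℕ) :
    TablesWin n (fun i => F (i + j)) := by
  intro c hc
  have hP : ∀ m i, F (i + m * n) = F i := fun m i =>
    (show Function.Periodic F n from hF).nat_mul m i
  obtain ⟨i, hi⟩ := hw (fun i => c (i + j * (n - 1))) (fun i => by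
    rw [show i + n + j * (n - 1) = i + j * (n - 1) + n by ring, hc])
  refine ⟨i + j * (n - 1), ?_⟩
  have : i + j * (n - 1) + j = i + j * n := by
    obtain ⟨n, rfl⟩ : ∃ k, n = k + 1 := ⟨n - 1, by omega⟩
    simp; ring
  simp only [this, hP]
  rw [show i + j * (n - 1) + 1 = i + 1 + j * (n - 1) by ring,
    show i + j * (n - 1) + 2 = i + 2 + j * (n - 1) by ring]
  exact hi

/-- A relation `S u v` in which every `v` has at least two predecessors `u`. -/
def TwoPred (S : Fin 3 → Fin 3 → Prop) : Prop :=
  ∀ v, ∃ u u', u ≠ u' ∧ S u v ∧ S u' v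

/-- A relation `S u v` in which every `v` has a predecessor `u`, and two of the `v` share one. -/
def OnePred (S : Fin 3 → Fin 3 → Prop) : Prop :=
  (∀ v, ∃ u, S u v) ∧ ∃ u v v', v ≠ v' ∧ S u v ∧ S u v'

theorem fin3_exists_two_ne (a : Fin 3) : ∃ u u' : Fin 3, u ≠ u' ∧ u ≠ a ∧ u' ≠ a := by
  revert a; decide

/-- If for each of the three `w` one of two fixed elements precedes `w`, then by pigeonhole one of
them precedes two different `w`. -/
theorem onePred_of_pair {S : Fin 3 → Fin 3 → Prop} (q q' : Fin 3)
    (h : ∀ w, S q w ∨ S q' w) : OnePred S := by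
  refine ⟨fun w => (h w).elim (fun h => ⟨_, h⟩) fun h => ⟨_, h⟩, ?_⟩
  rcases h 0 with h0 | h0 <;> rcases h 1 with h1 | h1 <;> rcases h 2 with h2 | h2
  · exact ⟨_, 0, 1, by decide, h0, h1⟩
  · exact ⟨_, 0, 1, by decide, h0, h1⟩
  · exact ⟨_, 0, 2, by decide, h0, h2⟩
  · exact ⟨_, 1, 2, by decide, h1, h2⟩
  · exact ⟨_, 1, 2, by decide, h1, h2⟩
  · exact ⟨_, 0, 2, by decide, h0, h2⟩
  · exact ⟨_, 0, 1, by decide, h0, h1⟩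
  · exact ⟨_, 0, 1, by decide, h0, h1⟩

section Invariants

variable {F : ℕ → HatTable} {x b : Fin 3} {k : ℕ}

/-- `TwoPred` persists: any two `v, v'` have a common predecessor `u`, and the sage seeing `u` on the
left and `w` on the right cannot stop both. -/
theorem HatReach.two_succ (h : TwoPred (HatReach F x b k)) :
    TwoPred (HatReach F x b (k + 1)) := by
  intro w
  have key : ∀ v v', v ≠ v' → HatReach F x b (k + 1) v w ∨ HatReach F x b (k + 1) v' w := by
    intro v v' hv
    obtain ⟨u1, u2, h12, h1, h2⟩ := h v
    obtain ⟨u3, u4, h34, h3, h4⟩ := h v'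
    obtain ⟨u, hu, hu'⟩ : ∃ u, HatReach F x b k u v ∧ HatReach F x b k u v' := by
      have : u1 = u3 ∨ u1 = u4 ∨ u2 = u3 ∨ u2 = u4 := by
        clear h1 h2 h3 h4; omega
      rcases this with rfl | rfl | rfl | rfl
      exacts [⟨_, h1, h3⟩, ⟨_, h1, h4⟩, ⟨_, h2, h3⟩, ⟨_, h2, h4⟩]
    by_cases hF : F k u w = v
    · exact .inr ⟨u, hu', fun h' => hv (hF.symm.trans h')⟩
    · exact .inl ⟨u, hu, hF⟩
  rcases key 0 1 (by decide) with h0 | h1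
  · rcases key 1 2 (by decide) with h1 | h2
    exacts [⟨0, 1, by decide, h0, h1⟩, ⟨0, 2, by decide, h0, h2⟩]
  · rcases key 0 2 (by decide) with h0 | h2
    exacts [⟨0, 1, by decide, h0, h1⟩, ⟨1, 2, by decide, h1, h2⟩]

theorem HatReach.one_succ (h : OnePred (HatReach F x b k)) :
    OnePred (HatReach F x b (k + 1)) := by
  obtain ⟨-, u, v, v', hv, h1, h2⟩ := h
  refine onePred_of_pair v v' fun w => ?_
  by_cases hF : F k u w = v
  · exact .inr ⟨u, h2, fun h' => hv (hF.symm.trans h')⟩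
  · exact .inl ⟨u, h1, hF⟩

theorem HatReach.two_mono (h : TwoPred (HatReach F x b k)) {l : ℕ} (hl : k ≤ l) :
    TwoPred (HatReach F x b l) := by
  induction l, hl using Nat.le_induction with
  | base => exact h
  | succ l _ ih => exact HatReach.two_succ ih

theorem HatReach.one_mono (h : OnePred (HatReach F x b k)) {l : ℕ} (hl : k ≤ l) :
    OnePred (HatReach F x b l) := by
  induction l, hl using Nat.le_induction with
  | base => exact h
  | succ l _ ih => exact HatReach.one_succ ih

theorem HatReach.two_of_all {p : Fin 3} (h : ∀ q, HatReach F x b k p q) :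
    TwoPred (HatReach F x b (k + 1)) := by
  intro w
  obtain ⟨u, u', huu, hu, hu'⟩ := fin3_exists_two_ne (F k p w)
  exact ⟨u, u', huu, ⟨p, h u, hu.symm⟩, ⟨p, h u', hu'.symm⟩⟩

theorem HatReach.one_of_pair {p q q' : Fin 3} (hq : q ≠ q') (h : HatReach F x b k p q)
    (h' : HatReach F x b k p q') : OnePred (HatReach F x b (k + 1)) := by
  refine onePred_of_pair q q' fun w => ?_
  by_cases hF : F k p w = q
  · exact .inr ⟨p, h', fun h' => hq (hF.symm.trans h')⟩
  · exact .inl ⟨p, h, hF⟩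

end Invariants

/-! ### Counting guesses in rows and columns -/

/-- The number of occurrences of the guess `b` in row `a`. -/
def rowCount (T : HatTable) (a b : Fin 3) : ℕ := (Finset.univ.filter fun e => T a e = b).card

/-- The number of occurrences of the guess `a` in column `e`. -/
def colCount (T : HatTable) (e a : Fin 3) : ℕ := (Finset.univ.filter fun u => T u e = a).card

theorem rowCount_eq (T : HatTable) (a b : Fin 3) : rowCount T a b =
    (if T a 0 = b then 1 else 0) + (if T a 1 = b then 1 else 0) + if T a 2 = b then 1 else 0 := by
  rw [rowCount, Finset.card_filter, Fin.sum_univ_three]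

theorem colCount_eq (T : HatTable) (e a : Fin 3) : colCount T e a =
    (if T 0 e = a then 1 else 0) + (if T 1 e = a then 1 else 0) + if T 2 e = a then 1 else 0 := by
  rw [colCount, Finset.card_filter, Fin.sum_univ_three]

theorem sum_rowCount (T : HatTable) (a : Fin 3) : ∑ b, rowCount T a b = 3 := by
  have := Finset.card_eq_sum_card_fiberwise (s := Finset.univ) (t := Finset.univ) (f := T a)
    (by simp)
  simpa [rowCount] using this.symm

theorem sum_colCount (T : HatTable) (e : Fin 3) : ∑ a, colCount T e a = 3 := by
  have := Finset.card_eq_sum_card_fiberwise (s := Finset.univ) (t := Finset.univ)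
    (f := fun u => T u e) (by simp)
  simpa [colCount] using this.symm

theorem two_le_colCount {T : HatTable} {e a u u' : Fin 3} (h : u ≠ u') (h1 : T u e = a)
    (h2 : T u' e = a) : 2 ≤ colCount T e a := by
  rw [colCount, ← Finset.card_pair h]
  apply Finset.card_le_card
  intro t; simp only [Finset.mem_insert, Finset.mem_singleton, Finset.mem_filter]
  rintro (rfl | rfl) <;> simp [*]

theorem one_le_colCount {T : HatTable} {e a u : Fin 3} (h1 : T u e = a) :
    1 ≤ colCount T e a := by
  rw [colCount, Nat.one_le_iff_ne_zero, Finset.card_ne_zero]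
  exact ⟨u, by simp [h1]⟩

theorem exists_pair_of_rowCount_le_one {T : HatTable} {a b : Fin 3} (h : rowCount T a b ≤ 1) :
    ∃ e e', e ≠ e' ∧ T a e ≠ b ∧ T a e' ≠ b := by
  rw [rowCount_eq] at h
  by_cases h0 : T a 0 = b
  · refine ⟨1, 2, by decide, ?_, ?_⟩ <;> intro h' <;> simp only [h0, h', if_true] at h <;> omega
  · by_cases h1 : T a 1 = b
    · refine ⟨0, 2, by decide, h0, ?_⟩; intro h'; simp only [h1, h', if_true] at h; omega
    · exact ⟨0, 1, by decide, h0, h1⟩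

theorem ne_of_rowCount_eq_zero {T : HatTable} {a b : Fin 3} (h : rowCount T a b = 0) (e : Fin 3) :
    T a e ≠ b := by
  simp only [rowCount, Finset.card_eq_zero, Finset.filter_eq_empty_iff] at h
  exact h (Finset.mem_univ e)

/-! ### Rigidity of winning tables -/

section Rigidity

variable {n : ℕ} {F : ℕ → HatTable}

/-- The last sage has to stop every color sequence which gets past the others. -/
theorem TablesWin.last_eq (hn : 3 ≤ n) (hF : ∀ i, F (i + n) = F i) (hw : TablesWin n F)
    {x b a : Fin 3} (h : HatReach F x b (n - 1) a x) : F (n - 1) a b = x := by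
  by_contra h'
  obtain ⟨n, rfl⟩ : ∃ k, n = k + 1 := ⟨n - 1, by omega⟩
  exact hw.not_hatReach hn hF x b ⟨a, h, h'⟩

theorem TablesWin.two_le_colCount (hn : 3 ≤ n) (hF : ∀ i, F (i + n) = F i) (hw : TablesWin n F)
    {x b : Fin 3} (h : TwoPred (HatReach F x b (n - 1))) : 2 ≤ colCount (F (n - 1)) b x := by
  obtain ⟨u, u', h, h1, h2⟩ := h x
  exact _root_.two_le_colCount h (hw.last_eq hn hF h1) (hw.last_eq hn hF h2)

theorem TablesWin.one_le_colCount (hn : 3 ≤ n) (hF : ∀ i, F (i + n) = F i) (hw : TablesWin n F)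
    {x b : Fin 3} (h : OnePred (HatReach F x b (n - 1))) : 1 ≤ colCount (F (n - 1)) b x := by
  obtain ⟨u, h⟩ := h.1 x
  exact _root_.one_le_colCount (hw.last_eq hn hF h)

/-- The fewer guesses `b` there are in row `x` of the first table, the more pairs of colors get past
the first sage, and the more often the last table has to contain the guess `x` in column `b`. -/
theorem TablesWin.two_le_add (hn : 3 ≤ n) (hF : ∀ i, F (i + n) = F i) (hw : TablesWin n F)
    (x b : Fin 3) : 2 ≤ colCount (F (n - 1)) b x + rowCount (F 0) x b := by
  have h1 : ∀ c, F 0 x c ≠ b → HatReach F x b 1 b c := fun c hc => ⟨x, ⟨rfl, rfl⟩, hc⟩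
  rcases (by omega : rowCount (F 0) x b = 0 ∨ rowCount (F 0) x b = 1 ∨ 2 ≤ rowCount (F 0) x b)
    with h | h | h
  · have := hw.two_le_colCount hn hF (HatReach.two_mono (k := 2) (HatReach.two_of_all
      fun c => h1 c (ne_of_rowCount_eq_zero h c)) (by omega))
    omega
  · obtain ⟨c, c', hc, h2, h3⟩ := exists_pair_of_rowCount_le_one h.le
    have := hw.one_le_colCount hn hF (HatReach.one_mono (k := 2) (HatReach.one_of_pair hc
      (h1 c h2) (h1 c' h3)) (by omega))
    omega
  · omega

/-- Both sides of the nine inequalities `TablesWin.two_le_add` add up to `18`. -/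
theorem TablesWin.add_eq_two_last (hn : 3 ≤ n) (hF : ∀ i, F (i + n) = F i) (hw : TablesWin n F)
    (x b : Fin 3) : colCount (F (n - 1)) b x + rowCount (F 0) x b = 2 := by
  have hr := sum_rowCount (F 0)
  have hc := sum_colCount (F (n - 1))
  have hle := hw.two_le_add hn hF
  simp only [Fin.sum_univ_three, Fin.forall_fin_succ, Fin.forall_fin_zero, and_true] at hr hc hle
  simp at hr hc hle
  fin_cases x <;> fin_cases b <;> simp <;> omega

theorem TablesWin.add_eq_two (hn : 3 ≤ n) (hF : ∀ i, F (i + n) = F i) (hw : TablesWin n F)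
    (i : ℕ) (x b : Fin 3) : colCount (F i) b x + rowCount (F (i + 1)) x b = 2 := by
  have := (hw.shift hn hF (i + 1)).add_eq_two_last hn
    (fun j => by rw [show j + n + (i + 1) = j + (i + 1) + n by ring, hF]) x b
  rwa [show n - 1 + (i + 1) = i + n by omega, hF, Nat.zero_add] at this

/-- If row `x` of `F 0` contains `b` twice, column `b` of `F (n - 1)` does not contain `x`, so the
pairs reached from `x, b` must not satisfy `OnePred`; this forces the guess `c` on the second sage
twice. -/
theorem TablesWin.rowCount_next_zero (hn : 4 ≤ n) (hF : ∀ i, F (i + n) = F i)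
    (hw : TablesWin n F) {x b c : Fin 3} (h : rowCount (F 0) x b = 2) (hc : F 0 x c ≠ b) :
    2 ≤ rowCount (F 1) b c := by
  by_contra hlt
  obtain ⟨d, d', hd, h1, h2⟩ := exists_pair_of_rowCount_le_one (by omega : rowCount (F 1) b c ≤ 1)
  have h3 : HatReach F x b 1 b c := ⟨x, ⟨rfl, rfl⟩, hc⟩
  have := hw.one_le_colCount (by omega) hF (HatReach.one_mono (k := 3) (HatReach.one_of_pair hd
      (k := 2) ⟨b, h3, h1⟩ ⟨b, h3, h2⟩) (by omega))
  have := hw.add_eq_two_last (by omega) hF x b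
  omega

end Rigidity

/-- The properties of winning tables on a cycle of length at least `5` from which `3 ∣ n` is
derived. They refer to single tables, or to at most four consecutive ones. -/
structure LockedTables (F : ℕ → HatTable) : Prop where
  add_eq_two : ∀ i x b, colCount (F i) b x + rowCount (F (i + 1)) x b = 2
  le_two : ∀ i x b, rowCount (F i) x b ≤ 2
  sum_left : ∀ i b, ∑ x, rowCount (F i) x b = 3
  next : ∀ i x b c, rowCount (F i) x b = 2 → F i x c ≠ b → rowCount (F (i + 1)) b c = 2
  not_twoPred : ∀ x b, rowCount (F 0) x b ≠ 0 → ¬ TwoPred (HatReach F x b 4)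

section Cases

variable {F : ℕ → HatTable}

theorem TablesWin.locked {n : ℕ} (hn : 5 ≤ n) (hF : ∀ i, F (i + n) = F i)
    (hw : TablesWin n F) : LockedTables F := by
  have hadd := hw.add_eq_two (by omega) hF
  refine ⟨hadd, fun i x b => ?_, fun i b => ?_, fun i x b c h hc => ?_, fun x b h h' => ?_⟩
  · have h := hadd (i + n - 1) x b
    rw [show i + n - 1 + 1 = i + n by omega, hF] at h
    omega
  · have h1 := sum_colCount (F (i + n - 1)) b
    have h2 := fun x => hadd (i + n - 1) x b
    rw [show i + n - 1 + 1 = i + n by omega, hF] at h2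
    simp only [Fin.sum_univ_three] at h1 ⊢
    have := h2 0; have := h2 1; have := h2 2
    omega
  · have h1 := hadd i b c
    have h2 := (hw.shift (by omega) hF i).rowCount_next_zero (by omega)
      (fun j => by rw [show j + n + i = j + i + n by ring, hF]) (x := x) (b := b) (c := c)
      (by simpa using h) (by simpa using hc)
    rw [show 1 + i = i + 1 by ring] at h2
    omega
  · have h1 := hw.two_le_colCount (by omega) hF (HatReach.two_mono h' (by omega))
    have h2 := hw.add_eq_two_last (by omega) hF x b
    omega

theorem sum_of_injective {σ : Fin 3 → Fin 3} (hσ : Function.Injective σ) (g : Fin 3 → ℕ) :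
    g (σ 0) + g (σ 1) + g (σ 2) = ∑ x, g x := by
  rw [← Fin.sum_univ_three (fun x => g (σ x))]
  exact (Finite.injective_iff_bijective.1 hσ).sum_comp g

theorem exists_ne_of_rowCount {T : HatTable} {a b : Fin 3} (h : rowCount T a b = 2) :
    ∃ e, T a e ≠ b := by
  by_contra! h'
  simp [rowCount_eq, h'] at h

theorem rowCount_two_unique {T : HatTable} {a b b' : Fin 3} (h : rowCount T a b = 2)
    (h' : rowCount T a b' = 2) : b = b' := by
  by_contra hne
  have h3 := sum_rowCount T a
  have := Finset.add_le_sum (f := rowCount T a) (s := Finset.univ) (by simp) (Finset.mem_univ b)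
    (Finset.mem_univ b') hne
  omega

namespace LockedTables

theorem left_unique (hL : LockedTables F) {i : ℕ} {x x' b : Fin 3} (h : rowCount (F i) x b = 2)
    (h' : rowCount (F i) x' b = 2) : x = x' := by
  by_contra hne
  have h3 := hL.sum_left i b
  have := Finset.add_le_sum (f := fun x => rowCount (F i) x b) (s := Finset.univ) (by simp)
    (Finset.mem_univ x) (Finset.mem_univ x') hne
  omega

theorem some_succ (hL : LockedTables F) {i : ℕ} (h : ∃ a b, rowCount (F i) a b = 2) :
    ∃ a b, rowCount (F (i + 1)) a b = 2 := by
  obtain ⟨a, b, h⟩ := h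
  obtain ⟨c, hc⟩ := exists_ne_of_rowCount h
  exact ⟨b, c, hL.next i a b c h hc⟩

theorem all_succ (hL : LockedTables F) {i : ℕ} (h : ∀ a, ∃ b, rowCount (F i) a b = 2) :
    ∀ a, ∃ b, rowCount (F (i + 1)) a b = 2 := by
  choose φ hφ using h
  have hinj : Function.Injective φ := fun a a' haa => hL.left_unique (hφ a) (haa ▸ hφ a')
  intro b
  obtain ⟨a, rfl⟩ := Finite.injective_iff_surjective.1 hinj b
  obtain ⟨c, hc⟩ := exists_ne_of_rowCount (hφ a)
  exact ⟨c, hL.next i a _ c (hφ a) hc⟩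

end LockedTables

theorem forall_of_succ_of_periodic {n : ℕ} (hn : 0 < n) {P : ℕ → Prop}
    (hP : ∀ i, P i → P (i + 1)) (hper : ∀ i, P (i + n) → P i) {i : ℕ} (h : P i) (j : ℕ) : P j := by
  have h1 : P (j + i * n) := by
    have hle : i ≤ j + i * n := by nlinarith
    exact Nat.le_induction h (fun k _ hk => hP k hk) _ hle
  have h2 : ∀ m, P (j + m * n) → P j := by
    intro m
    induction m with
    | zero => simp
    | succ m ih => intro h; exact ih (hper _ (by rwa [add_assoc, ← Nat.succ_mul]))
  exact h2 i h1

/-! ### Excluding Latin squares -/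

theorem row_injective {T : HatTable} (h : ∀ a b, rowCount T a b = 1) {a e e' : Fin 3}
    (he : e ≠ e') : T a e ≠ T a e' := by
  intro h'
  have := h a (T a e')
  have h2 : ({e, e'} : Finset (Fin 3)) ⊆ Finset.univ.filter fun u => T a u = T a e' := by
    intro t; simp only [Finset.mem_insert, Finset.mem_singleton, Finset.mem_filter]
    rintro (rfl | rfl) <;> simp [h']
  have h3 := Finset.card_le_card h2
  rw [Finset.card_pair he] at h3
  change 2 ≤ rowCount T a (T a e') at h3
  omega

theorem row_surjective {T : HatTable} (h : ∀ a b, rowCount T a b = 1) (a b : Fin 3) :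
    ∃ e, T a e = b := by
  have := h a b
  by_contra! h'
  simp [rowCount_eq, h'] at this

theorem col_injective {T : HatTable} (h : ∀ a e, colCount T e a = 1) {a a' e : Fin 3}
    (he : a ≠ a') : T a e ≠ T a' e := by
  intro h'
  have := two_le_colCount he h' rfl
  have := h (T a' e) e
  omega

/-- The tables cannot all be Latin squares: starting from `0, 0`, four steps reach every pair of
colors `e, g` with `e ≠ e0`, for some `e0`. -/
theorem LockedTables.not_latin (hL : LockedTables F) (h : ∀ i a b, rowCount (F i) a b = 1) :
    False := by
  have hcol : ∀ i a e, colCount (F i) e a = 1 := fun i a e => by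
    have := hL.add_eq_two i a e
    rw [h] at this; omega
  refine hL.not_twoPred 0 0 (by simp [h]) ?_
  obtain ⟨c, c', hcc, hc, hc'⟩ := exists_pair_of_rowCount_le_one (h 0 0 0).le
  obtain ⟨c2, h2c, h2c'⟩ : ∃ c2 : Fin 3, c2 ≠ c ∧ c2 ≠ c' := by
    clear hc hc'; revert c c'; decide
  obtain ⟨d2, hd2⟩ := row_surjective (h 1) 0 c2
  obtain ⟨d0, hd0⟩ := row_surjective (h 1) 0 c
  have hdd : d2 ≠ d0 := by rintro rfl; exact h2c (hd2.symm.trans hd0)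
  obtain ⟨e0, he0⟩ := row_surjective (h 2) c' d0
  have r1 : HatReach F 0 0 1 0 c := ⟨0, ⟨rfl, rfl⟩, hc⟩
  have r1' : HatReach F 0 0 1 0 c' := ⟨0, ⟨rfl, rfl⟩, hc'⟩
  have r2 : HatReach F 0 0 2 c d2 := ⟨0, r1, by simpa [hd2] using h2c⟩
  have r2' : HatReach F 0 0 2 c' d2 := ⟨0, r1', by simpa [hd2] using h2c'⟩
  have r2'' : HatReach F 0 0 2 c' d0 := ⟨0, r1', by simpa [hd0] using hcc⟩
  have r3 : ∀ e, HatReach F 0 0 3 d2 e := fun e => by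
    by_cases he : F 2 c e = d2
    · exact ⟨c', r2', fun h' => col_injective (hcol 2) hcc (he.trans h'.symm)⟩
    · exact ⟨c, r2, he⟩
  have r3' : ∀ e, e ≠ e0 → HatReach F 0 0 3 d0 e := fun e he =>
    ⟨c', r2'', fun h' => row_injective (h 2) he (h'.trans he0.symm)⟩
  have r4 : ∀ e g, e ≠ e0 → HatReach F 0 0 4 e g := fun e g he => by
    by_cases he' : F 3 d2 g = e
    · exact ⟨d0, r3' e he, fun h' => col_injective (hcol 3) hdd (he'.trans h'.symm)⟩
    · exact ⟨d2, r3 e, he'⟩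
  intro g
  obtain ⟨u, u', huu, hu, hu'⟩ := fin3_exists_two_ne e0
  exact ⟨u, u', huu, r4 u g hu, r4 u' g hu'⟩

/-! ### Excluding tables with both kinds of rows -/

/-- The table, unique up to renaming colors, of the sages when only its last row consists of three
different guesses and the two other rows have a repeated guess. -/
def mixedTable : HatTable := ![![2, 0, 0], ![1, 2, 1], ![1, 0, 2]]

/-- After renaming colors by `σ` on the left and `τ` on the middle position, `T` has the row
counts of `mixedTable`. -/
structure IsMixed (T : HatTable) (σ τ : Fin 3 → Fin 3) : Prop where
  inj_left : Function.Injective σ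
  inj_mid : Function.Injective τ
  count : ∀ a b, rowCount T (σ a) (τ b) = (![![2, 0, 1], ![0, 2, 1], ![1, 1, 1]] :
    Fin 3 → Fin 3 → ℕ) a b

theorem fin3_injective {p q r : Fin 3} (h1 : p ≠ q) (h2 : p ≠ r) (h3 : q ≠ r) :
    Function.Injective ![p, q, r] := by
  intro i j hij
  fin_cases i <;> fin_cases j <;> simp_all

theorem rowCount_comp {ρ : Fin 3 → Fin 3} (hρ : Function.Injective ρ) (T : HatTable)
    (a b : Fin 3) : rowCount T a b = (if T a (ρ 0) = b then 1 else 0) +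
      (if T a (ρ 1) = b then 1 else 0) + if T a (ρ 2) = b then 1 else 0 := by
  rw [rowCount, Finset.card_filter]
  exact (sum_of_injective hρ fun e => if T a e = b then 1 else 0).symm

theorem colCount_comp {σ : Fin 3 → Fin 3} (hσ : Function.Injective σ) (T : HatTable)
    (e a : Fin 3) : colCount T e a = (if T (σ 0) e = a then 1 else 0) +
      (if T (σ 1) e = a then 1 else 0) + if T (σ 2) e = a then 1 else 0 := by
  rw [colCount, Finset.card_filter]
  exact (sum_of_injective hσ fun u => if T u e = a then 1 else 0).symm

theorem fin3_exists_third (p q : Fin 3) : ∃ r : Fin 3, p ≠ r ∧ q ≠ r := by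
  revert p q; decide

/-- Row and column sums are `3` and no entry exceeds `2`, so the position of one repeated guess and
one row without repetition determine all the row counts up to renaming colors. -/
theorem LockedTables.exists_isMixed (hL : LockedTables F) {i : ℕ}
    (hE : ∃ a b, rowCount (F i) a b = 2) (hA : ¬ ∀ a, ∃ b, rowCount (F i) a b = 2) :
    ∃ σ τ, IsMixed (F i) σ τ := by
  obtain ⟨y, b, hy⟩ := hE
  push Not at hA
  obtain ⟨x, hx⟩ := hA
  have hyx : y ≠ x := by rintro rfl; exact hx b hy
  obtain ⟨y', hyy, hxy⟩ := fin3_exists_third y x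
  obtain ⟨p, q, hpq, hp, hq⟩ := fin3_exists_two_ne b
  have hσ := fin3_injective hyy hyx hxy.symm
  -- Exactly one of the two other guesses is missing in row `y`.
  obtain ⟨p, q, hpq, hp, hq, h0⟩ : ∃ p q, p ≠ q ∧ p ≠ b ∧ q ≠ b ∧ rowCount (F i) y p = 0 := by
    have := (sum_of_injective (fin3_injective hp.symm hq.symm hpq) (rowCount (F i) y)).trans
      (sum_rowCount _ _)
    simp at this
    rcases (by omega : rowCount (F i) y p = 0 ∨ rowCount (F i) y q = 0) with h | h
    exacts [⟨p, q, hpq, hp, hq, h⟩, ⟨q, p, hpq.symm, hq, hp, h⟩]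
  have hτ := fin3_injective hp.symm hq.symm hpq
  refine ⟨_, _, hσ, hτ, ?_⟩
  have rs := fun a => (sum_of_injective hτ (rowCount (F i) a)).trans (sum_rowCount _ _)
  have cs := fun b => (sum_of_injective hσ (fun a => rowCount (F i) a b)).trans (hL.sum_left i b)
  have := rs x; have := rs y; have := rs y'
  have := cs b; have := cs p; have := cs q
  have := hx b; have := hx p; have := hx q
  have := hL.le_two i x b; have := hL.le_two i x p; have := hL.le_two i x q
  simp at *
  intro u v
  fin_cases u <;> fin_cases v <;> simp <;> omega

/-- The row counts of `F i` and `F (i + 1)` determine `F i` itself: the latter ones are known after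
renaming the colors on the right by `ρ`, and they give the column counts of `F i`. -/
theorem LockedTables.isMixed_succ (hL : LockedTables F) {i : ℕ} {σ τ : Fin 3 → Fin 3}
    (hA : ¬ ∀ a, ∃ b, rowCount (F (i + 1)) a b = 2) (h : IsMixed (F i) σ τ) :
    ∃ ρ, IsMixed (F (i + 1)) τ ρ ∧ ∀ a e, F i (σ a) (ρ e) = τ (mixedTable a e) := by
  obtain ⟨hσ, hτ, hc⟩ := h
  obtain ⟨r0, hr0⟩ := exists_ne_of_rowCount (hc 0 0)
  obtain ⟨r1, hr1⟩ := exists_ne_of_rowCount (hc 1 1)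
  have m0 := hL.next i _ _ _ (hc 0 0) hr0
  have m1 := hL.next i _ _ _ (hc 1 1) hr1
  have hne : r0 ≠ r1 := by
    rintro rfl
    exact absurd (hτ (hL.left_unique m0 m1)) (by decide)
  obtain ⟨r2, h02, h12⟩ := fin3_exists_third r0 r1
  have hx : ∀ b, rowCount (F (i + 1)) (τ 2) b ≠ 2 := by
    intro b hb
    apply hA
    intro a
    obtain ⟨a, rfl⟩ := Finite.injective_iff_surjective.1 hτ a
    fin_cases a
    exacts [⟨_, m0⟩, ⟨_, m1⟩, ⟨_, hb⟩]
  have hρ := fin3_injective hne h02 h12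
  have hcount : ∀ a b, rowCount (F (i + 1)) (τ a) (![r0, r1, r2] b) =
      (![![2, 0, 1], ![0, 2, 1], ![1, 1, 1]] : Fin 3 → Fin 3 → ℕ) a b := by
    have rs := fun a => (sum_of_injective hρ (rowCount (F (i + 1)) a)).trans (sum_rowCount _ _)
    have cs := fun b => (sum_of_injective hτ (fun a => rowCount (F (i + 1)) a b)).trans
      (hL.sum_left (i + 1) b)
    have := rs (τ 0); have := rs (τ 1); have := rs (τ 2)
    have := cs r0; have := cs r1; have := cs r2
    have := hx r0; have := hx r1; have := hx r2
    have := hL.le_two (i + 1) (τ 2) r0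
    have := hL.le_two (i + 1) (τ 2) r1
    have := hL.le_two (i + 1) (τ 2) r2
    clear hc hL hx
    simp at *
    intro u v
    fin_cases u <;> fin_cases v <;> simp <;> omega
  refine ⟨_, ⟨hτ, hρ, hcount⟩, ?_⟩
  have hN : ∀ k j, colCount (F i) (![r0, r1, r2] j) (τ k) =
      2 - (![![2, 0, 1], ![0, 2, 1], ![1, 1, 1]] : Fin 3 → Fin 3 → ℕ) k j := fun k j => by
    have := hL.add_eq_two i (τ k) (![r0, r1, r2] j)
    rw [hcount] at this
    omega
  -- Write every guess of `F i` as a value of `τ`; the counts then determine the nine guesses.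
  have hval : ∀ a e, ∃ g, F i (σ a) (![r0, r1, r2] e) = τ g := fun a e =>
    (Finite.injective_iff_surjective.1 hτ _).imp fun _ => Eq.symm
  choose g hg using hval
  have hc' : ∀ a b, ((if g a 0 = b then 1 else 0) + (if g a 1 = b then 1 else 0) +
      if g a 2 = b then 1 else 0) =
      (![![2, 0, 1], ![0, 2, 1], ![1, 1, 1]] : Fin 3 → Fin 3 → ℕ) a b := fun a b => by
    rw [← hc, rowCount_comp hρ]
    simp only [hg, hτ.eq_iff]
  have hN' : ∀ k j, ((if g 0 j = k then 1 else 0) + (if g 1 j = k then 1 else 0) +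
      if g 2 j = k then 1 else 0) =
      2 - (![![2, 0, 1], ![0, 2, 1], ![1, 1, 1]] : Fin 3 → Fin 3 → ℕ) k j := fun k j => by
    rw [← hN, colCount_comp hσ]
    simp only [hg, hτ.eq_iff]
  have g00 : g 0 0 ≠ 0 := fun h' => hr0 (by simpa [h'] using hg 0 0)
  have g11 : g 1 1 ≠ 1 := fun h' => hr1 (by simpa [h'] using hg 1 1)
  suffices H : ∀ a e, g a e = mixedTable a e from fun a e => by rw [hg, H]
  have e1 := hc' 0 0; have e2 := hc' 0 1; have e3 := hc' 1 1; have e4 := hc' 1 0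
  have e5 := hN' 2 2; have e6 := hN' 1 0; have e7 := hN' 0 1
  clear hc' hN' hg hc hN
  simp at e1 e2 e3 e4 e5 e6 e7
  have k01 : g 0 1 = 0 := by grind
  have k02 : g 0 2 = 0 := by grind
  have k00 : g 0 0 = 2 := by grind
  have k10 : g 1 0 = 1 := by grind
  have k12 : g 1 2 = 1 := by grind
  have k11 : g 1 1 = 2 := by grind
  have k20 : g 2 0 = 1 := by grind
  have k21 : g 2 1 = 0 := by grind
  have k22 : g 2 2 = 2 := by grind
  intro a e
  fin_cases a <;> fin_cases e <;> simp [mixedTable, *]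

theorem HatReach.mixed_step {x b : Fin 3} {k : ℕ} {σ τ ρ : Fin 3 → Fin 3}
    (hτ : Function.Injective τ) (hF : ∀ a e, F k (σ a) (ρ e) = τ (mixedTable a e))
    {u v : Fin 3} (h : HatReach F x b k (σ u) (τ v)) (w : Fin 3) (hw : mixedTable u w ≠ v) :
    HatReach F x b (k + 1) (τ v) (ρ w) :=
  ⟨σ u, h, fun h' => hw (hτ ((hF u w).symm.trans h'))⟩

/-- The tables cannot all have rows of both kinds: after renaming colors they are `mixedTable`, and
four steps from the pair `2, 2` establish `TwoPred`. -/
theorem LockedTables.not_mixed (hL : LockedTables F)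
    (hE : ∃ a b, rowCount (F 0) a b = 2) (hA : ∀ i, ¬ ∀ a, ∃ b, rowCount (F i) a b = 2) :
    False := by
  obtain ⟨s0, s1, h0⟩ := hL.exists_isMixed hE (hA 0)
  obtain ⟨s2, h1, e0⟩ := hL.isMixed_succ (hA _) h0
  obtain ⟨s3, h2, e1⟩ := hL.isMixed_succ (hA _) h1
  obtain ⟨s4, h3, e2⟩ := hL.isMixed_succ (hA _) h2
  obtain ⟨s5, h4, e3⟩ := hL.isMixed_succ (hA _) h3
  have m0 := h0.inj_mid
  have m1 := h1.inj_mid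
  have m2 := h2.inj_mid
  have m3 := h3.inj_mid
  have m4 := h4.inj_mid
  refine hL.not_twoPred (s0 2) (s1 2) (by simp [h0.count]) ?_
  have z : HatReach F (s0 2) (s1 2) 0 (s0 2) (s1 2) := ⟨rfl, rfl⟩
  have a0 := HatReach.mixed_step m0 e0 z 0 (by decide)
  have a1 := HatReach.mixed_step m0 e0 z 1 (by decide)
  have b00 := HatReach.mixed_step m1 e1 a0 0 (by decide)
  have b11 := HatReach.mixed_step m1 e1 a1 1 (by decide)
  have b02 := HatReach.mixed_step m1 e1 a0 2 (by decide)
  have b12 := HatReach.mixed_step m1 e1 a1 2 (by decide)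
  have c00 := HatReach.mixed_step m2 e2 b00 0 (by decide)
  have c11 := HatReach.mixed_step m2 e2 b11 1 (by decide)
  have c21 := HatReach.mixed_step m2 e2 b02 1 (by decide)
  have c22 := HatReach.mixed_step m2 e2 b02 2 (by decide)
  have c20 := HatReach.mixed_step m2 e2 b12 0 (by decide)
  intro v
  obtain ⟨v, rfl⟩ := Finite.injective_iff_surjective.1 m4 v
  fin_cases v
  · exact ⟨_, _, m3.ne (by decide), HatReach.mixed_step m3 e3 c00 0 (by decide),
      HatReach.mixed_step m3 e3 c22 0 (by decide)⟩
  · exact ⟨_, _, m3.ne (by decide), HatReach.mixed_step m3 e3 c11 1 (by decide),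
      HatReach.mixed_step m3 e3 c22 1 (by decide)⟩
  · exact ⟨_, _, m3.ne (by decide), HatReach.mixed_step m3 e3 c20 2 (by decide),
      HatReach.mixed_step m3 e3 c21 2 (by decide)⟩

/-! ### Tables with a repeated guess in every row -/

/-- A permutation of three colors has a fixed point or is a translation of `ℤ/3`; a translation
is compensated by the total increment `n • p` of an arithmetic progression when `3 ∤ n`. -/
theorem exists_progression {n : ℕ} (hn : ¬ 3 ∣ n) {π : Fin 3 → Fin 3} (hπ : Function.Injective π) :
    ∃ a p : Fin 3, ∀ i : ℕ, π (a + (i + n) • p) = a + i • p := by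
  have h : (∃ a, π a = a) ∨ ∃ t, ∀ a, π a = a + t := by
    revert π; decide
  rcases h with ⟨a, ha⟩ | ⟨t, ht⟩
  · exact ⟨a, 0, by simp [ha]⟩
  · have h3 : ∀ p : Fin 3, 3 • p = 0 := by decide
    have hm : ∀ p : Fin 3, n • p = (n % 3) • p := fun p => by
      conv_lhs => rw [← Nat.div_add_mod n 3, add_nsmul, mul_comm, mul_nsmul', h3, nsmul_zero,
        zero_add]
    obtain ⟨p, hp⟩ : ∃ p : Fin 3, n • p + t = 0 := by
      simp only [hm]
      rcases (by omega : n % 3 = 1 ∨ n % 3 = 2) with h | h <;> rw [h] <;> clear ht <;>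
        revert t <;> decide
    refine ⟨0, p, fun i => ?_⟩
    rw [ht, add_nsmul, add_assoc, add_assoc, hp, add_zero]

/-- If every row of every table repeats a guess `φ i a`, following these guesses around the cycle
yields consistent names of the colors in which arithmetic progressions defeat all the sages. -/
theorem LockedTables.three_dvd {n : ℕ} (hL : LockedTables F) (hF : ∀ i, F (i + n) = F i)
    (hw : TablesWin n F) (hA : ∀ i a, ∃ b, rowCount (F i) a b = 2) : 3 ∣ n := by
  by_contra hn
  choose φ hφ using hA
  have hinj : ∀ i, Function.Injective (φ i) := fun i a a' haa =>
    hL.left_unique (hφ i a) (haa ▸ hφ i a')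
  have hper : ∀ i a, φ (i + n) a = φ i a := fun i a =>
    rowCount_two_unique (T := F i) (a := a) (by rw [← hF]; exact hφ _ _) (hφ i a)
  have heq : ∀ i a e, F i a e ≠ φ i a → e = φ (i + 1) (φ i a) := fun i a e h =>
    rowCount_two_unique (hL.next i _ _ _ (hφ i a) h) (hφ (i + 1) (φ i a))
  have hne : ∀ i a, F i a (φ (i + 1) (φ i a)) ≠ φ i a := fun i a => by
    obtain ⟨e, he⟩ := exists_ne_of_rowCount (hφ i a)
    rwa [← heq i a e he]
  -- `σ i a` is the color at position `i` that gets the name `a` carried along by `φ`.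
  let σ : ℕ → Fin 3 → Fin 3 := fun i => Nat.rec id (fun i s => φ i ∘ s) i
  have hσ : ∀ i a, σ (i + 1) a = φ i (σ i a) := fun _ _ => rfl
  have hσi : ∀ i, Function.Injective (σ i) := fun i => by
    induction i with
    | zero => exact Function.injective_id
    | succ i ih => exact (hinj i).comp ih
  have hσn : ∀ i a, σ (i + n) a = σ i (σ n a) := fun i a => by
    induction i with
    | zero => rw [Nat.zero_add]; rfl
    | succ i ih => rw [Nat.succ_add_eq_add_succ, Nat.add_succ, hσ, ih, hper, hσ]
  obtain ⟨a, p, hap⟩ := exists_progression hn (hσi n)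
  obtain ⟨i, hi⟩ := hw (fun i => σ i (a + i • p)) (fun i => by rw [hσn, hap])
  simp only [hσ] at hi
  by_cases hp : p = 0
  · subst hp
    simp only [nsmul_zero, add_zero] at hi
    exact hne i _ hi.symm
  · have h2p : ∀ u p : Fin 3, p ≠ 0 → u + (p + p) ≠ u := by decide
    have h1p : ∀ u p : Fin 3, p ≠ 0 → u + p ≠ u := by decide
    by_cases h : F i (σ i (a + i • p)) (φ (i + 1) (φ i (σ i (a + (i + 2) • p)))) =
        φ i (σ i (a + i • p))
    · have := hσi i (hinj i (hi.trans h))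
      rw [add_nsmul, one_nsmul, ← add_assoc] at this
      exact h1p _ _ hp this
    · have := hσi i (hinj i (hinj (i + 1) (heq _ _ _ h)))
      rw [add_nsmul, two_nsmul, ← add_assoc] at this
      exact h2p _ _ hp this

theorem TablesWin.three_dvd {n : ℕ} (hn : 5 ≤ n) (hF : ∀ i, F (i + n) = F i)
    (hw : TablesWin n F) : 3 ∣ n := by
  have hL := hw.locked hn hF
  by_cases hA : ∃ i, ∀ a, ∃ b, rowCount (F i) a b = 2
  · obtain ⟨i, hA⟩ := hA
    exact hL.three_dvd hF hw fun j => forall_of_succ_of_periodic (n := n) (by omega)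
      (P := fun i => ∀ a, ∃ b, rowCount (F i) a b = 2) (fun i => hL.all_succ)
      (fun i h => by rwa [hF] at h) hA j
  · push Not at hA
    exfalso
    by_cases hE : ∃ i a b, rowCount (F i) a b = 2
    · obtain ⟨i, hE⟩ := hE
      refine hL.not_mixed (forall_of_succ_of_periodic (n := n) (by omega)
        (P := fun i => ∃ a b, rowCount (F i) a b = 2) (fun i => hL.some_succ)
        (fun i h => by rwa [hF] at h) hE 0) fun i => ?_
      push Not
      exact hA i
    · push Not at hE
      refine hL.not_latin fun i a b => ?_
      have h := sum_rowCount (F i) a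
      have h1 := hL.le_two i a
      have h2 := hE i a
      simp only [Fin.sum_univ_three] at h
      have := h1 0; have := h1 1; have := h1 2
      have := h2 0; have := h2 1; have := h2 2
      fin_cases b <;> simp <;> omega

end Cases

/-! ### Winning tables -/

/-- A sage guesses his left neighbor's color `a`, or `a + 1` if both neighbors have color `a`. -/
def copyTable : HatTable := fun a e => if e = a then a + 1 else a

/-- If all the sages using `copyTable` guess wrong, the increments of the coloring cannot grow. -/
theorem copyTable_increment (a b e : Fin 3) (h : b ≠ copyTable a e) : e - b ≤ b - a := by
  revert a b e; decide

/-- For `3 ∣ n`, the sages play `copyTable` with the colors of each further turn around the cycle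
shifted by `1`. The increments are then constant on a coloring that defeats everyone, so the total
increment over a turn is `0`, not `1`. -/
theorem exists_tablesWin_of_three_dvd {n : ℕ} (hn : 3 ≤ n) (h3 : 3 ∣ n) :
    ∃ F : ℕ → HatTable, (∀ i, F (i + n) = F i) ∧ TablesWin n F := by
  -- `d i = s i + c i` unrolls a periodic coloring `c`; `s` counts the completed turns.
  let s : ℕ → Fin 3 := fun i => (i / n) • (1 : Fin 3)
  have hs : ∀ i, s (i + n) = s i + 1 := fun i => by
    simp only [s, Nat.add_div_right i (by omega : 0 < n), add_nsmul, one_nsmul]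
  refine ⟨fun i a e => copyTable (s i + a) (s (i + 2) + e) - s (i + 1), fun i => ?_, ?_⟩
  · have key : ∀ u v w : Fin 3, copyTable (u + 1) (v + 1) - (w + 1) = copyTable u v - w := by
      decide
    funext a e
    simp only [add_right_comm i n, hs, add_right_comm (s _) 1, key]
  · intro c hc
    by_contra! hlose
    let d : ℕ → Fin 3 := fun i => s i + c i
    have hd : ∀ i, d (i + n) = d i + 1 := fun i => by simp only [d, hs, hc, add_right_comm]
    let p : ℕ → Fin 3 := fun i => d (i + 1) - d i
    have hanti : Antitone p := antitone_nat_of_succ_le fun i => by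
      apply copyTable_increment
      intro h
      apply hlose i
      rw [eq_sub_iff_add_eq, add_comm]
      exact h
    have hp : ∀ i, p (i + n) = p i := fun i => by
      simp only [p, add_right_comm i n, hd, add_sub_add_right_eq_sub]
    have hconst : ∀ i, i ≤ n → p i = p 0 := fun i hi =>
      le_antisymm (hanti (Nat.zero_le i)) (by
        have := hanti hi
        rwa [← Nat.zero_add n, hp] at this)
    have hlin : ∀ i, i ≤ n → d i = d 0 + i • p 0 := by
      intro i
      induction i with
      | zero => simp
      | succ i ih =>
        intro hi
        have h1 : d (i + 1) - d i = p 0 := hconst i (by omega)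
        rw [add_nsmul, one_nsmul, ← add_assoc, ← ih (by omega), ← h1, add_sub_cancel]
    have h1 := hlin n le_rfl
    have h2 := hd 0
    obtain ⟨m, rfl⟩ := h3
    have h4 : ∀ q : Fin 3, 3 • q = 0 := by decide
    rw [mul_comm 3 m, mul_nsmul', h4, nsmul_zero, add_zero] at h1
    rw [Nat.zero_add, mul_comm, h1] at h2
    have h5 : ∀ q : Fin 3, q ≠ q + 1 := by decide
    exact h5 _ h2

/-- Winning tables for the `4`-cycle; the first one is that of the sage at position `1`. -/
def fourTables : Fin 4 → HatTable :=
  ![![![0, 1, 1], ![2, 0, 1], ![2, 2, 0]], ![![0, 1, 2], ![0, 0, 1], ![1, 2, 2]],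
    ![![2, 2, 1], ![2, 1, 0], ![1, 0, 0]], ![![0, 1, 0], ![1, 2, 0], ![2, 2, 1]]]

theorem fourTables_win (a b c d : Fin 3) :
    b = fourTables 0 a c ∨ c = fourTables 1 b d ∨ d = fourTables 2 c a ∨ a = fourTables 3 d b := by
  revert a b c d; decide

theorem exists_tablesWin_four :
    ∃ F : ℕ → HatTable, (∀ i, F (i + 4) = F i) ∧ TablesWin 4 F := by
  refine ⟨fun i => fourTables (Fin.ofNat 4 i), fun i => by simp [Fin.ofNat], fun c hc => ?_⟩
  have h4 : c 4 = c 0 := hc 0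
  have h5 : c 5 = c 1 := hc 1
  rcases fourTables_win (c 0) (c 1) (c 2) (c 3) with h | h | h | h
  · exact ⟨0, h⟩
  · exact ⟨1, h⟩
  · exact ⟨2, by simpa [h4] using h⟩
  · exact ⟨3, by simpa [h4, h5] using h⟩

/-! ### From strategies on the cycle graph to sequences of tables -/

theorem cycleGraph_adj_ofNat {n : ℕ} [NeZero n] (hn : 3 ≤ n) (i : ℕ) (u : Fin n) :
    (SimpleGraph.cycleGraph n).Adj (Fin.ofNat n (i + 1)) u ↔
      u = Fin.ofNat n i ∨ u = Fin.ofNat n (i + 2) := by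
  obtain ⟨n, rfl⟩ : ∃ k, n = k + 2 := ⟨n - 2, by omega⟩
  have h1 : (Fin.ofNat (n + 2) (i + 1)) = Fin.ofNat (n + 2) i + 1 := by
    simp [Fin.ext_iff, Fin.val_add]
  have h2 : (Fin.ofNat (n + 2) (i + 2)) = Fin.ofNat (n + 2) i + 1 + 1 := by
    simp [Fin.ext_iff, Fin.val_add, add_assoc]
  rw [SimpleGraph.cycleGraph_adj, h1, h2]
  generalize Fin.ofNat (n + 2) i = v
  rw [sub_eq_iff_eq_add, sub_eq_iff_eq_add, add_comm 1 u, add_left_inj, add_comm 1 (v + 1)]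
  exact or_congr_left eq_comm

theorem ofNat_ne_add_two {n : ℕ} [NeZero n] (hn : 3 ≤ n) (i : ℕ) :
    Fin.ofNat n (i + 2) ≠ Fin.ofNat n i := by
  intro h
  have h1 : i + 2 ≡ i + 0 [MOD n] := congrArg Fin.val h
  have h2 := Nat.ModEq.add_left_cancel' i h1
  have := Nat.le_of_dvd (by omega) ((Nat.modEq_zero_iff_dvd).1 h2)
  omega

theorem ofNat_add_self {n : ℕ} [NeZero n] (i : ℕ) : Fin.ofNat n (i + n) = Fin.ofNat n i := by
  simp [Fin.ext_iff]

theorem sagesWin_cycleGraph_iff_tables {n : ℕ} (hn : 3 ≤ n) :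
    SagesWin (SimpleGraph.cycleGraph n) ↔
      ∃ F : ℕ → HatTable, (∀ i, F (i + n) = F i) ∧ TablesWin n F := by
  have : NeZero n := ⟨by omega⟩
  have hval : ∀ v : Fin n, Fin.ofNat n (v.val + (n - 1) + 1) = v := fun v => by
    rw [show v.val + (n - 1) + 1 = v.val + n by omega, ofNat_add_self]
    simp
  constructor
  · rintro ⟨f, hf⟩
    refine ⟨fun i a e => f (Fin.ofNat n (i + 1)) fun u => if u.1 = Fin.ofNat n i then a else e,
      fun i => ?_, fun c hc => ?_⟩
    · have h1 : Fin.ofNat n (i + n + 1) = Fin.ofNat n (i + 1) := by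
        rw [add_right_comm, ofNat_add_self]
      funext a e
      simp only [ofNat_add_self]
      rw [h1]
    · have hcv : ∀ i, c (Fin.ofNat n i).val = c i := fun i =>
        (show Function.Periodic c n from hc).map_mod_nat i
      obtain ⟨v, hv⟩ := hf fun v => c v.val
      refine ⟨v.val + (n - 1), ?_⟩
      revert hv
      generalize hi : v.val + (n - 1) = i
      have hvi : v = Fin.ofNat n (i + 1) := by rw [← hi, hval]
      subst hvi
      intro hv
      rw [GuessesRight, hcv] at hv
      rw [← hv]
      congr 1
      funext u
      rcases (cycleGraph_adj_ofNat hn i u.1).1 u.2 with h | h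
      · rw [h, hcv]; simp
      · rw [h, hcv, if_neg (ofNat_ne_add_two hn i)]
  · rintro ⟨F, hF, hw⟩
    have hFv : ∀ i, F (i % n) = F i := (show Function.Periodic F n from hF).map_mod_nat
    have hadj : ∀ v : Fin n,
        Fin.ofNat n (v.val + (n - 1)) ∈ (SimpleGraph.cycleGraph n).neighborSet v ∧
        Fin.ofNat n (v.val + (n - 1) + 2) ∈ (SimpleGraph.cycleGraph n).neighborSet v := by
      intro v
      have h := cycleGraph_adj_ofNat hn (v.val + (n - 1))
      rw [hval] at h
      exact ⟨(h _).2 (.inl rfl), (h _).2 (.inr rfl)⟩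
    refine ⟨fun v g => F (v.val + (n - 1)) (g ⟨_, (hadj v).1⟩) (g ⟨_, (hadj v).2⟩), fun c => ?_⟩
    obtain ⟨i, hi⟩ := hw (fun i => c (Fin.ofNat n i)) fun i => by rw [ofNat_add_self]
    have hmod : ((Fin.ofNat n (i + 1)).val + (n - 1)) % n = i % n := by
      rw [Fin.val_ofNat, Nat.mod_add_mod, show i + 1 + (n - 1) = i + n by omega,
        Nat.add_mod_right]
    have hof : ∀ j, Fin.ofNat n ((Fin.ofNat n (i + 1)).val + (n - 1) + j) = Fin.ofNat n (i + j) :=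
      fun j => Fin.ext (Nat.ModEq.add_right j hmod)
    refine ⟨Fin.ofNat n (i + 1), ?_⟩
    have h0 := hof 0
    have h2 := hof 2
    rw [Nat.add_zero, Nat.add_zero] at h0
    simp only [GuessesRight]
    rw [h0, h2, ← hFv, hmod, hFv]
    exact hi.symm

theorem sages_win_on_cycle_iff (n : ℕ) (hn : 3 ≤ n) :
    SagesWin (SimpleGraph.cycleGraph n) ↔ 3 ∣ n ∨ n = 4 := by
  rw [sagesWin_cycleGraph_iff_tables hn]
  constructor
  · rintro ⟨F, hF, hw⟩
    rcases (by omega : n = 3 ∨ n = 4 ∨ 5 ≤ n) with rfl | rfl | h5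
    exacts [.inl dvd_rfl, .inr rfl, .inl (hw.three_dvd h5 hF)]
  · rintro (h3 | rfl)
    exacts [exists_tablesWin_of_three_dvd hn h3, exists_tablesWin_four]
end

section
/- Let G be a finite connected simple graph. The sages lose the 'Hats' game on G if and only if either G is a tree, or the number of edges of G equals the number of vertices of G (so that G contains a unique cycle) and every cycle in G has length n with n ≥ 5 and n not divisible by 3. -/
open SimpleGraph

/-! ### Strategies of some of the sages and the relations they force -/

/-- The guess `φ` of the sage at `v`, written as a function of the whole placement, depends only
on the hats of the neighbours of `v`. -/
def LocalAt {V : Type*} (G : SimpleGraph V) (v : V) (φ : (V → Fin 3) → Fin 3) : Prop :=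
  ∀ c d : V → Fin 3, (∀ u, G.Adj v u → c u = d u) → φ c = φ d

/-- The sages of `S` can play so that every placement on which all of them are wrong
satisfies `P`. -/
def Forces {V : Type*} (G : SimpleGraph V) (S : Set V) (P : (V → Fin 3) → Prop) : Prop :=
  ∃ g : V → (V → Fin 3) → Fin 3, (∀ v, LocalAt G v (g v)) ∧
    ∀ c, (∀ v ∈ S, g v c ≠ c v) → P c

section Force
variable {V : Type*} {G : SimpleGraph V}

theorem Forces.mono {S T : Set V} {P Q : (V → Fin 3) → Prop} (h : Forces G S P) (hST : S ⊆ T)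
    (hPQ : ∀ c, P c → Q c) : Forces G T Q := by
  obtain ⟨g, hg, hP⟩ := h
  exact ⟨g, hg, fun c hc => hPQ c (hP c fun v hv => hc v (hST hv))⟩

/-- Disjoint sets of sages can play independently. -/
theorem Forces.and {S T : Set V} {P Q : (V → Fin 3) → Prop} (h : Forces G S P)
    (h' : Forces G T Q) (hST : Disjoint S T) : Forces G (S ∪ T) (fun c => P c ∧ Q c) := by
  classical
  obtain ⟨g, hg, hP⟩ := h
  obtain ⟨g', hg', hQ⟩ := h'
  refine ⟨fun v => if v ∈ S then g v else g' v, fun v => ?_, fun c hc => ⟨hP c ?_, hQ c ?_⟩⟩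
  · by_cases hv : v ∈ S
    · simpa [hv] using hg v
    · simpa [hv] using hg' v
  · intro v hv
    simpa [hv] using hc v (Or.inl hv)
  · intro v hv
    have : v ∉ S := fun h => Set.disjoint_left.1 hST h hv
    simpa [this] using hc v (Or.inr hv)

theorem forces_single {v : V} {φ : (V → Fin 3) → Fin 3} (h : LocalAt G v φ) :
    Forces G {v} (fun c => c v ≠ φ c) := by
  classical
  refine ⟨fun w => if w = v then φ else fun _ => 0, fun w => ?_, fun c hc => ?_⟩
  · by_cases hw : w = v
    · subst hw; simpa using h
    · simp only [hw, if_false]; exact fun _ _ _ => rfl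
  · simpa using (hc v rfl).symm

theorem forces_empty {P : (V → Fin 3) → Prop} (h : ∀ c, P c) : Forces G ∅ P :=
  ⟨fun _ _ => 0, fun _ _ _ _ => rfl, fun c _ => h c⟩

theorem Forces.insert {S : Set V} {P : (V → Fin 3) → Prop} (hS : Forces G S P)
    {v : V} {φ : (V → Fin 3) → Fin 3} (h : LocalAt G v φ) (hv : v ∉ S) :
    Forces G (insert v S) (fun c => c v ≠ φ c ∧ P c) := by
  have := (forces_single h).and hS (by simpa using hv)
  rwa [Set.singleton_union] at this

/-- The sages win as soon as some of them force a contradiction; the others are idle. -/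
theorem Forces.win {S : Set V} (h : Forces G S (fun _ => False)) : SagesWin G := by
  classical
  obtain ⟨g, hg, hP⟩ := h
  refine ⟨fun v r => g v (fun u => if hu : G.Adj v u then r ⟨u, hu⟩ else 0), fun c => ?_⟩
  by_contra! hc
  refine hP c fun v _ hv => hc v ?_
  unfold GuessesRight
  rw [← hv]
  refine hg v _ _ fun u hu => ?_
  simp [hu]

theorem local_one {v a : V} (ha : G.Adj v a) (F : Fin 3 → Fin 3) :
    LocalAt G v (fun c => F (c a)) := fun c c' h => by simp only [h a ha]

theorem local_two {v a b : V} (ha : G.Adj v a) (hb : G.Adj v b) (F : Fin 3 → Fin 3 → Fin 3) :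
    LocalAt G v (fun c => F (c a) (c b)) := fun c c' h => by simp only [h a ha, h b hb]

theorem local_three {v a b d : V} (ha : G.Adj v a) (hb : G.Adj v b) (hd : G.Adj v d)
    (F : Fin 3 → Fin 3 → Fin 3 → Fin 3) :
    LocalAt G v (fun c => F (c a) (c b) (c d)) := fun c c' h => by
  simp only [h a ha, h b hb, h d hd]

end Force

/-! ### Paths and cycles -/

/-- `Link G S a x y b L`: there is a path (a cycle if `a = b`) of length `L ≥ 1` from `a` to `b`
whose set of interior vertices is `S`, whose first edge is `a x` and whose last edge is `y b`.
The endpoints are not required to lie outside `S`. -/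
inductive Link {V : Type*} (G : SimpleGraph V) : Set V → V → V → V → V → ℕ → Prop
  | edge {a b : V} (h : G.Adj a b) : Link G ∅ a b a b 1
  | cons {S : Set V} {a x x' y b : V} {L : ℕ} (h : G.Adj a x) (hL : Link G S x x' y b L)
      (hx : x ∉ S) : Link G (insert x S) a x y b (L + 1)

section LinkLemmas
variable {V : Type*} {G : SimpleGraph V}

theorem Link.adj_left {S : Set V} {a x y b : V} {L : ℕ} (h : Link G S a x y b L) :
    G.Adj a x := by cases h <;> assumption

theorem Link.adj_right {S : Set V} {a x y b : V} {L : ℕ} (h : Link G S a x y b L) :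
    G.Adj y b := by induction h <;> assumption

theorem Link.pos {S : Set V} {a x y b : V} {L : ℕ} (h : Link G S a x y b L) : 1 ≤ L := by
  cases h <;> omega

theorem Link.mono {H : SimpleGraph V} {S : Set V} {a x y b : V} {L : ℕ} (h : Link G S a x y b L)
    (hGH : G ≤ H) : Link H S a x y b L := by
  induction h with
  | edge h => exact .edge (hGH h)
  | cons h _ hx ih => exact .cons (hGH h) ih hx

theorem Link.append {S T : Set V} {a x y m x' y' b : V} {L M : ℕ} (h : Link G S a x y m L)
    (h' : Link G T m x' y' b M) (hm : m ∉ S) (hm' : m ∉ T) (hST : Disjoint S T) :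
    Link G (insert m (S ∪ T)) a x y' b (L + M) := by
  induction h with
  | edge h =>
    have := Link.cons h h' hm'
    rw [Set.empty_union, add_comm]; exact this
  | @cons S a x x'' y b L h hL hx ih =>
    have hxT : x ∉ T := fun hT => Set.disjoint_left.1 hST (Set.mem_insert _ _) hT
    have h1 := ih h' (fun hh => hm (Set.mem_insert_of_mem _ hh)) hm'
      (hST.mono_left (Set.subset_insert _ _))
    have h2 := Link.cons h h1 (by
      simp only [Set.mem_insert_iff, Set.mem_union, not_or]
      exact ⟨fun hh => hm (by simp [hh]), hx, hxT⟩)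
    have e : insert b (insert x S ∪ T) = insert x (insert b (S ∪ T)) := by
      rw [Set.insert_union, Set.insert_comm]
    rw [e, show L + 1 + M = L + M + 1 by ring]
    exact h2

theorem Link.reverse {S : Set V} {a x y b : V} {L : ℕ} (h : Link G S a x y b L) :
    Link G S b y x a L := by
  induction h with
  | edge h => exact .edge h.symm
  | @cons S a x x'' y b L h hL hx ih =>
    have := ih.append (.edge h.symm) hx (by simp) (by simp)
    simpa using this

theorem Link.peel_left {S : Set V} {a x y b : V} {L : ℕ} (h : Link G S a x y b (L + 2)) :
    ∃ S' x', Link G S' x x' y b (L + 1) ∧ x ∉ S' ∧ S = insert x S' := by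
  generalize hM : L + 2 = M at h
  cases h with
  | edge h => omega
  | @cons S _ _ x' _ _ M h hL hx =>
    obtain rfl : M = L + 1 := by omega
    exact ⟨_, _, hL, hx, rfl⟩

theorem Link.peel_right {S : Set V} {a x y b : V} {L : ℕ} (h : Link G S a x y b (L + 2)) :
    ∃ S' y', Link G S' a x y' y (L + 1) ∧ y ∉ S' ∧ S = insert y S' := by
  obtain ⟨S', x', h1, h2, h3⟩ := h.reverse.peel_left
  exact ⟨S', x', h1.reverse, h2, h3⟩

/-- A link of length one is a single edge. -/
theorem Link.eq_of_one {S : Set V} {a x y b : V} (h : Link G S a x y b 1) :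
    S = ∅ ∧ x = b ∧ y = a := by
  generalize hM : 1 = M at h
  cases h with
  | edge h => exact ⟨rfl, rfl, rfl⟩
  | cons h hL hx => have := hL.pos; omega

/-- A link can be cut at any interior vertex. -/
theorem Link.split {S : Set V} {a x y b : V} {L : ℕ} (h : Link G S a x y b L) {v : V}
    (hv : v ∈ S) : ∃ S₁ S₂ y' x' L₁ L₂, Link G S₁ a x y' v L₁ ∧ Link G S₂ v x' y b L₂ ∧
      v ∉ S₁ ∧ v ∉ S₂ ∧ Disjoint S₁ S₂ ∧ S = insert v (S₁ ∪ S₂) ∧ L = L₁ + L₂ := by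
  induction h with
  | edge h => simp at hv
  | @cons S a x x'' y b L h hL hx ih =>
    by_cases hvx : v = x
    · subst hvx
      exact ⟨∅, S, a, x'', 1, L, .edge h, hL, by simp, hx, by simp, by simp, by ring⟩
    · have hvS : v ∈ S := by simpa [hvx] using hv
      obtain ⟨S₁, S₂, y', x', L₁, L₂, h1, h2, h3, h4, h5, h6, h7⟩ := ih hvS
      subst h6
      simp only [Set.mem_insert_iff, Set.mem_union, not_or] at hx
      refine ⟨insert x S₁, S₂, y', x', L₁ + 1, L₂, .cons h h1 hx.2.1, h2, ?_, h4, ?_, ?_, by omega⟩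
      · simp [hvx, h3]
      · rw [Set.disjoint_insert_left]; exact ⟨hx.2.2, h5⟩
      · rw [Set.insert_union, Set.insert_comm]

/-- The first vertex of `K` met along a link whose interior meets `K`. -/
theorem Link.first_hit {S : Set V} {a x y b : V} {L : ℕ} (h : Link G S a x y b L) (K : Set V)
    (hK : ∃ v ∈ S, v ∈ K) : ∃ v S₁ S₂ y' x' L₁ L₂, v ∈ K ∧ Disjoint S₁ K ∧
      Link G S₁ a x y' v L₁ ∧ Link G S₂ v x' y b L₂ ∧
      v ∉ S₁ ∧ v ∉ S₂ ∧ Disjoint S₁ S₂ ∧ S = insert v (S₁ ∪ S₂) ∧ L = L₁ + L₂ := by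
  induction h with
  | edge h => simp at hK
  | @cons S a x x'' y b L h hL hx ih =>
    by_cases hxK : x ∈ K
    · exact ⟨x, ∅, S, a, x'', 1, L, hxK, by simp, .edge h, hL, by simp, hx, by simp, by simp,
        by ring⟩
    · have hK' : ∃ v ∈ S, v ∈ K := by
        obtain ⟨v, hv, hvK⟩ := hK
        rcases hv with rfl | hv
        · exact absurd hvK hxK
        · exact ⟨v, hv, hvK⟩
      obtain ⟨v, S₁, S₂, y', x', L₁, L₂, hvK, hd, h1, h2, h3, h4, h5, h6, h7⟩ := ih hK'
      subst h6
      simp only [Set.mem_insert_iff, Set.mem_union, not_or] at hx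
      refine ⟨v, insert x S₁, S₂, y', x', L₁ + 1, L₂, hvK, ?_, .cons h h1 hx.2.1, h2, ?_, h4, ?_,
        ?_, by omega⟩
      · rw [Set.disjoint_insert_left]; exact ⟨hxK, hd⟩
      · simp only [Set.mem_insert_iff, not_or]; exact ⟨fun hh => hx.1 hh.symm, h3⟩
      · rw [Set.disjoint_insert_left]; exact ⟨hx.2.2, h5⟩
      · rw [Set.insert_union, Set.insert_comm]

/-- A walk that does not repeat vertices, except possibly its first one, is a link. -/
theorem link_of_walk {a b : V} (w : G.Walk a b) (hw : w.length ≠ 0)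
    (hn : w.support.tail.Nodup) :
    ∃ x y, Link G {v | v ∈ w.support.tail.dropLast} a x y b w.length := by
  induction w with
  | nil => simp at hw
  | @cons a m b h p ih =>
    by_cases hp : p.length = 0
    · cases p with
      | nil => exact ⟨_, _, by simpa using Link.edge h⟩
      | cons _ _ => simp at hp
    · simp only [Walk.support_cons, List.tail_cons] at hn
      rw [← Walk.cons_tail_support, List.nodup_cons] at hn
      obtain ⟨x, y, hl⟩ := ih hp hn.2
      refine ⟨m, y, ?_⟩
      have hne : p.support.tail ≠ [] := by
        intro h0
        have := p.length_support
        rw [← Walk.cons_tail_support, h0] at this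
        simp at this
        exact hp (Walk.length_eq_zero_iff.2 this)
      have := Link.cons h hl (fun hm => hn.1 (List.mem_of_mem_dropLast hm))
      rw [Walk.length_cons]
      convert this using 1
      rw [Walk.support_cons, List.tail_cons]
      conv_lhs => rw [← Walk.cons_tail_support]
      rw [List.dropLast_cons_of_ne_nil hne]
      ext v; simp

/-- The endpoint of a walk that does not repeat vertices is not among the interior vertices. -/
theorem walk_end_notMem {a b : V} (w : G.Walk a b) (hn : w.support.tail.Nodup) :
    b ∉ {v | v ∈ w.support.tail.dropLast} := by
  intro hb
  by_cases h0 : w.support.tail = []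
  · simp [h0] at hb
  · have h1 : w.support.tail.getLast h0 = b := by
      rw [List.getLast_tail, Walk.getLast_support]
    have h2 := List.dropLast_append_getLast h0
    rw [h1] at h2
    rw [← h2] at hn
    have := (List.nodup_append.1 hn).2.2
    exact this b hb b (by simp) rfl

end LinkLemmas

/-! ### Links: transporting monotone differences -/

/-- The relation that the interior sages of a link of length `L` can force between the colours
`a, x` of its first two and `y, b` of its last two vertices. Differences of colours are ordered by
`-1 < 0 < 1`, that is, by the value of `d + 1` in `Fin 3`; the last difference is at most the first
one, and if they agree then all differences along the link agree. -/
def StrongRel (L : ℕ) (a x y b : Fin 3) : Prop :=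
  b - y + 1 ≤ x - a + 1 ∧ (x - a = b - y → b - a = L • (x - a))

/-- The part of `StrongRel` that does not refer to the length of the link. -/
def WeakRel (a x y b : Fin 3) : Prop :=
  b - y + 1 ≤ x - a + 1 ∧ (x - a = b - y → x = a → a = b)

instance (a x y b : Fin 3) : Decidable (WeakRel a x y b) := by
  unfold WeakRel; infer_instance

section LinkForce
variable {V : Type*} {G : SimpleGraph V}

theorem StrongRel.weak {L : ℕ} {a x y b : Fin 3} (h : StrongRel L a x y b) :
    WeakRel a x y b := by
  refine ⟨h.1, fun h1 h2 => ?_⟩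
  have := h.2 h1
  rw [h2, sub_self, nsmul_zero, sub_eq_zero] at this
  exact this.symm

/-- The guess of an interior sage between colours `a` and `z`: it is wrong only if the differences
do not increase at this sage. -/
def stepGuess (a z : Fin 3) : Fin 3 := if z - a = 1 then a else a + 2

theorem stepGuess_spec : ∀ a x z : Fin 3, x ≠ stepGuess a z → z - x + 1 ≤ x - a + 1 := by
  decide

theorem Link.forces_strong {S : Set V} {a x y b : V} {L : ℕ} (h : Link G S a x y b L) :
    Forces G S (fun c => StrongRel L (c a) (c x) (c y) (c b)) := by
  induction h with
  | edge h => exact forces_empty fun c => ⟨le_rfl, fun _ => by simp⟩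
  | @cons S a x x' y b L h hL hx ih =>
    refine (ih.insert (local_two h.symm hL.adj_left stepGuess) hx).mono subset_rfl ?_
    rintro c ⟨h1, h2, h3⟩
    have h4 := stepGuess_spec _ _ _ h1
    refine ⟨h2.trans h4, fun h5 => ?_⟩
    -- equal extreme differences squeeze the difference in between
    have h6 : c x' - c x = c x - c a := by
      have : c x' - c x + 1 = c x - c a + 1 := le_antisymm h4 (by rw [h5]; exact h2)
      exact add_right_cancel this
    have h7 := h3 (by rw [h6, h5])
    rw [succ_nsmul, ← h6, ← h7, h6]
    abel

theorem Link.forces_weak {S : Set V} {a x y b : V} {L : ℕ} (h : Link G S a x y b L) :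
    Forces G S (fun c => WeakRel (c a) (c x) (c y) (c b)) :=
  h.forces_strong.mono subset_rfl fun _ h => h.weak

/-! ### Winning cycles -/

/-- On a cycle of length divisible by three the link closing up has length `2` modulo `3`; two
further sages refute the remaining placements. -/
theorem win_of_three_dvd {S : Set V} {a x y : V} {n : ℕ} (h : Link G S a x y a n) (ha : a ∉ S)
    (hn : 3 ∣ n) : SagesWin G := by
  have hpos := h.pos
  obtain ⟨m, rfl⟩ : ∃ m, n = m + 2 := ⟨n - 2, by omega⟩
  obtain ⟨S', u, hl, hx, rfl⟩ := h.peel_left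
  simp only [Set.mem_insert_iff, not_or] at ha
  let F : Fin 3 → Fin 3 → Fin 3 := ![![0, 0, 1], ![2, 1, 1], ![2, 0, 2]]
  let H : Fin 3 → Fin 3 → Fin 3 := ![![2, 1, 1], ![2, 0, 2], ![0, 0, 1]]
  have h1 := (hl.forces_strong.insert (local_two h.adj_left.symm hl.adj_left F) hx).insert
    (local_two h.adj_left hl.adj_right.symm H) (v := a) (by simp [ha])
  refine (h1.mono subset_rfl ?_).win
  rintro c ⟨h2, h3, h4, h5⟩
  have hm : ∀ d : Fin 3, (m + 1) • d = 2 • d := by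
    intro d
    obtain ⟨k, hk⟩ : ∃ k, m + 1 = k * 3 + 2 := ⟨m / 3, by omega⟩
    have h3 : ∀ d : Fin 3, 3 • d = 0 := by decide
    rw [hk, add_nsmul, mul_nsmul', h3, nsmul_zero, zero_add]
  rw [hm] at h5
  have key : ∀ a p u y : Fin 3, a ≠ H p y → p ≠ F a u → a - y + 1 ≤ u - p + 1 →
      (u - p = a - y → a - p = 2 • (u - p)) → False := by decide
  exact key _ _ _ _ h2 h3 h4 h5

/-- All four sages play by explicit tables, and refuting every placement is a finite
verification. -/
theorem win_of_four {S : Set V} {a x y : V} (h : Link G S a x y a 4) (ha : a ∉ S) :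
    SagesWin G := by
  obtain ⟨S', m, hl, hx, rfl⟩ := h.peel_left
  obtain ⟨S'', m', hl', hy, rfl⟩ := hl.peel_right
  obtain ⟨S₃, z, hl₃, hm, rfl⟩ := hl'.peel_left
  obtain ⟨rfl, rfl, rfl⟩ := hl₃.eq_of_one
  simp only [Set.mem_insert_iff, not_or, Set.mem_empty_iff_false, not_false_eq_true,
    and_true] at ha hx hy
  have hxm := hl.adj_left
  have hmy := hl₃.adj_left
  let T : Fin 4 → Fin 3 → Fin 3 → Fin 3 := ![![![2, 2, 0], ![0, 2, 1], ![1, 0, 1]],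
    ![![0, 2, 1], ![1, 0, 1], ![2, 2, 0]], ![![2, 0, 1], ![0, 1, 1], ![2, 2, 0]],
    ![![1, 0, 2], ![0, 0, 1], ![2, 1, 2]]]
  have h1 := ((((forces_single (local_two hxm.symm hmy (T 2))).insert
    (local_two hmy.symm h.adj_right (T 3)) (v := z) (by simpa using hy)).insert
    (local_two h.adj_left.symm hxm (T 1)) (v := x) (by simpa using hx)).insert
    (local_two h.adj_right.symm h.adj_left (T 0)) (v := a) (by simpa using ha))
  refine (h1.mono subset_rfl ?_).win
  rintro c ⟨h2, h3, h4, h5⟩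
  have key : ∀ a x m z : Fin 3, a ≠ T 0 z x → x ≠ T 1 a m → z ≠ T 3 m a → m ≠ T 2 x z →
      False := by decide
  exact key _ _ _ _ h2 h3 h4 h5
end LinkForce

/-! ### Winning on two cycles that share at most one vertex -/

section TwoCycles
variable {V : Type*} {G : SimpleGraph V}

/-- The bit that the two neighbours of the base vertex of a cycle can show to it. -/
def hintBit (p q : Fin 3) : Bool := p = 0 || q = 1

/-- The sages of a cycle other than its base vertex `a` can tell the sage at `a` any single bit
`τ` about the hat of `a`. -/
theorem Link.forces_hint {S : Set V} {a p q : V} {n : ℕ} (h : Link G S a p q a n)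
    (hn : 3 ≤ n) (τ : Fin 3 → Bool) :
    Forces G S (fun c => hintBit (c p) (c q) = τ (c a)) := by
  obtain ⟨m, rfl⟩ : ∃ m, n = m + 3 := ⟨n - 3, by omega⟩
  obtain ⟨S', u, hl, hp, rfl⟩ := h.peel_left
  obtain ⟨S'', v, hl', hq, rfl⟩ := hl.peel_right
  simp only [Set.mem_insert_iff, not_or] at hp
  have h1 := (hl'.forces_weak.insert (local_two h.adj_right hl'.adj_right.symm
    (fun a v => if τ a then ![2, 0, 2] v else 1)) hq).insert
    (local_two h.adj_left.symm hl'.adj_left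
    (fun a u => if τ a then ![2, 0, 1] u else 0)) (v := p) (by simpa using hp)
  refine h1.mono subset_rfl ?_
  rintro c ⟨h2, h3, h4⟩
  have key : ∀ (t : Bool) (p u v q : Fin 3), (p ≠ if t then ![2, 0, 1] u else 0) →
      (q ≠ if t then ![2, 0, 2] v else 1) → WeakRel p u v q → hintBit p q = t := by decide
  exact key _ _ _ _ _ h2 h3 h4

/-- Two cycles sharing exactly the vertex `a`: one tells whether `a` has colour `0`, the other one
whether `a` has colour `1`, and the sage at `a` guesses accordingly. -/
theorem win_of_figure_eight {S T : Set V} {a p q p' q' : V} {n m : ℕ}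
    (h : Link G S a p q a n) (h' : Link G T a p' q' a m) (hn : 3 ≤ n) (hm : 3 ≤ m)
    (hS : a ∉ S) (hT : a ∉ T) (hST : Disjoint S T) : SagesWin G := by
  have h1 := ((h.forces_hint hn (fun a => a = 0)).and (h'.forces_hint hm (fun a => a = 1))
    hST).insert (v := a)
    (φ := fun c => if hintBit (c p) (c q) then 0 else if hintBit (c p') (c q') then 1 else 2)
    (fun c c' hc => by
      simp only [hc p h.adj_left, hc q h.adj_right.symm, hc p' h'.adj_left,
        hc q' h'.adj_right.symm]) (by simp [hS, hT])
  refine (h1.mono subset_rfl ?_).win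
  rintro c ⟨h2, h3, h4⟩
  rw [h3, h4] at h2
  generalize c a = x at h2
  revert x; decide

/-- The first cycle tells whether its base vertex `a` has colour `2`, the second one whether `b`
has colour `1`; the link between `a` and `b` excludes the remaining placements. -/
theorem win_of_dumbbell {S T U : Set V} {a b p q p' q' x y : V} {n m L : ℕ}
    (h : Link G S a p q a n) (h' : Link G T b p' q' b m) (hU : Link G U a x y b L)
    (hn : 3 ≤ n) (hm : 3 ≤ m)
    (hab : a ≠ b) (haS : a ∉ S) (haT : a ∉ T) (haU : a ∉ U) (hbS : b ∉ S) (hbT : b ∉ T)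
    (hbU : b ∉ U) (hST : Disjoint S T) (hSU : Disjoint S U) (hTU : Disjoint T U) :
    SagesWin G := by
  have h1 := ((((h.forces_hint hn (fun a => a = 2)).and (h'.forces_hint hm (fun b => b = 1))
    hST).and hU.forces_weak (by simp [hSU, hTU])).insert (v := a)
    (φ := fun c => if hintBit (c p) (c q) then 2 else ![0, 0, 1] (c x))
    (fun c c' hc => by
      simp only [hc p h.adj_left, hc q h.adj_right.symm, hc x hU.adj_left])
    (by simp [haS, haT, haU])).insert (v := b)
    (φ := fun c => if hintBit (c p') (c q') then 1 else ![2, 0, 1] (c y))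
    (fun c c' hc => by
      simp only [hc p' h'.adj_left, hc q' h'.adj_right.symm, hc y hU.adj_right.symm])
    (by simp [hbS, hbT, hbU, hab.symm])
  refine (h1.mono subset_rfl ?_).win
  rintro c ⟨h2, h3, ⟨h4, h5⟩, h6⟩
  rw [h5] at h2
  rw [h4] at h3
  have key : ∀ a x y b : Fin 3, (b ≠ if decide (b = 1) = true then 1 else ![2, 0, 1] y) →
      (a ≠ if decide (a = 2) = true then 2 else ![0, 0, 1] x) → WeakRel a x y b → False := by
    decide
  exact key _ _ _ _ h2 h3 h6

end TwoCycles

/-! ### Winning on theta graphs -/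

section Theta
variable {V : Type*} {G : SimpleGraph V}

/-- Three guess tables for the two colours seen by a sage of degree two, for use on the three
vertices of a long link next to its endpoints. -/
structure LongTables where
  left : Fin 3 → Fin 3 → Fin 3
  right : Fin 3 → Fin 3 → Fin 3
  second : Fin 3 → Fin 3 → Fin 3

/-- What is forced by a link of length at least four on which the vertex next to `a` and
the two vertices next to `b` play by the tables. -/
def LongRel (t : LongTables) (a p q b : Fin 3) : Prop :=
  ∃ u v r, p ≠ t.left a u ∧ q ≠ t.right b r ∧ r ≠ t.second q v ∧ WeakRel p u v r

instance (t : LongTables) (a p q b : Fin 3) : Decidable (LongRel t a p q b) := by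
  unfold LongRel; infer_instance

theorem Link.forces_long {S : Set V} {a p q b : V} {n : ℕ} (h : Link G S a p q b n)
    (hn : 4 ≤ n) (t : LongTables) :
    Forces G S (fun c => LongRel t (c a) (c p) (c q) (c b)) := by
  obtain ⟨m, rfl⟩ : ∃ m, n = m + 4 := ⟨n - 4, by omega⟩
  obtain ⟨S', u, hl, hp, rfl⟩ := h.peel_left
  obtain ⟨S'', r, hl', hq, rfl⟩ := hl.peel_right
  obtain ⟨S₃, v, hl₃, hr, rfl⟩ := hl'.peel_right
  simp only [Set.mem_insert_iff, not_or] at hp hq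
  have h1 := ((hl₃.forces_weak.insert (local_two hl'.adj_right hl₃.adj_right.symm t.second)
    hr).insert (local_two h.adj_right hl'.adj_right.symm t.right) (v := q) (by simpa using hq)).insert
    (local_two h.adj_left.symm hl₃.adj_left t.left) (v := p) (by simpa using hp)
  refine h1.mono subset_rfl ?_
  rintro c ⟨h2, h3, h4, h5⟩
  exact ⟨c u, c v, c r, h2, h3, h4, h5⟩

/-- Three links between `a` and `b` with disjoint interiors, the sages inside which force
relations that are refuted by the guesses `α` and `β` of the endpoints. -/
theorem win_of_theta_rel {S₁ S₂ S₃ : Set V} {a b p₁ q₁ p₂ q₂ p₃ q₃ : V}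
    {R₁ R₂ R₃ : Fin 3 → Fin 3 → Fin 3 → Fin 3 → Prop}
    (h₁ : Forces G S₁ (fun c => R₁ (c a) (c p₁) (c q₁) (c b)))
    (h₂ : Forces G S₂ (fun c => R₂ (c a) (c p₂) (c q₂) (c b)))
    (h₃ : Forces G S₃ (fun c => R₃ (c a) (c p₃) (c q₃) (c b)))
    (hp₁ : G.Adj a p₁) (hq₁ : G.Adj q₁ b) (hp₂ : G.Adj a p₂) (hq₂ : G.Adj q₂ b)
    (hp₃ : G.Adj a p₃) (hq₃ : G.Adj q₃ b)
    (hab : a ≠ b) (ha₁ : a ∉ S₁) (ha₂ : a ∉ S₂) (ha₃ : a ∉ S₃) (hb₁ : b ∉ S₁) (hb₂ : b ∉ S₂)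
    (hb₃ : b ∉ S₃) (h₁₂ : Disjoint S₁ S₂) (h₁₃ : Disjoint S₁ S₃) (h₂₃ : Disjoint S₂ S₃)
    (α β : Fin 3 → Fin 3 → Fin 3 → Fin 3)
    (key : ∀ a b p₁ q₁, R₁ a p₁ q₁ b → ∀ p₂ q₂, R₂ a p₂ q₂ b → ∀ p₃ q₃, R₃ a p₃ q₃ b →
      a = α p₁ p₂ p₃ ∨ b = β q₁ q₂ q₃) : SagesWin G := by
  have h1 := (((h₁.and h₂ h₁₂).and h₃ (by simp [h₁₃, h₂₃])).insert (local_three hp₁ hp₂ hp₃ α)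
    (by simp [ha₁, ha₂, ha₃])).insert (local_three hq₁.symm hq₂.symm hq₃.symm β)
    (by simp [hb₁, hb₂, hb₃, hab.symm])
  refine (h1.mono subset_rfl ?_).win
  rintro c ⟨h2, h3, ⟨h4, h5⟩, h6⟩
  rcases key _ _ _ _ h4 _ _ h5 _ _ h6 with h | h
  · exact h3 h
  · exact h2 h

/-- Three links between `a` and `b` of lengths `l`, `m`, `n` with disjoint interiors. -/
structure IsTheta (G : SimpleGraph V) (a b : V) (S₁ S₂ S₃ : Set V) (l m n : ℕ) : Prop where
  ne : a ≠ b
  link₁ : ∃ x y, Link G S₁ a x y b l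
  link₂ : ∃ x y, Link G S₂ a x y b m
  link₃ : ∃ x y, Link G S₃ a x y b n
  a₁ : a ∉ S₁
  a₂ : a ∉ S₂
  a₃ : a ∉ S₃
  b₁ : b ∉ S₁
  b₂ : b ∉ S₂
  b₃ : b ∉ S₃
  d₁₂ : Disjoint S₁ S₂
  d₁₃ : Disjoint S₁ S₃
  d₂₃ : Disjoint S₂ S₃

theorem IsTheta.swap₁₂ {a b : V} {S₁ S₂ S₃ : Set V} {l m n : ℕ}
    (h : IsTheta G a b S₁ S₂ S₃ l m n) : IsTheta G a b S₂ S₁ S₃ m l n :=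
  ⟨h.ne, h.link₂, h.link₁, h.link₃, h.a₂, h.a₁, h.a₃, h.b₂, h.b₁, h.b₃, h.d₁₂.symm, h.d₂₃, h.d₁₃⟩

theorem IsTheta.swap₂₃ {a b : V} {S₁ S₂ S₃ : Set V} {l m n : ℕ}
    (h : IsTheta G a b S₁ S₂ S₃ l m n) : IsTheta G a b S₁ S₃ S₂ l n m :=
  ⟨h.ne, h.link₁, h.link₃, h.link₂, h.a₁, h.a₃, h.a₂, h.b₁, h.b₃, h.b₂, h.d₁₃, h.d₁₂, h.d₂₃.symm⟩

/-- Two of the three links form a cycle; the lengths `3`, `4` and `6` already win. -/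
theorem IsTheta.win_of_cycle {a b : V} {S₁ S₂ S₃ : Set V} {l m n : ℕ}
    (h : IsTheta G a b S₁ S₂ S₃ l m n) (hlm : l + m = 3 ∨ l + m = 4 ∨ l + m = 6) :
    SagesWin G := by
  obtain ⟨x, y, hl⟩ := h.link₁
  obtain ⟨x', y', hl'⟩ := h.link₂
  have hc := hl.append hl'.reverse h.b₁ h.b₂ h.d₁₂
  have ha : a ∉ insert b (S₁ ∪ S₂) := by simp [h.ne, h.a₁, h.a₂]
  rcases hlm with e | e | e <;> rw [e] at hc
  · exact win_of_three_dvd hc ha (by norm_num)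
  · exact win_of_four hc ha
  · exact win_of_three_dvd hc ha (by norm_num)

/-- The tables on the first long link of a theta graph, a certificate for
`IsTheta.win_of_long`. -/
def tablesX : LongTables :=
  ⟨![![2, 2, 2], ![0, 0, 1], ![0, 0, 1]], ![![1, 0, 0], ![1, 2, 2], ![1, 1, 1]],
    ![![0, 0, 0], ![2, 1, 1], ![0, 0, 0]]⟩

/-- The tables on the second long link of a theta graph. -/
def tablesX' : LongTables :=
  ⟨![![2, 0, 0], ![0, 0, 0], ![2, 1, 1]], ![![1, 1, 0], ![1, 1, 0], ![2, 2, 0]],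
    ![![0, 0, 1], ![2, 2, 2], ![2, 2, 2]]⟩

/-- Two of the links have length at least four and play by tables, the third one forces
`WeakRel`; the guesses at `a` and `b` are explicit, and refuting every placement is a finite
verification. -/
theorem IsTheta.win_of_long {a b : V} {S₁ S₂ S₃ : Set V} {l m n : ℕ}
    (h : IsTheta G a b S₁ S₂ S₃ l m n) (hm : 4 ≤ m) (hn : 4 ≤ n) : SagesWin G := by
  obtain ⟨p₁, q₁, h₁⟩ := h.link₁
  obtain ⟨p₂, q₂, h₂⟩ := h.link₂
  obtain ⟨p₃, q₃, h₃⟩ := h.link₃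
  refine win_of_theta_rel (h₁.forces_weak (G := G)) (h₂.forces_long hm tablesX)
    (h₃.forces_long hn tablesX') h₁.adj_left h₁.adj_right h₂.adj_left h₂.adj_right
    h₃.adj_left h₃.adj_right h.ne h.a₁ h.a₂ h.a₃ h.b₁ h.b₂ h.b₃ h.d₁₂ h.d₁₃ h.d₂₃
    ![![![2, 0, 2], ![2, 0, 2], ![2, 2, 2]],
      ![![0, 0, 0], ![0, 0, 0], ![1, 1, 1]],
      ![![2, 1, 1], ![2, 1, 1], ![2, 1, 1]]]
    ![![![2, 2, 1], ![2, 2, 0], ![2, 2, 0]],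
      ![![1, 2, 1], ![0, 2, 0], ![0, 2, 0]],
      ![![1, 2, 1], ![1, 2, 1], ![0, 2, 0]]] ?_
  decide +kernel

/-- The links of lengths two and three play by explicit tables, the link of arbitrary length
forces `WeakRel`. -/
theorem IsTheta.win_of_two_three {a b : V} {S₁ S₂ S₃ : Set V} {l : ℕ}
    (h : IsTheta G a b S₁ S₂ S₃ l 2 3) : SagesWin G := by
  obtain ⟨p₁, q₁, h₁⟩ := h.link₁
  obtain ⟨p₂, q₂, h₂⟩ := h.link₂
  obtain ⟨p₃, q₃, h₃⟩ := h.link₃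
  let F : Fin 3 → Fin 3 → Fin 3 := ![![0, 2, 2], ![1, 2, 2], ![1, 1, 0]]
  let F' : Fin 3 → Fin 3 → Fin 3 := ![![2, 0, 0], ![1, 2, 1], ![1, 2, 1]]
  let H : Fin 3 → Fin 3 → Fin 3 := ![![0, 1, 0], ![2, 1, 2], ![0, 1, 0]]
  have f₂ : Forces G S₂ (fun c => c p₂ = c q₂ ∧ c p₂ ≠ F (c a) (c b)) := by
    obtain ⟨S', z, hl, hp, e⟩ := h₂.peel_left
    obtain ⟨rfl, rfl, rfl⟩ := hl.eq_of_one
    rw [e, LawfulSingleton.insert_empty_eq]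
    exact (forces_single (local_two h₂.adj_left.symm hl.adj_left F)).mono subset_rfl
      fun c hc => ⟨rfl, hc⟩
  have f₃ : Forces G S₃ (fun c => c p₃ ≠ F' (c a) (c q₃) ∧ c q₃ ≠ H (c b) (c p₃)) := by
    obtain ⟨S', z, hl, hp, e⟩ := h₃.peel_left
    obtain ⟨S'', z', hl', hq, e'⟩ := hl.peel_right
    obtain ⟨rfl, rfl, rfl⟩ := hl'.eq_of_one
    subst e'
    rw [e]
    have := ((forces_single (local_two h₃.adj_right hl.adj_left.symm H)).insert
      (local_two h₃.adj_left.symm hl.adj_left F') (v := z') (by simpa using hp))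
    rw [LawfulSingleton.insert_empty_eq]
    exact this
  refine win_of_theta_rel (R₂ := fun a p q b => p = q ∧ p ≠ F a b)
    (R₃ := fun a p q b => p ≠ F' a q ∧ q ≠ H b p) (h₁.forces_weak (G := G)) f₂
    f₃ h₁.adj_left h₁.adj_right h₂.adj_left h₂.adj_right
    h₃.adj_left h₃.adj_right h.ne h.a₁ h.a₂ h.a₃ h.b₁ h.b₂ h.b₃ h.d₁₂ h.d₁₃ h.d₂₃
    ![![![2, 0, 2], ![1, 0, 0], ![2, 0, 2]],
      ![![1, 0, 0], ![1, 0, 0], ![2, 0, 2]],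
      ![![1, 0, 1], ![1, 0, 0], ![2, 2, 2]]]
    ![![![1, 2, 2], ![1, 2, 2], ![0, 0, 0]],
      ![![1, 0, 0], ![1, 2, 2], ![0, 0, 0]],
      ![![1, 1, 2], ![1, 2, 2], ![1, 0, 0]]] ?_
  decide +kernel

/-- At most one link has length one, as the graph is simple. Either two of the links close up to a
winning cycle, or two of them have length at least four, or the lengths `2` and `3` both occur. -/
theorem IsTheta.win {a b : V} {S₁ S₂ S₃ : Set V} {l m n : ℕ}
    (h : IsTheta G a b S₁ S₂ S₃ l m n) (hlm : ¬ (l = 1 ∧ m = 1)) (hln : ¬ (l = 1 ∧ n = 1))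
    (hmn : ¬ (m = 1 ∧ n = 1)) : SagesWin G := by
  have hl : 1 ≤ l := by obtain ⟨x, y, h⟩ := h.link₁; exact h.pos
  have hm : 1 ≤ m := by obtain ⟨x, y, h⟩ := h.link₂; exact h.pos
  have hn : 1 ≤ n := by obtain ⟨x, y, h⟩ := h.link₃; exact h.pos
  by_cases c1 : l + m = 3 ∨ l + m = 4 ∨ l + m = 6
  · exact h.win_of_cycle c1
  by_cases c2 : l + n = 3 ∨ l + n = 4 ∨ l + n = 6
  · exact h.swap₂₃.win_of_cycle c2
  by_cases c3 : m + n = 3 ∨ m + n = 4 ∨ m + n = 6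
  · exact h.swap₁₂.swap₂₃.win_of_cycle c3
  by_cases c4 : 4 ≤ m ∧ 4 ≤ n
  · exact h.win_of_long c4.1 c4.2
  by_cases c5 : 4 ≤ l ∧ 4 ≤ n
  · exact h.swap₁₂.win_of_long c5.1 c5.2
  by_cases c6 : 4 ≤ l ∧ 4 ≤ m
  · exact h.swap₂₃.swap₁₂.win_of_long c6.1 c6.2
  -- the remaining lengths contain both `2` and `3`
  have : (l = 2 ∧ m = 3) ∨ (l = 3 ∧ m = 2) ∨ (l = 2 ∧ n = 3) ∨ (l = 3 ∧ n = 2) ∨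
      (m = 2 ∧ n = 3) ∨ (m = 3 ∧ n = 2) := by
    have h2 : (l < 4 ∧ m < 4) ∨ (l < 4 ∧ n < 4) ∨ (m < 4 ∧ n < 4) := by
      clear c1 c2 c3; omega
    clear c4 c5 c6
    rcases h2 with ⟨h2, h3⟩ | ⟨h2, h3⟩ | ⟨h2, h3⟩
    · clear c2 c3; interval_cases l <;> interval_cases m <;> simp_all
    · clear c1 c3; interval_cases l <;> interval_cases n <;> simp_all
    · clear c1 c2; interval_cases m <;> interval_cases n <;> simp_all
  rcases this with ⟨rfl, rfl⟩ | ⟨rfl, rfl⟩ | ⟨rfl, rfl⟩ | ⟨rfl, rfl⟩ | ⟨rfl, rfl⟩ | ⟨rfl, rfl⟩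
  · exact h.swap₂₃.swap₁₂.win_of_two_three
  · exact h.swap₁₂.swap₂₃.swap₁₂.win_of_two_three
  · exact h.swap₁₂.win_of_two_three
  · exact h.swap₁₂.swap₂₃.win_of_two_three
  · exact h.win_of_two_three
  · exact h.swap₂₃.win_of_two_three

end Theta

/-! ### Finding two cycles in a graph with more edges than vertices -/

section Extraction
variable {V : Type*} {G : SimpleGraph V}

/-- A cycle of length `n` based at `a`; the other vertices of the cycle form the set `S`. -/
def IsCyc (G : SimpleGraph V) (a : V) (S : Set V) (n : ℕ) : Prop :=
  (∃ x y, Link G S a x y a n) ∧ a ∉ S ∧ 3 ≤ n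

theorem IsCyc.mono {H : SimpleGraph V} {a : V} {S : Set V} {n : ℕ} (h : IsCyc G a S n)
    (hGH : G ≤ H) : IsCyc H a S n := by
  obtain ⟨⟨x, y, hl⟩, ha, hn⟩ := h
  exact ⟨⟨x, y, hl.mono hGH⟩, ha, hn⟩

/-- A cycle can be based at any of its vertices. -/
theorem IsCyc.rotate {a : V} {S : Set V} {n : ℕ} (h : IsCyc G a S n) {v : V}
    (hv : v ∈ insert a S) : ∃ S', IsCyc G v S' n ∧ insert v S' = insert a S := by
  rcases hv with rfl | hv
  · exact ⟨S, h, rfl⟩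
  obtain ⟨⟨x, y, hl⟩, ha, hn⟩ := h
  obtain ⟨S₁, S₂, y', x', L₁, L₂, h1, h2, h3, h4, h5, rfl, rfl⟩ := hl.split hv
  simp only [Set.mem_insert_iff, Set.mem_union, not_or] at ha
  have h6 := h2.append h1 ha.2.2 ha.2.1 h5.symm
  rw [add_comm] at h6
  refine ⟨_, ⟨⟨_, _, h6⟩, ?_, by omega⟩, ?_⟩
  · simp [h3, h4, Ne.symm ha.1]
  · rw [Set.insert_comm, Set.union_comm]

theorem isCyc_of_isCycle {a : V} {w : G.Walk a a} (hw : w.IsCycle) :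
    IsCyc G a {v | v ∈ w.support.tail.dropLast} w.length :=
  ⟨link_of_walk w (by have := hw.three_le_length; omega) hw.support_nodup,
    walk_end_notMem w hw.support_nodup, hw.three_le_length⟩

/-- A link that starts outside `K` and ends in `K` contains one whose interior avoids `K`. -/
theorem Link.first_hit' {S : Set V} {a x y b : V} {L : ℕ} (h : Link G S a x y b L) {K : Set V}
    (hb : b ∈ K) : ∃ v ∈ K, ∃ S₁ y' L₁, Link G S₁ a x y' v L₁ ∧ S₁ ⊆ S ∧ Disjoint S₁ K := by
  by_cases hK : ∃ v ∈ S, v ∈ K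
  · obtain ⟨v, S₁, S₂, y', x', L₁, L₂, hvK, hd, h1, -, -, -, -, rfl, -⟩ := h.first_hit K hK
    exact ⟨v, hvK, S₁, y', L₁, h1, fun z hz => Or.inr (Or.inl hz), hd⟩
  · exact ⟨b, hb, S, y, L, h, subset_rfl, Set.disjoint_left.2 fun v h1 h2 => hK ⟨v, h1, h2⟩⟩

/-- Disjoint nonempty vertex sets of a connected graph are joined by a link whose interior avoids
both. -/
theorem exists_link_between (hG : G.Connected) {K K' : Set V} {a b : V} (ha : a ∈ K)
    (hb : b ∈ K') (hd : Disjoint K K') : ∃ a' ∈ K, ∃ b' ∈ K', ∃ U x y L, Link G U a' x y b' L ∧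
      Disjoint U K ∧ Disjoint U K' := by
  have hab : a ≠ b := fun h => Set.disjoint_left.1 hd ha (h ▸ hb)
  obtain ⟨w, hw⟩ := (hG.preconnected a b).exists_isPath
  obtain ⟨x, y, hl⟩ := link_of_walk w (fun h => hab (Walk.eq_of_length_eq_zero h))
    hw.support_nodup.tail
  obtain ⟨b', hb', S₁, y', L₁, h1, -, hd1⟩ := hl.first_hit' hb
  obtain ⟨a', ha', S₂, x', L₂, h2, hS, hd2⟩ := h1.reverse.first_hit' ha
  exact ⟨a', ha', b', hb', S₂, _, _, L₂, h2.reverse, hd2, hd1.mono_left hS⟩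

/-- A cycle and a further vertex which lies on another cycle: these form a dumbbell, a figure
eight or a theta graph. -/
theorem win_of_vertex_off_cycle (hG : G.Connected) {a v : V} {S T : Set V} {n m : ℕ}
    (hC : IsCyc G a S n) (hD : IsCyc G v T m) (hv : v ∉ insert a S) : SagesWin G := by
  by_cases hK : ∃ z ∈ T, z ∈ insert a S
  swap
  · have hdis : Disjoint (insert a S) (insert v T) := by
      rw [Set.disjoint_insert_right]
      exact ⟨hv, Set.disjoint_left.2 fun z h1 h2 => hK ⟨z, h2, h1⟩⟩
    obtain ⟨a', ha', b', hb', U, x, y, L, hU, hd, hd'⟩ := exists_link_between hG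
      (Set.mem_insert a S) (Set.mem_insert v T) hdis
    obtain ⟨S', ⟨⟨p, q, hS'⟩, ha'', hn⟩, eS⟩ := hC.rotate ha'
    obtain ⟨T', ⟨⟨p', q', hT'⟩, hb'', hm⟩, eT⟩ := hD.rotate hb'
    rw [← eS] at hd hdis
    rw [← eT] at hd' hdis
    simp only [Set.disjoint_insert_right, Set.disjoint_insert_left, Set.mem_insert_iff,
      not_or] at hd hd' hdis
    exact win_of_dumbbell hS' hT' hU hn hm (fun h => hdis.1.1 h.symm) ha'' hdis.2.1 hd.1
      (fun h => hdis.1.2 h) hb'' hd'.1 hdis.2.2 hd.2.symm hd'.2.symm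
  obtain ⟨⟨x, y, hT⟩, hvT, hm⟩ := hD
  obtain ⟨A, T₁, T₂, y₁, x₂, L₁, L₂, hA, hd₁, h1, h2, hA1, hA2, hd12, rfl, rfl⟩ :=
    hT.first_hit _ hK
  obtain ⟨S', ⟨⟨p, q, hS'⟩, hAS, hn⟩, eS⟩ := hC.rotate hA
  rw [← eS] at hd₁ hv hK
  simp only [Set.mem_insert_iff, Set.mem_union, not_or, Set.disjoint_insert_right] at hvT hv hd₁
  by_cases hK2 : ∃ z ∈ T₂, z ∈ insert A S'
  swap
  · have hd2 : Disjoint T₂ S' := Set.disjoint_left.2 fun z h1 h2 => hK2 ⟨z, h1, Or.inr h2⟩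
    refine win_of_figure_eight hS' (h2.append h1 hvT.2.2 hvT.2.1 hd12.symm) hn (by omega) hAS
      ?_ ?_
    · simp [hA1, hA2, Ne.symm hvT.1]
    · simp [hv, hd₁.2.symm, hd2.symm]
  obtain ⟨B, T₃, T₄, y₃, x₄, L₃, L₄, hB, hd₃, h3, h4, hB3, hB4, hd34, rfl, rfl⟩ :=
    h2.reverse.first_hit _ hK2
  simp only [Set.mem_insert_iff, Set.mem_union, not_or, Set.disjoint_insert_right,
    Set.disjoint_union_right] at hvT hA2 hd₃ hd12
  have hBS : B ∈ S' := hB.resolve_left (Ne.symm hA2.1)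
  obtain ⟨S₁, S₂, y₅, x₅, M₁, M₂, h5, h6, hB5, hB6, hd56, rfl, rfl⟩ := hS'.split hBS
  simp only [Set.mem_insert_iff, Set.mem_union, not_or, Set.disjoint_insert_right,
    Set.disjoint_union_right] at hAS hv hd₁ hd₃
  have hear := h1.reverse.append h3 hvT.2.1 hvT.2.2.2.1 hd12.2.1
  have hp1 := h1.pos
  have hp3 := h3.pos
  refine IsTheta.win (G := G) (a := A) (b := B) (l := M₁) (m := M₂) (n := L₁ + L₃)
    ⟨hA2.1, ⟨_, _, h5⟩, ⟨_, _, h6.reverse⟩, ⟨_, _, hear⟩, hAS.2.1, hAS.2.2, ?_, hB5, hB6, ?_,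
      hd56, ?_, ?_⟩ ?_ ?_ ?_
  · simp [Ne.symm hv.1, hA1, hA2.2.1]
  · simp [Ne.symm hv.2.1, hd12.1, hB3]
  · simp [hv.2.2.1, hd₁.2.2.1.symm, hd₃.2.2.1.symm]
  · simp [hv.2.2.2, hd₁.2.2.2.symm, hd₃.2.2.2.symm]
  · omega
  · omega
  · omega

/-- A cycle together with a chord is a theta graph. -/
theorem win_of_chord {H : SimpleGraph V} (hHG : H ≤ G) {a u v : V} {S : Set V} {n : ℕ}
    (hC : IsCyc H a S n) (hu : u ∈ insert a S) (hv : v ∈ insert a S) (huv : G.Adj u v)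
    (hH : ¬ H.Adj u v) : SagesWin G := by
  obtain ⟨S', ⟨⟨p, q, hS'⟩, huS, hn⟩, eS⟩ := hC.rotate hu
  rw [← eS] at hv
  have hvS : v ∈ S' := hv.resolve_left huv.ne'
  obtain ⟨S₁, S₂, y₅, x₅, M₁, M₂, h5, h6, hB5, hB6, hd56, rfl, rfl⟩ := hS'.split hvS
  simp only [Set.mem_insert_iff, Set.mem_union, not_or] at huS
  have hM₁ : M₁ ≠ 1 := by
    rintro rfl
    obtain ⟨-, rfl, -⟩ := h5.eq_of_one
    exact hH h5.adj_left
  have hM₂ : M₂ ≠ 1 := by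
    rintro rfl
    obtain ⟨-, rfl, -⟩ := h6.eq_of_one
    exact hH h6.adj_left.symm
  refine IsTheta.win (G := G) (a := u) (b := v) (l := M₁) (m := M₂) (n := 1)
    ⟨huv.ne, ⟨_, _, h5.mono hHG⟩, ⟨_, _, h6.reverse.mono hHG⟩, ⟨_, _, .edge huv⟩, huS.2.1,
      huS.2.2, by simp, hB5, hB6, by simp, hd56, by simp, by simp⟩ ?_ ?_ ?_ <;> omega

theorem exists_isCycle_of_card_le [Finite V] (hG : G.Connected)
    (h : Nat.card V ≤ Nat.card G.edgeSet) : ∃ (v : V) (w : G.Walk v v), w.IsCycle := by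
  by_contra! hc
  have := (isTree_iff_connected_and_card.1 ⟨hG, fun v w => hc v w⟩).2
  omega

/-- Delete an edge `uv` of a cycle. The remaining graph is connected and still contains a cycle; if
that one passes through `u` and `v` then `uv` is a chord of it, and otherwise one of `u`, `v` lies
off it. -/
theorem win_of_card_lt [Finite V] (hG : G.Connected)
    (h : Nat.card V < Nat.card G.edgeSet) : SagesWin G := by
  obtain ⟨z, w, hw⟩ := exists_isCycle_of_card_le hG h.le
  obtain ⟨e, he⟩ : ∃ e, e ∈ w.edges := by
    refine List.exists_mem_of_ne_nil _ fun h0 => ?_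
    have := w.length_edges
    have := hw.three_le_length
    rw [h0] at *
    simp at *; omega
  have heG := w.edges_subset_edgeSet he
  have hbr : ¬ G.IsBridge e := fun hb =>
    (isBridge_iff_forall_cycle_notMem heG).1 hb w hw he
  induction e with
  | h u v =>
  have hH : (G.deleteEdges {s(u, v)}).Connected := hG.connected_delete_edge_of_not_isBridge hbr
  have hcard : Nat.card V ≤ Nat.card (G.deleteEdges {s(u, v)}).edgeSet := by
    rw [edgeSet_deleteEdges, Nat.card_coe_set_eq, Set.ncard_sdiff_singleton_of_mem heG]
    rw [Nat.card_coe_set_eq] at h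
    omega
  obtain ⟨z', w', hw'⟩ := exists_isCycle_of_card_le hH hcard
  have hC := isCyc_of_isCycle hw'
  have hle : G.deleteEdges {s(u, v)} ≤ G := deleteEdges_le _
  have key : ∀ t ∈ w.support, t ∉ insert z' {v | v ∈ w'.support.tail.dropLast} → SagesWin G := by
    classical
    intro t ht ht'
    exact win_of_vertex_off_cycle hG (hC.mono hle) (isCyc_of_isCycle (hw.rotate ht)) ht'
  by_cases hu : u ∈ insert z' {v | v ∈ w'.support.tail.dropLast}
  · by_cases hv : v ∈ insert z' {v | v ∈ w'.support.tail.dropLast}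
    · exact win_of_chord hle hC hu hv heG (by simp)
    · exact key v (w.snd_mem_support_of_mem_edges he) hv
  · exact key u (w.fst_mem_support_of_mem_edges he) hu

/-- The winning half of the classification. -/
theorem win_of_not [Fintype V] (hG : G.Connected) (h : ¬ (G.IsTree ∨
    (G.edgeSet.ncard = Fintype.card V ∧ ∀ (v : V) (w : G.Walk v v), w.IsCycle →
      5 ≤ w.length ∧ ¬ (3 ∣ w.length)))) : SagesWin G := by
  rw [not_or, not_and] at h
  obtain ⟨hT, h⟩ := h
  have hcard : Nat.card V ≤ Nat.card G.edgeSet := by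
    have := hG.card_vert_le_card_edgeSet_add_one
    by_contra hlt
    exact hT (isTree_iff_connected_and_card.2 ⟨hG, by omega⟩)
  rcases hcard.lt_or_eq with hlt | heq
  · exact win_of_card_lt hG hlt
  have := h (by rw [← Nat.card_coe_set_eq, ← heq, Nat.card_eq_fintype_card])
  push Not at this
  obtain ⟨v, w, hw, hl⟩ := this
  obtain ⟨⟨x, y, hc⟩, hv, h3⟩ := isCyc_of_isCycle hw
  by_cases h4 : w.length = 4
  · rw [h4] at hc
    exact win_of_four hc hv
  by_cases h5 : 5 ≤ w.length
  · exact win_of_three_dvd hc hv (hl h5)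
  · exact win_of_three_dvd hc hv (by omega)

end Extraction

/-! ### Losing on cycles: the structure of a winning strategy -/

/-- The number of colours that `g` maps to `x`. -/
def cnt (g : Fin 3 → Fin 3) (x : Fin 3) : ℕ :=
  (if g 0 = x then 1 else 0) + (if g 1 = x then 1 else 0) + (if g 2 = x then 1 else 0)

theorem cnt_sum : ∀ g : Fin 3 → Fin 3, cnt g 0 + cnt g 1 + cnt g 2 = 3 := by
  intro g
  unfold cnt
  generalize g 0 = x; generalize g 1 = y; generalize g 2 = z
  revert x y z; decide

theorem cnt_eq_zero {g : Fin 3 → Fin 3} {x : Fin 3} (h : cnt g x = 0) : ∀ w, g w ≠ x := by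
  intro w
  unfold cnt at h
  fin_cases w <;> (intro hw; simp at hw; simp [hw] at h)

theorem cnt_eq_three {g : Fin 3 → Fin 3} {x : Fin 3} (h : ∀ w, g w = x) : cnt g x = 3 := by
  simp [cnt, h]

theorem cnt_le_one {g : Fin 3 → Fin 3} {x : Fin 3} (h : cnt g x ≤ 1) :
    ∃ e, ∀ w, w ≠ e → g w ≠ x := by
  by_cases h0 : g 0 = x
  · refine ⟨0, fun w hw => ?_⟩
    unfold cnt at h
    fin_cases w <;> (intro hx; simp_all; try omega)
  by_cases h1 : g 1 = x
  · refine ⟨1, fun w hw => ?_⟩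
    unfold cnt at h
    fin_cases w <;> (intro hx; simp_all)
  · refine ⟨2, fun w hw => ?_⟩
    fin_cases w <;> simp_all

/-- `g y` takes the value `a` and `h w` takes the value `x` at least twice altogether, if every
pair `(y, w)` of the relation `Q` satisfies one of the two equations and `Q` has at least two
left and at least two right coordinates. -/
theorem two_le_cnt_add {g h : Fin 3 → Fin 3} {a x : Fin 3} {Q : Fin 3 → Fin 3 → Prop}
    (hl : ∀ e, ∃ y w, y ≠ e ∧ Q y w) (hr : ∀ e, ∃ y w, w ≠ e ∧ Q y w)
    (hQ : ∀ y w, Q y w → g y = a ∨ h w = x) : 2 ≤ cnt g a + cnt h x := by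
  by_contra hlt
  rcases Nat.eq_zero_or_pos (cnt g a) with h0 | h0
  · obtain ⟨e, he⟩ := cnt_le_one (g := h) (x := x) (by omega)
    obtain ⟨y, w, hw, hyw⟩ := hr e
    exact (hQ y w hyw).elim (cnt_eq_zero h0 y) (he w hw)
  · obtain ⟨e, he⟩ := cnt_le_one (g := g) (x := a) (by omega)
    obtain ⟨y, w, hy, hyw⟩ := hl e
    exact (hQ y w hyw).elim (he y hy) (cnt_eq_zero (by omega) w)

/-- If for each colour `x` at least two colours `w` are admissible, and a sage with guess `h w` has
to be wrong about `x`, then at least two colours `x` remain: the admissible sets of two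
rejected colours would have a common element. -/
theorem spread_step {P : Fin 3 → Fin 3 → Prop} (hP : ∀ x e, ∃ w, w ≠ e ∧ P w x)
    (h : Fin 3 → Fin 3) (e : Fin 3) : ∃ x, x ≠ e ∧ ∃ w, P w x ∧ h w ≠ x := by
  by_contra! hc
  obtain ⟨x, y, hx, hy, hxy⟩ : ∃ x y : Fin 3, x ≠ e ∧ y ≠ e ∧ x ≠ y := by
    clear hc
    revert e; decide
  obtain ⟨w₁, -, h1⟩ := hP x 0
  obtain ⟨w₂, h12, h2⟩ := hP x w₁
  obtain ⟨w₃, -, h3⟩ := hP y 0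
  obtain ⟨w₄, h34, h4⟩ := hP y w₃
  have e1 := hc x hx w₁ h1
  have e2 := hc x hx w₂ h2
  have e3 := hc y hy w₃ h3
  have e4 := hc y hy w₄ h4
  have n13 : w₁ ≠ w₃ := fun hh => hxy (by rw [← e1, ← e3, hh])
  have n14 : w₁ ≠ w₄ := fun hh => hxy (by rw [← e1, ← e4, hh])
  have n23 : w₂ ≠ w₃ := fun hh => hxy (by rw [← e2, ← e3, hh])
  have n24 : w₂ ≠ w₄ := fun hh => hxy (by rw [← e2, ← e4, hh])
  omega

section Cycle
variable {n : ℕ}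

/-- The sages at the positions `i + 1, …, i + m` are all wrong, where `s j` is the colour at the
position `i + j`; the sage at `k` guesses `f k a b` between the colours `a` and `b`. -/
def Wrong (f : ZMod n → Fin 3 → Fin 3 → Fin 3) (i : ZMod n) (m : ℕ) (s : ℕ → Fin 3) : Prop :=
  ∀ j < m, f (i + j + 1) (s j) (s (j + 2)) ≠ s (j + 1)

variable {f : ZMod n → Fin 3 → Fin 3 → Fin 3}

theorem Wrong.snoc {i : ZMod n} {m : ℕ} {s : ℕ → Fin 3} (h : Wrong f i m s) {z : Fin 3}
    (hz : f (i + m + 1) (s m) z ≠ s (m + 1)) :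
    Wrong f i (m + 1) (fun t => if t = m + 2 then z else s t) := by
  intro j hj
  rcases Nat.lt_succ_iff_lt_or_eq.1 hj with hj | rfl
  · simpa [show j ≠ m + 2 by omega, show j ≠ m by omega, show j ≠ m + 1 by omega] using h j hj
  · simpa using hz

theorem Wrong.cons {i : ZMod n} {m : ℕ} {s : ℕ → Fin 3} (h : Wrong f (i + 1) m s) {a : Fin 3}
    (ha : f (i + 1) a (s 1) ≠ s 0) :
    Wrong f i (m + 1) (fun t => if t = 0 then a else s (t - 1)) := by
  intro j hj
  rcases j with _ | j
  · simpa using ha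
  · have := h j (by omega)
    simp only [Nat.cast_add, Nat.cast_one, Nat.add_eq_zero_iff, one_ne_zero, and_false, if_false,
      Nat.add_sub_cancel]
    rw [show i + (j + 1) + 1 = i + 1 + (j : ZMod n) + 1 by ring]
    simpa using this

/-- Once every colour at `i + m₀ + 1` leaves at least two colours at `i + m₀`, the same holds
further along the path. -/
theorem spread_of_spread {i : ZMod n} {m₀ : ℕ} {I : Fin 3 → Fin 3 → Prop}
    (h₀ : ∀ z e, ∃ s : ℕ → Fin 3, I (s 0) (s 1) ∧ s (m₀ + 1) = z ∧ s m₀ ≠ e ∧ Wrong f i m₀ s)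
    {m : ℕ} (hm : m₀ ≤ m) (z e : Fin 3) :
    ∃ s : ℕ → Fin 3, I (s 0) (s 1) ∧ s (m + 1) = z ∧ s m ≠ e ∧ Wrong f i m s := by
  induction m, hm using Nat.le_induction generalizing z e with
  | base => exact h₀ z e
  | succ m hm ih =>
    obtain ⟨x, hx, w, ⟨s, h1, h2, h3, h4⟩, hw⟩ := spread_step
      (P := fun w x => ∃ s : ℕ → Fin 3, I (s 0) (s 1) ∧ s (m + 1) = x ∧ s m = w ∧ Wrong f i m s)
      (fun x e => by
        obtain ⟨s, h1, h2, h3, h4⟩ := ih x e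
        exact ⟨s m, h3, s, h1, h2, rfl, h4⟩) (fun w => f (i + m + 1) w z) e
    refine ⟨_, ?_, ?_, ?_, h4.snoc (z := z) (by rw [h2, h3]; exact hw)⟩
    · simpa using h1
    · simp
    · simpa [h2] using hx

theorem path_right (i : ZMod n) {m : ℕ} (hm : 1 ≤ m) (a z e : Fin 3) :
    ∃ s : ℕ → Fin 3, s 0 = a ∧ s (m + 1) = z ∧ s m ≠ e ∧ Wrong f i m s := by
  refine spread_of_spread (I := fun x _ => x = a) (fun z e => ?_) hm z e
  obtain ⟨x, hx, hx'⟩ : ∃ x : Fin 3, x ≠ e ∧ f (i + 1) a z ≠ x := by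
    generalize f (i + 1) a z = y
    revert e y; decide
  refine ⟨fun t => if t = 0 then a else if t = 1 then x else z, by simp, by simp, by simpa using hx,
    fun j hj => ?_⟩
  obtain rfl : j = 0 := by omega
  simpa using hx'

theorem path_left (i : ZMod n) {m : ℕ} (hm : 1 ≤ m) (a z e : Fin 3) :
    ∃ s : ℕ → Fin 3, s 0 = a ∧ s (m + 1) = z ∧ s 1 ≠ e ∧ Wrong f i m s := by
  induction m, hm using Nat.le_induction generalizing i a e with
  | base => exact path_right i le_rfl a z e
  | succ m hm ih =>
    obtain ⟨x, hx, w, ⟨s, h1, h2, h3, h4⟩, hw⟩ := spread_step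
      (P := fun w x => ∃ s : ℕ → Fin 3, s 0 = x ∧ s (m + 1) = z ∧ s 1 = w ∧ Wrong f (i + 1) m s)
      (fun x e => by
        obtain ⟨s, h1, h2, h3, h4⟩ := ih (i + 1) x e
        exact ⟨s 1, h3, s, h1, h2, rfl, h4⟩) (fun w => f (i + 1) a w) e
    refine ⟨_, ?_, ?_, ?_, h4.cons (a := a) (by rw [h1, h3]; exact hw)⟩
    · simp
    · simpa using h2
    · simpa [h1] using hx

/-- The guess functions `f` win on the cycle with vertex set `ZMod n`. -/
def CycleWin (f : ZMod n → Fin 3 → Fin 3 → Fin 3) : Prop :=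
  ∀ c : ZMod n → Fin 3, ∃ x, f x (c (x - 1)) (c (x + 1)) = c x

/-- If the sages at the positions `i + 1, …, i + (n - 2)` are wrong, then one of the last two
sages, at `i - 1` and `i`, is right. -/
theorem CycleWin.close (hf : CycleWin f) (hn : 5 ≤ n) (i : ZMod n) {s : ℕ → Fin 3}
    (hs : Wrong f i (n - 2) s) :
    f (i - 1) (s (n - 2)) (s 0) = s (n - 1) ∨ f i (s (n - 1)) (s 1) = s 0 := by
  have : NeZero n := ⟨by omega⟩
  obtain ⟨x, hx⟩ := hf fun x => s (x - i).val
  obtain ⟨j, hj, rfl⟩ : ∃ j < n, x = i + (j : ZMod n) :=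
    ⟨(x - i).val, ZMod.val_lt _, by simp⟩
  have hv : ∀ t < n, ((t : ZMod n)).val = t := fun t ht => ZMod.val_cast_of_lt ht
  rcases Nat.eq_zero_or_pos j with rfl | hpos
  · right
    have e1 : (i + ((0 : ℕ) : ZMod n) - 1 - i) = ((n - 1 : ℕ) : ZMod n) := by
      rw [Nat.cast_sub (by omega)]; simp
    have e2 : (i + ((0 : ℕ) : ZMod n) + 1 - i) = ((1 : ℕ) : ZMod n) := by simp
    simp only [e1, e2] at hx
    rw [hv _ (by omega), hv _ (by omega)] at hx
    simpa using hx
  · obtain ⟨j, rfl⟩ : ∃ j', j = j' + 1 := ⟨j - 1, by omega⟩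
    have e1 : (i + ((j + 1 : ℕ) : ZMod n) - 1 - i) = (j : ZMod n) := by push_cast; ring
    have e0 : (i + ((j + 1 : ℕ) : ZMod n) - i) = ((j + 1 : ℕ) : ZMod n) := by push_cast; ring
    have e2 : (i + ((j + 1 : ℕ) : ZMod n) + 1 - i) = ((j + 2 : ℕ) : ZMod n) := by
      push_cast; ring
    simp only [e1, e0, e2] at hx
    rw [hv _ (by omega), hv _ hj] at hx
    by_cases hj2 : j + 2 < n
    · rw [hv _ hj2] at hx
      refine absurd ?_ (hs j (by omega))
      rw [← hx]; push_cast; congr 1; ring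
    · left
      obtain rfl : n = j + 2 := by omega
      rw [ZMod.natCast_self] at hx
      have e3 : i + ((j + 1 : ℕ) : ZMod (j + 2)) = i - 1 := by
        have : ((j + 2 : ℕ) : ZMod (j + 2)) = 0 := ZMod.natCast_self _
        push_cast at this ⊢
        linear_combination this
      rw [e3] at hx
      simpa using hx

/-- The profile of a strategy on the edge from `i` to `i + 1`: the number of colours at `i + 2` for
which the sage at `i + 1` guesses `x` when `i` has colour `a`. -/
def prof (f : ZMod n → Fin 3 → Fin 3 → Fin 3) (i : ZMod n) (a x : Fin 3) : ℕ :=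
  cnt (f (i + 1) a) x

/-- Let `i` have colour `a` and `i + 1` colour `x`. Placements for which the sages at
`i + 2, …, i - 1` are wrong use at least two colours at `i - 1` and at least two at `i + 2`; were the
sum smaller, the sages at `i` and `i + 1` would be wrong for one of these placements as well. -/
theorem CycleWin.two_le (hf : CycleWin f) (hn : 5 ≤ n) (i : ZMod n) (a x : Fin 3) :
    2 ≤ cnt (fun y => f i y x) a + cnt (f (i + 1) a) x := by
  -- the colours of `i - 1` and `i + 2` on placements where the sages `i + 2, …, i - 1` are wrong
  refine two_le_cnt_add (Q := fun y w => ∃ s : ℕ → Fin 3, s 0 = x ∧ s (n - 1) = a ∧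
    s (n - 2) = y ∧ s 1 = w ∧ Wrong f (i + 1) (n - 2) s) (fun e => ?_) (fun e => ?_) ?_
  · obtain ⟨s, h1, h2, h3, h4⟩ := path_right (f := f) (i + 1) (m := n - 2) (by omega) x a e
    rw [show n - 2 + 1 = n - 1 by omega] at h2
    exact ⟨_, _, h3, s, h1, h2, rfl, rfl, h4⟩
  · obtain ⟨s, h1, h2, h3, h4⟩ := path_left (f := f) (i + 1) (m := n - 2) (by omega) x a e
    rw [show n - 2 + 1 = n - 1 by omega] at h2
    exact ⟨_, _, h3, s, h1, h2, rfl, rfl, h4⟩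
  · rintro y w ⟨s, rfl, rfl, rfl, rfl, h⟩
    simpa using hf.close hn (i + 1) h

/-- Equality holds in `CycleWin.two_le`: the nine inequalities add up to `18 ≤ 18`. -/
theorem CycleWin.cnt_add_eq (hf : CycleWin f) (hn : 5 ≤ n) (i : ZMod n) (a x : Fin 3) :
    cnt (fun y => f i y x) a + prof f i a x = 2 := by
  have h := hf.two_le hn i
  have h00 := h 0 0
  have h01 := h 0 1
  have h02 := h 0 2
  have h10 := h 1 0
  have h11 := h 1 1
  have h12 := h 1 2
  have h20 := h 2 0
  have h21 := h 2 1
  have h22 := h 2 2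
  have r0 := cnt_sum (f (i + 1) 0)
  have r1 := cnt_sum (f (i + 1) 1)
  have r2 := cnt_sum (f (i + 1) 2)
  have c0 := cnt_sum (fun y => f i y 0)
  have c1 := cnt_sum (fun y => f i y 1)
  have c2 := cnt_sum (fun y => f i y 2)
  unfold prof
  fin_cases a <;> fin_cases x <;> simp only [Fin.mk_zero, Fin.mk_one, Fin.reduceFinMk,
    Fin.isValue] <;> omega

/-- Profiles do not decrease at a wrong sage. -/
theorem CycleWin.prof_le (hf : CycleWin f) (hn : 5 ≤ n) (i : ZMod n) {a x z : Fin 3}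
    (h : f (i + 1) a z ≠ x) : prof f i a x ≤ prof f (i + 1) x z := by
  suffices 2 ≤ cnt (fun y => f i y x) a + cnt (f (i + 1 + 1) x) z by
    have := hf.cnt_add_eq hn i a x
    unfold prof at *
    omega
  have aux : ∀ s : ℕ → Fin 3, s 0 = z → s (n - 2) = a → Wrong f (i + 1 + 1) (n - 3) s →
      f i (s (n - 3)) x = a ∨ f (i + 1 + 1) x (s 1) = z := by
    intro s h0 ha hs
    by_contra! hc
    have e : (i + 1 + 1 + ((n - 3 : ℕ) : ZMod n) + 1) = i := by
      rw [Nat.cast_sub (by omega)]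
      simp; ring
    have := hs.snoc (z := x) (by
      rw [e, show n - 3 + 1 = n - 2 by omega, ha]; exact hc.1)
    rw [show n - 3 + 1 = n - 2 by omega, show n - 3 + 2 = n - 1 by omega] at this
    have := hf.close hn _ this
    simp only [if_true, show (0 : ℕ) ≠ n - 1 by omega, show (1 : ℕ) ≠ n - 1 by omega,
      show n - 2 ≠ n - 1 by omega, if_false, h0, ha, add_sub_cancel_right] at this
    exact this.elim h hc.2
  refine two_le_cnt_add (Q := fun y w => ∃ s : ℕ → Fin 3, s 0 = z ∧ s (n - 2) = a ∧
    s (n - 3) = y ∧ s 1 = w ∧ Wrong f (i + 1 + 1) (n - 3) s) (fun e => ?_) (fun e => ?_) ?_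
  · obtain ⟨s, h1, h2, h3, h4⟩ := path_right (f := f) (i + 1 + 1) (m := n - 3) (by omega) z a e
    rw [show n - 3 + 1 = n - 2 by omega] at h2
    exact ⟨_, _, h3, s, h1, h2, rfl, rfl, h4⟩
  · obtain ⟨s, h1, h2, h3, h4⟩ := path_left (f := f) (i + 1 + 1) (m := n - 3) (by omega) z a e
    rw [show n - 3 + 1 = n - 2 by omega] at h2
    exact ⟨_, _, h3, s, h1, h2, rfl, rfl, h4⟩
  · rintro y w ⟨s, h1, h2, rfl, rfl, h⟩
    exact aux s h1 h2 h

theorem CycleWin.prof_le_two (hf : CycleWin f) (hn : 5 ≤ n) (i : ZMod n) (a x : Fin 3) :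
    prof f i a x ≤ 2 := by
  have := hf.cnt_add_eq hn i a x
  omega

theorem prof_row (i : ZMod n) (a : Fin 3) :
    prof f i a 0 + prof f i a 1 + prof f i a 2 = 3 := cnt_sum _

theorem CycleWin.prof_col (hf : CycleWin f) (hn : 5 ≤ n) (i : ZMod n) (x : Fin 3) :
    prof f i 0 x + prof f i 1 x + prof f i 2 x = 3 := by
  have h0 := hf.cnt_add_eq hn i 0 x
  have h1 := hf.cnt_add_eq hn i 1 x
  have h2 := hf.cnt_add_eq hn i 2 x
  have := cnt_sum (fun y => f i y x)
  omega

end Cycle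

theorem eq_of_cnt_eq_one {g : Fin 3 → Fin 3} {x a w : Fin 3} (h : cnt g x = 1) (ha : g a = x)
    (hw : g w = x) : w = a := by
  unfold cnt at h
  fin_cases a <;> fin_cases w <;> simp_all <;> omega

theorem zmod_induction {n : ℕ} [NeZero n] {P : ZMod n → Prop} {i : ZMod n} (h₀ : P i)
    (h : ∀ j, P j → P (j + 1)) (j : ZMod n) : P j := by
  have key : ∀ t : ℕ, P (i + t) := by
    intro t
    induction t with
    | zero => simpa using h₀
    | succ t ih => simpa [add_assoc] using h _ ih
  simpa using key (j - i).val

section Cycle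
variable {n : ℕ} {f : ZMod n → Fin 3 → Fin 3 → Fin 3}

/-- The colour `x` of the vertex `i` is neutral: seeing it, the sage at `i + 1` guesses every colour
`c` for exactly one colour of `i + 2`. -/
def Neutral (f : ZMod n → Fin 3 → Fin 3 → Fin 3) (i : ZMod n) (x : Fin 3) : Prop :=
  ∀ c, prof f i x c = 1

/-- With `CycleWin.col_of_neutral`: a colour `x` of `i + 1` is neutral if and only if its column in
the profile on the edge from `i` to `i + 1` is constant. -/
theorem CycleWin.neutral_of_col (hf : CycleWin f) (hn : 5 ≤ n) {i : ZMod n} {x : Fin 3}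
    (h : ∀ a, prof f i a x = 1) : Neutral f (i + 1) x := by
  have key : ∀ c, 1 ≤ prof f (i + 1) x c := by
    intro c
    obtain ⟨a, ha⟩ : ∃ a, f (i + 1) a c ≠ x := by
      by_contra! hc
      have h3 := cnt_eq_three hc
      have := hf.cnt_add_eq hn (i + 1) x c
      omega
    rw [← h a]
    exact hf.prof_le hn i ha
  have h0 := key 0
  have h1 := key 1
  have h2 := key 2
  have := prof_row (f := f) (i + 1) x
  intro c
  fin_cases c <;> simp only [Fin.mk_zero, Fin.mk_one, Fin.reduceFinMk, Fin.isValue] <;> omega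

theorem CycleWin.col_of_neutral (hf : CycleWin f) (hn : 5 ≤ n) {i : ZMod n} {x : Fin 3}
    (h : Neutral f (i + 1) x) : ∀ a, prof f i a x = 1 := by
  have key : ∀ a, prof f i a x ≤ 1 := by
    intro a
    obtain ⟨c, hc⟩ : ∃ c, f (i + 1) a c ≠ x := by
      by_contra! hc
      have h3 : prof f i a x = 3 := cnt_eq_three hc
      have := hf.prof_le_two hn i a x
      omega
    rw [← h c]
    exact hf.prof_le hn i hc
  have h0 := key 0
  have h1 := key 1
  have h2 := key 2
  have := hf.prof_col hn i x
  intro c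
  fin_cases c <;> simp only [Fin.mk_zero, Fin.mk_one, Fin.reduceFinMk, Fin.isValue] <;> omega

/-- A `3 × 3` matrix over `{0, 1, 2}` with row and column sums three that has a constant row also
has a constant column. -/
theorem CycleWin.exists_neutral_succ (hf : CycleWin f) (hn : 5 ≤ n) {i : ZMod n}
    (h : ∃ x, Neutral f i x) : ∃ x, Neutral f (i + 1) x := by
  obtain ⟨x, hx⟩ := h
  have r0 := prof_row (f := f) i 0
  have r1 := prof_row (f := f) i 1
  have r2 := prof_row (f := f) i 2
  have c0 := hf.prof_col hn i 0
  have c1 := hf.prof_col hn i 1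
  have c2 := hf.prof_col hn i 2
  have b := hf.prof_le_two hn i
  have b00 := b 0 0
  have b01 := b 0 1
  have b02 := b 0 2
  have b10 := b 1 0
  have b11 := b 1 1
  have b12 := b 1 2
  have b20 := b 2 0
  have b21 := b 2 1
  have b22 := b 2 2
  have x0 := hx 0
  have x1 := hx 1
  have x2 := hx 2
  suffices ∃ y, prof f i 0 y = 1 ∧ prof f i 1 y = 1 ∧ prof f i 2 y = 1 by
    obtain ⟨y, h0, h1, h2⟩ := this
    refine ⟨y, hf.neutral_of_col hn fun a => ?_⟩
    fin_cases a <;> assumption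
  simp only [Fin.exists_fin_succ, Fin.isValue, IsEmpty.exists_iff, or_false, Fin.succ_zero_eq_one,
    Fin.succ_one_eq_two]
  fin_cases x <;> simp only [Fin.mk_zero, Fin.mk_one, Fin.reduceFinMk, Fin.isValue] at x0 x1 x2 <;>
    omega

/-- Two neutral colours make the third one neutral, since the columns of the profile have sum
three. -/
theorem CycleWin.neutral_unique (hf : CycleWin f) (hn : 5 ≤ n) {i : ZMod n} {x y : Fin 3}
    (hx : Neutral f i x) (hy : Neutral f i y) (hxy : x ≠ y) : ∀ a, Neutral f i a := by
  intro a c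
  have x0 := hx c
  have y0 := hy c
  have := hf.prof_col hn i c
  fin_cases a <;> fin_cases x <;> fin_cases y <;>
    simp only [Fin.mk_zero, Fin.mk_one, Fin.reduceFinMk, Fin.isValue, ne_eq, not_true_eq_false] at * <;>
    omega

/-! #### All colours are neutral -/

/-- If all colours are neutral then every guess function is a Latin square. Fix the colours at the
positions `0` and `1`. When the sages at `1, …, 4` are wrong, every colour at `5` still allows two
colours at `4`; this property moves on along the path and at its end leaves a colour for which the
sage at `0` is wrong too. -/
theorem CycleWin.not_all_neutral (hf : CycleWin f) (hn : 5 ≤ n) : ¬ ∀ i x, Neutral f i x := by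
  intro hN
  have hrow : ∀ i a x, cnt (f i a) x = 1 := by
    intro i a x
    have := hN (i - 1) a x
    unfold prof at this
    rwa [sub_add_cancel] at this
  have hcol : ∀ i c a, cnt (fun y => f i y c) a = 1 := by
    intro i c a
    have := hf.cnt_add_eq hn i a c
    rw [hN i a c] at this
    omega
  have hsurj : ∀ i a x, ∃ y, f i a y = x := by
    intro i a x
    by_contra! hc
    have := hrow i a x
    simp [cnt, hc] at this
  have hcolinj : ∀ i c a b, f i a c = f i b c → a = b := by
    intro i c a b hab
    exact eq_of_cnt_eq_one (hcol i c (f i b c)) rfl hab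
  have hrowinj : ∀ i c a b, f i c a = f i c b → a = b := by
    intro i c a b hab
    exact eq_of_cnt_eq_one (hrow i c (f i c b)) rfl hab
  have two : ∀ e d : Fin 3, ∃ x, x ≠ e ∧ x ≠ d := by decide
  -- every colour `z` at the position `5` allows two colours at the position `4`
  have base : ∀ z e, ∃ s : ℕ → Fin 3, (s 0 = 0 ∧ s 1 = 0) ∧ s (4 + 1) = z ∧ s 4 ≠ e ∧
      Wrong f 0 4 s := by
    intro z e
    obtain ⟨e₂, he₂⟩ := cnt_le_one (g := f 1 0) (x := 0) (by rw [hrow])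
    obtain ⟨x, hx⟩ := hsurj 2 0 e₂
    obtain ⟨x', hx', -⟩ := two x x
    -- `x` is admissible before every colour of the sage 4, and `x'` before one colour other
    -- than `e`
    have good : ∀ y, ∃ w, w ≠ e₂ ∧ f 2 0 x ≠ w ∧ f 3 w y ≠ x := by
      intro y
      obtain ⟨w, hw, -⟩ := two e₂ e₂
      obtain ⟨w', hw', hww⟩ := two e₂ w
      by_cases h : f 3 w y = x
      · exact ⟨w', hw', hx ▸ hw'.symm, fun h' => hww (hcolinj 3 y _ _ (h'.trans h.symm))⟩
      · exact ⟨w, hw, hx ▸ hw.symm, h⟩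
    have good' : ∃ y, y ≠ e ∧ ∃ w, w ≠ e₂ ∧ f 2 0 x' ≠ w ∧ f 3 w y ≠ x' := by
      obtain ⟨w, hw, hw'⟩ := two e₂ (f 2 0 x')
      obtain ⟨y, hy, -⟩ := two e e
      obtain ⟨y', hy', hyy⟩ := two e y
      by_cases h : f 3 w y = x'
      · exact ⟨y', hy', w, hw, hw'.symm, fun h' => hyy (hrowinj 3 w _ _ (h'.trans h.symm))⟩
      · exact ⟨y, hy, w, hw, hw'.symm, h⟩
    obtain ⟨y, hy, w', hw'⟩ := good'
    obtain ⟨v, w, h1, h2, h3, h4⟩ : ∃ v w, w ≠ e₂ ∧ f 2 0 v ≠ w ∧ f 3 w y ≠ v ∧ f 4 v z ≠ y := by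
      by_cases h : f 4 x z = y
      · exact ⟨x', w', hw'.1, hw'.2.1, hw'.2.2, fun h' => hx' (hcolinj 4 z _ _ (h'.trans h.symm))⟩
      · obtain ⟨w, h1, h2, h3⟩ := good y
        exact ⟨x, w, h1, h2, h3, h⟩
    refine ⟨fun t => if t ≤ 1 then 0 else if t = 2 then w else if t = 3 then v else
      if t = 4 then y else z, ⟨by simp, by simp⟩, by simp, by simpa using hy, fun j hj => ?_⟩
    have e2 : (1 : ZMod n) + 1 = 2 := by ring
    have e3 : (2 : ZMod n) + 1 = 3 := by ring
    have e4 : (3 : ZMod n) + 1 = 4 := by ring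
    interval_cases j
    · simpa using he₂ w h1
    · simpa [e2] using h2
    · simpa [e3] using h3
    · simpa [e4] using h4
  obtain ⟨e, he⟩ : ∃ e, ∀ y, y ≠ e → f 0 y 0 ≠ 0 := by
    obtain ⟨e, he⟩ := cnt_le_one (g := fun y => f 0 y 0) (x := 0) (by rw [hcol])
    exact ⟨e, he⟩
  obtain ⟨s, ⟨h0, h1⟩, h2, h3, h4⟩ := spread_of_spread (I := fun x y => x = 0 ∧ y = 0) base
    (m := n - 1) (by omega) 0 e
  rw [show n - 1 + 1 = n by omega] at h2
  rcases hf.close hn 0 (s := s) (fun j hj => h4 j (by omega)) with h | h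
  · have := h4 (n - 2) (by omega)
    rw [show n - 2 + 2 = n by omega, show n - 2 + 1 = n - 1 by omega, h2, ← h0] at this
    apply this
    rw [← h]
    congr 1
    rw [Nat.cast_sub (by omega)]
    simp; ring
  · rw [h0, h1] at h
    exact he _ h3 h

/-! #### One neutral colour at each vertex -/

/-- Let `z i` be the only neutral colour of `i`. Between two neutral colours the neutral colour is
guessed (`hself` below), and a single neighbour with another colour makes this guess wrong. Hence
all sages are wrong if the colours are not neutral exactly on a suitable maximal independent set:
there the guess is the neutral colour, elsewhere some neighbour is not neutral. -/
theorem CycleWin.not_unique_neutral (hf : CycleWin f) (hn : 5 ≤ n) (z : ZMod n → Fin 3)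
    (hz : ∀ i, Neutral f i (z i)) (hu : ∀ i x, Neutral f i x → x = z i) : False := by
  have : NeZero n := ⟨by omega⟩
  have two : ∀ e d : Fin 3, ∃ x, x ≠ e ∧ x ≠ d := by decide
  have hcol : ∀ i a, prof f i a (z (i + 1)) = 1 := fun i => hf.col_of_neutral hn (hz (i + 1))
  have hself : ∀ i, f (i + 1) (z i) (z (i + 2)) = z (i + 1) := by
    intro i
    rw [show i + 2 = i + 1 + 1 by ring]
    refine hu _ _ ?_
    set x := f (i + 1) (z i) (z (i + 1 + 1)) with hx
    have key : ∀ c, 1 ≤ prof f (i + 1) x c := by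
      intro c
      by_cases hc : c = z (i + 1 + 1)
      · rw [hc, hcol]
      · rw [← hz i x]
        exact hf.prof_le hn i fun h => hc (eq_of_cnt_eq_one (hz i x) hx.symm h)
    have h0 := key 0
    have h1 := key 1
    have h2 := key 2
    have := prof_row (f := f) (i + 1) x
    intro c
    fin_cases c <;> simp only [Fin.mk_zero, Fin.mk_one, Fin.reduceFinMk, Fin.isValue] <;> omega
  have hright : ∀ i w, w ≠ z (i + 2) → f (i + 1) (z i) w ≠ z (i + 1) :=
    fun i w hw h => hw (eq_of_cnt_eq_one (hz i _) (hself i) h)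
  have hleft : ∀ i w, w ≠ z i → f (i + 1) w (z (i + 2)) ≠ z (i + 1) := by
    intro i w hw h
    have h1 := hf.cnt_add_eq hn (i + 1) (z (i + 1)) (z (i + 2))
    rw [hz] at h1
    exact hw (eq_of_cnt_eq_one (g := fun y => f (i + 1) y (z (i + 2))) (by omega) (hself i) h)
  have hnext : ∀ i x, ∃ y, y ≠ z (i + 2) ∧ f (i + 1) x y ≠ z (i + 1) := by
    intro i x
    obtain ⟨w, hw, -⟩ := two (z (i + 2)) (z (i + 2))
    obtain ⟨w', hw', hww⟩ := two (z (i + 2)) w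
    by_cases h : f (i + 1) x w = z (i + 1)
    · exact ⟨w', hw', fun h' => hww (eq_of_cnt_eq_one (hcol i x) h h')⟩
    · exact ⟨w, hw, h⟩
  choose g hg hg' using hnext
  obtain ⟨y₀, hy₀, -⟩ := two (z 0) (z 0)
  obtain ⟨y₁, hy₁, -⟩ := two (z 1) (z 1)
  obtain ⟨y, hy, hy'⟩ : ∃ y : ℕ → Fin 3, (∀ t : ℕ, y t ≠ z t) ∧
      ∀ t : ℕ, f (t + 1) (y t) (y (t + 2)) ≠ z (t + 1) := by
    let p : ℕ → Fin 3 × Fin 3 := fun t => Nat.rec (y₀, y₁) (fun t q => (q.2, g t q.1)) t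
    have hp : ∀ t, (p (t + 2)).1 = g t (p t).1 := fun t => rfl
    refine ⟨fun t => (p t).1, fun t => ?_, fun t => ?_⟩
    · rcases t with _ | _ | t
      · change y₀ ≠ _
        simpa using hy₀
      · change y₁ ≠ _
        simpa using hy₁
      · change g t (p t).1 ≠ _
        simpa [add_assoc, one_add_one_eq_two] using hg t (p t).1
    · simp only [hp]
      exact hg' _ _
  -- the positions with a colour that is not neutral: a maximal independent set containing neither
  -- `0` nor `1`, so that sages with two such neighbours are met in the order of the recursion
  let Y : ℕ → Prop := fun t =>
    t < n ∧ ((n % 2 = 1 ∧ t % 2 = 0 ∧ 2 ≤ t) ∨ (n % 2 = 0 ∧ (t = 2 ∨ (t % 2 = 1 ∧ 5 ≤ t))))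
  classical
  let s : ℕ → Fin 3 := fun t => if Y t then y t else z t
  have hsY : ∀ t, Y t → s t = y t := fun t ht => if_pos ht
  have hsZ : ∀ t, ¬ Y t → s t = z t := fun t ht => if_neg ht
  have hW : Wrong f 0 (n - 2) s := by
    intro j hj
    rw [zero_add]
    have hz1 : ((j + 1 : ℕ) : ZMod n) = (j : ZMod n) + 1 := by push_cast; ring
    have hz2 : ((j + 2 : ℕ) : ZMod n) = (j : ZMod n) + 2 := by push_cast; ring
    by_cases h1 : Y (j + 1)
    · have h0 : ¬ Y j := by simp only [Y] at h1 ⊢; omega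
      have h2 : ¬ Y (j + 2) := by simp only [Y] at h1 ⊢; omega
      rw [hsY _ h1, hsZ _ h0, hsZ _ h2, hz2, hself, ← hz1]
      exact (hy _).symm
    · rw [hsZ _ h1, hz1]
      by_cases h0 : Y j
      · rw [hsY _ h0]
        by_cases h2 : Y (j + 2)
        · rw [hsY _ h2]
          exact hy' j
        · rw [hsZ _ h2, hz2]
          exact hleft _ _ (hy j)
      · have h2 : Y (j + 2) := by simp only [Y] at h1 h0 ⊢; omega
        rw [hsZ _ h0, hsY _ h2]
        exact hright _ _ (hz2 ▸ hy (j + 2))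
  have hY0 : ¬ Y 0 := by simp only [Y]; omega
  have hY1 : ¬ Y 1 := by simp only [Y]; omega
  have hYn : Y (n - 1) := by simp only [Y]; omega
  have hYn' : ¬ Y (n - 2) := by simp only [Y]; omega
  have e1 : ((n - 1 : ℕ) : ZMod n) = -1 := by rw [Nat.cast_sub (by omega)]; simp
  have e2 : ((n - 2 : ℕ) : ZMod n) = -2 := by rw [Nat.cast_sub (by omega)]; simp
  have hyn := hy (n - 1)
  rw [e1] at hyn
  rcases hf.close hn 0 hW with h | h
  · rw [hsZ _ hYn', hsZ _ hY0, hsY _ hYn, e2] at h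
    have := hself (-2)
    rw [show (-2 : ZMod n) + 1 = -1 by ring, show (-2 : ZMod n) + 2 = 0 by ring] at this
    rw [zero_sub, Nat.cast_zero, this] at h
    exact hyn h.symm
  · rw [hsZ _ hY0, hsZ _ hY1, hsY _ hYn] at h
    have := hleft (-1) (y (n - 1)) hyn
    rw [show (-1 : ZMod n) + 1 = 0 by ring, show (-1 : ZMod n) + 2 = 1 by ring] at this
    exact this (by simpa using h)

end Cycle

/-! #### No neutral colours -/

theorem perm_affine (p : Fin 3 → Fin 3) (hp : ∀ a b, p a = p b → a = b) :
    ∃ u w, u ≠ 0 ∧ ∀ a, p a = u * a + w := by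
  have h01 := hp 0 1
  have h02 := hp 0 2
  have h12 := hp 1 2
  refine ⟨p 1 - p 0, p 0, ?_⟩
  simp only [Fin.forall_fin_succ, Fin.isValue, IsEmpty.forall_iff, and_true, Fin.succ_zero_eq_one,
    Fin.succ_one_eq_two]
  generalize p 0 = x at *
  generalize p 1 = y at *
  generalize p 2 = z at *
  revert x y z
  decide

/-- Latin squares of order three are affine. -/
theorem latin_affine (M : Fin 3 → Fin 3 → Fin 3) (hr : ∀ a x y, M a x = M a y → x = y)
    (hc : ∀ x a b, M a x = M b x → a = b) :
    ∃ u v w, u ≠ 0 ∧ v ≠ 0 ∧ ∀ a x, M a x = u * a + v * x + w := by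
  have hrow : ∀ a, ∃ u w, u ≠ 0 ∧ ∀ x, M a x = u * x + w := fun a => perm_affine _ (hr a)
  choose v w hv hM using hrow
  have aux : ∀ v₁ w₁ v₂ w₂ : Fin 3, v₁ ≠ 0 → v₂ ≠ 0 → v₁ ≠ v₂ →
    ∃ x, v₁ * x + w₁ = v₂ * x + w₂ := by decide
  have hvv : ∀ a, v a = v 0 := by
    intro a
    by_contra h
    obtain ⟨x, hx⟩ := aux (v a) (w a) (v 0) (w 0) (hv a) (hv 0) h
    rw [← hM, ← hM] at hx
    exact h (by rw [hc x a 0 hx])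
  obtain ⟨u, k, hu, hk⟩ := perm_affine w fun a b hab =>
    hc 0 a b (by rw [hM, hM, hvv a, hvv b, hab])
  refine ⟨u, v 0, k, hu, hv 0, fun a x => ?_⟩
  rw [hM, hvv, hk, ← add_assoc, add_comm (v 0 * x)]


/-- A sequence of colours with prescribed differences closes up around the cycle if the
differences add up to zero. -/
theorem exists_potential {n : ℕ} [NeZero n] (g : ZMod n → Fin 3)
    (hg : ∑ t ∈ Finset.range n, g t = 0) :
    ∃ C : ZMod n → Fin 3, ∀ x, C (x + 1) = C x + g x := by
  refine ⟨fun x => ∑ t ∈ Finset.range x.val, g t, fun x => ?_⟩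
  have hxl := ZMod.val_lt x
  have key : ((x.val + 1 : ℕ) : ZMod n) = x + 1 := by simp
  have hg' : g x = g (x.val : ZMod n) := by simp
  by_cases h : x.val + 1 < n
  · beta_reduce
    rw [← key, ZMod.val_cast_of_lt h, Finset.sum_range_succ, hg']
  · have hn : x.val + 1 = n := by omega
    have h0 : x + 1 = 0 := by rw [← key, hn]; simp
    simp only [h0, ZMod.val_zero, Finset.range_zero, Finset.sum_empty]
    rw [hg', ← Finset.sum_range_succ, hn, hg]

/-- If `3 ∤ n`, multiplication by `n` is surjective on `Fin 3`, whose addition is modulo three. -/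
theorem exists_mean {n : ℕ} (hn : ¬ 3 ∣ n) (W : Fin 3) : ∃ d : Fin 3, n • d = W := by
  have h3 : ∀ d : Fin 3, 3 • d = 0 := by decide
  have hmod : ∀ d : Fin 3, n • d = (n % 3) • d := by
    intro d
    conv_lhs => rw [← Nat.div_add_mod n 3]
    rw [add_nsmul, mul_comm, mul_nsmul', h3, smul_zero, zero_add]
  simp only [hmod]
  obtain h | h : n % 3 = 1 ∨ n % 3 = 2 := by omega
  · rw [h]; revert W; decide
  · rw [h]; revert W; decide

section Cycle
variable {n : ℕ} {f : ZMod n → Fin 3 → Fin 3 → Fin 3}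

/-- Without neutral colours the profiles are affine, `u i * a + v i * x + w i`, and monotonicity
forces `u (i + 1) = - v i`; then a sage is also wrong wherever the profile does not change. As `3`
does not divide `n`, some placement has the same profile `d` on every edge, and on it all sages are
wrong. -/
theorem CycleWin.exists_neutral (hf : CycleWin f) (hn : 5 ≤ n) (h3 : ¬ 3 ∣ n) :
    ∃ i x, Neutral f i x := by
  by_contra! hN
  have : NeZero n := ⟨by omega⟩
  have hb := hf.prof_le_two hn
  let M : ZMod n → Fin 3 → Fin 3 → Fin 3 := fun i a x =>
    ⟨prof f i a x, Nat.lt_succ_of_le (hb i a x)⟩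
  have hMv : ∀ i a x, (M i a x : ℕ) = prof f i a x := fun _ _ _ => rfl
  have aux : ∀ k : Fin 3 → ℕ, (∀ x, k x ≤ 2) → k 0 + k 1 + k 2 = 3 → ¬ (∀ x, k x = 1) →
      ∀ x y, k x = k y → x = y := by
    intro k hk hs h1 x y hxy
    have b0 := hk 0
    have b1 := hk 1
    have b2 := hk 2
    by_contra hne
    apply h1
    intro t
    fin_cases x <;> fin_cases y <;> fin_cases t <;>
      simp only [Fin.mk_zero, Fin.mk_one, Fin.reduceFinMk, Fin.isValue, ne_eq,
        not_true_eq_false] at * <;> omega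
  have hlat : ∀ i, ∃ u v w : Fin 3, u ≠ 0 ∧ v ≠ 0 ∧ ∀ a x, M i a x = u * a + v * x + w := by
    intro i
    refine latin_affine _ (fun a x y h => ?_) (fun x a b h => ?_)
    · exact aux (fun x => prof f i a x) (hb i a) (prof_row i a) (hN i a) x y (Fin.ext_iff.1 h)
    · exact aux (fun a => prof f i a x) (fun a => hb i a x) (hf.prof_col hn i x)
        (fun h => hN (i + 1) x (hf.neutral_of_col hn h)) a b (Fin.ext_iff.1 h)
  choose u v w hu hv hM using hlat
  -- a sage is right wherever the profile drops
  have hdrop : ∀ i a b c, M (i + 1) b c < M i a b → f (i + 1) a c = b := by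
    intro i a b c h
    by_contra hne
    exact absurd (hf.prof_le hn i hne) (not_le.2 h)
  have huv : ∀ i, u (i + 1) = - v i := by
    intro i
    have heq : ∀ u' v : Fin 3, u' ≠ 0 → v ≠ 0 → u' ≠ -v → u' = v := by decide
    have key : ∀ v q : Fin 3, v ≠ 0 →
      ∃ p b b', b ≠ b' ∧ v * b + q < p + v * b ∧ v * b' + q < p + v * b' := by decide
    have hsolve : ∀ u w p : Fin 3, u ≠ 0 → ∃ a, u * a = p - w := by decide
    by_contra hne
    obtain ⟨p, b, b', hbb, h1, h2⟩ := key (v i) (w (i + 1)) (hv i)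
    have huv := heq _ _ (hu (i + 1)) (hv i) hne
    obtain ⟨a, ha⟩ := hsolve (u i) (w i) p (hu i)
    have hrow : ∀ b, M i a b = p + v i * b := by
      intro b
      rw [hM, ha, add_right_comm, sub_add_cancel]
    apply hbb
    rw [← hdrop i a b 0 (by rw [hM, hrow, huv, mul_zero, add_zero]; exact h1),
      ← hdrop i a b' 0 (by rw [hM, hrow, huv, mul_zero, add_zero]; exact h2)]
  have hflat : ∀ i a b c, M (i + 1) b c = M i a b → f (i + 1) a c ≠ b := by
    intro i a b c h hfb
    have key : ∀ v p q : Fin 3, v ≠ 0 → ∃ b, -v * b + q < v * b + p := by decide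
    obtain ⟨b', hb'⟩ := key (v i) (u i * a + w i) (v (i + 1) * c + w (i + 1)) (hv i)
    have hlt : M (i + 1) b' c < M i a b' := by
      rw [hM, hM, huv]
      convert hb' using 1
      · generalize - v i * b' = p, v (i + 1) * c = q, w (i + 1) = r
        revert p q r; decide
      · generalize u i * a = p, v i * b' = q, w i = r
        revert p q r; decide
    have : b' = b := (hdrop i a b' c hlt).symm.trans hfb
    rw [this, h] at hlt
    exact lt_irrefl _ hlt
  obtain ⟨d, hd⟩ := exists_mean h3 (∑ t ∈ Finset.range n, w t)
  obtain ⟨C, hC⟩ := exists_potential (fun x => w x - d) (by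
    rw [Finset.sum_sub_distrib, Finset.sum_const, Finset.card_range, hd, sub_self])
  obtain ⟨x, hx⟩ := hf fun x => u x * C x
  have hconst : ∀ i, M i (u i * C i) (u (i + 1) * C (i + 1)) = d := by
    intro i
    have key : ∀ u v C w d : Fin 3, u ≠ 0 → v ≠ 0 →
      u * (u * C) + v * (-v * (C + (w - d))) + w = d := by decide
    rw [hM, huv, hC]
    exact key _ _ _ _ _ (hu i) (hv i)
  have h1 := hconst (x - 1)
  have h2 := hconst x
  have := hflat (x - 1) (u (x - 1) * C (x - 1)) (u x * C x) (u (x + 1) * C (x + 1))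
  rw [sub_add_cancel] at this h1
  exact this (h2.trans h1.symm) hx

/-- The sages lose on a cycle whose length is at least five and not divisible by three. -/
theorem not_cycleWin (hn : 5 ≤ n) (h3 : ¬ 3 ∣ n) : ¬ CycleWin f := by
  intro hf
  have : NeZero n := ⟨by omega⟩
  obtain ⟨i, hi⟩ := hf.exists_neutral hn h3
  have hex : ∀ j, ∃ x, Neutral f j x :=
    zmod_induction (P := fun j => ∃ x, Neutral f j x) hi fun j => hf.exists_neutral_succ hn
  by_cases hall : ∃ i, ∀ x, Neutral f i x
  · obtain ⟨i, hi⟩ := hall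
    refine hf.not_all_neutral hn (zmod_induction (P := fun j => ∀ x, Neutral f j x) hi ?_)
    exact fun j hj x => hf.neutral_of_col hn fun a => hj a x
  · choose z hz using hex
    refine hf.not_unique_neutral hn z hz fun i x hx => ?_
    by_contra hne
    exact hall ⟨i, hf.neutral_unique hn hx (hz i) hne⟩

end Cycle

/-! ### Losing: reduction to cycles -/

section Reduction
variable {V : Type*} {G : SimpleGraph V}

/-- A sage with a single neighbour does not help: the neighbour can discard the colours that would
be guessed by both sages together. -/
theorem win_of_leaf {u v : V} (huv : ∀ x, G.Adj u x ↔ x = v) (h : SagesWin G) :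
    SagesWin (G.induce {u}ᶜ) := by
  classical
  obtain ⟨(f : ∀ v : V, (G.neighborSet v → Fin 3) → Fin 3),
    (hf : ∀ c : V → Fin 3, ∃ v : V, f v (fun u => c u.1) = c v)⟩ := h
  let ext : ∀ w : ({u}ᶜ : Set V), ((G.induce {u}ᶜ).neighborSet w → Fin 3) → Fin 3 →
      G.neighborSet w.1 → Fin 3 :=
    fun w c k x => if hx : x.1 = u then k else c ⟨⟨x.1, hx⟩, x.2⟩
  let φ : Fin 3 → Fin 3 := fun b => f u fun _ => b
  -- the neighbour `v` names the colour that he would guess for both colours of `u` which `u`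
  -- does not guess
  let g : ∀ w : ({u}ᶜ : Set V), ((G.induce {u}ᶜ).neighborSet w → Fin 3) → Fin 3 := fun w c =>
    if w.1 = v then
      if hb : ∃ b, ∀ k, k ≠ φ b → f w.1 (ext w c k) = b then hb.choose else 0
    else f w.1 (ext w c 0)
  refine ⟨g, fun c => ?_⟩
  change ∃ w, g w (fun x => c x.1) = c w
  by_contra! hc
  have hvu : v ≠ u := by
    rintro rfl
    exact G.irrefl ((huv v).2 rfl)
  let v' : ({u}ᶜ : Set V) := ⟨v, hvu⟩
  have key : ∀ k, k ≠ φ (c v') → f v (ext v' (fun x => c x.1) k) = c v' := by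
    intro k hk
    obtain ⟨w, hw⟩ := hf fun x => if hx : x = u then k else c ⟨x, hx⟩
    by_cases hwu : w = u
    · subst hwu
      rw [dif_pos rfl] at hw
      refine absurd ?_ hk
      rw [← hw]
      change f w _ = f w _
      congr 1
      funext x
      obtain ⟨x, hx⟩ := x
      obtain rfl := (huv x).1 hx
      exact dif_neg hvu
    · rw [dif_neg hwu] at hw
      by_cases hwv : w = v
      · subst hwv
        exact hw
      · refine absurd ?_ (hc ⟨w, hwu⟩)
        simp only [g, if_neg hwv]
        rw [← hw]
        congr 1
        funext x
        have hxu : x.1 ≠ u := fun hx => hwv ((huv w).1 (hx ▸ x.2.symm))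
        simp only [ext, dif_neg hxu]
  refine hc v' ?_
  have hb : ∃ b, ∀ k, k ≠ φ b → f v (ext v' (fun x => c x.1) k) = b := ⟨_, key⟩
  have hg : g v' (fun x => c x.1) = hb.choose := by
    simp only [g]
    rw [if_pos rfl, dif_pos hb]
  rw [hg]
  obtain ⟨k, h1, h2⟩ : ∃ k, k ≠ φ hb.choose ∧ k ≠ φ (c v') := by
    generalize φ hb.choose = x, φ (c v') = y
    revert x y
    decide
  rw [← key k h2]
  exact (hb.choose_spec k h1).symm

theorem not_win_of_subsingleton [Subsingleton V] [Nonempty V] : ¬ SagesWin G := by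
  rintro ⟨(f : ∀ v : V, (G.neighborSet v → Fin 3) → Fin 3),
    (hf : ∀ c : V → Fin 3, ∃ v : V, f v (fun u => c u.1) = c v)⟩
  obtain ⟨v⟩ := ‹Nonempty V›
  obtain ⟨k, hk⟩ : ∃ k, f v (fun _ => 0) ≠ k := by
    generalize f v (fun _ => 0) = x
    revert x
    decide
  obtain ⟨w, hw⟩ := hf fun _ => k
  obtain rfl := Subsingleton.elim v w
  apply hk
  rw [← hw]
  congr 1
  funext x
  exact absurd (Subsingleton.elim v x.1) (G.ne_of_adj x.2)

/-- The graph consists of the cycle `p` alone, and a winning strategy on it is transported to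
`ZMod p.length`. -/
theorem not_win_of_isCycle {v : V} {p : G.Walk v v} (hp : p.IsCycle) (hsupp : ∀ x, x ∈ p.support)
    (hdeg : ∀ x, (G.neighborSet x).ncard = 2) (hn : 5 ≤ p.length) (h3 : ¬ 3 ∣ p.length) :
    ¬ SagesWin G := by
  classical
  rintro ⟨(f : ∀ v : V, (G.neighborSet v → Fin 3) → Fin 3),
    (hf : ∀ c : V → Fin 3, ∃ v : V, f v (fun u => c u.1) = c v)⟩
  have : NeZero p.length := ⟨by omega⟩
  let pos : ZMod p.length → V := fun x => p.getVert x.val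
  have hinj : Function.Injective pos := by
    intro x y hxy
    have hx := ZMod.val_lt x
    have hy := ZMod.val_lt y
    exact ZMod.val_injective _ (hp.getVert_injOn' (by simp; omega) (by simp; omega) hxy)
  have hsurj : Function.Surjective pos := by
    intro x
    obtain ⟨t, rfl, ht⟩ := Walk.mem_support_iff_exists_getVert.1 (hsupp x)
    rcases ht.lt_or_eq with h | rfl
    · exact ⟨t, by simp only [pos, ZMod.val_cast_of_lt h]⟩
    · exact ⟨0, by simp [pos]⟩
  have hadj : ∀ x, G.Adj (pos x) (pos (x + 1)) := by
    intro x
    have hx := ZMod.val_lt x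
    have key : ((x.val + 1 : ℕ) : ZMod p.length) = x + 1 := by simp
    have := p.adj_getVert_succ hx
    rcases Nat.lt_or_ge (x.val + 1) p.length with h | h
    · rwa [← ZMod.val_cast_of_lt h, key] at this
    · have hl : x.val + 1 = p.length := by omega
      rw [hl, ZMod.natCast_self] at key
      rw [hl, Walk.getVert_length] at this
      simpa [pos, ← key] using this
  have hnbr : ∀ x y, G.Adj (pos x) y → y = pos (x - 1) ∨ y = pos (x + 1) := by
    intro x y hy
    have hne : pos (x - 1) ≠ pos (x + 1) := by
      intro h
      have h2 : ((2 : ℕ) : ZMod p.length) = 0 := by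
        push_cast
        linear_combination - hinj h
      have := Nat.le_of_dvd (by omega) ((ZMod.natCast_eq_zero_iff 2 p.length).1 h2)
      omega
    have hsub : ({pos (x - 1), pos (x + 1)} : Set V) ⊆ G.neighborSet (pos x) := by
      rintro _ (rfl | rfl)
      · have := hadj (x - 1)
        rw [sub_add_cancel] at this
        exact this.symm
      · exact hadj x
    have hfin : (G.neighborSet (pos x)).Finite :=
      Set.finite_of_ncard_ne_zero (by rw [hdeg]; omega)
    have := Set.eq_of_subset_of_ncard_le hsub (by rw [hdeg, Set.ncard_pair hne]) hfin
    have hy' : y ∈ G.neighborSet (pos x) := hy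
    rw [← this] at hy'
    exact hy'
  refine not_cycleWin (f := fun x a b => f (pos x) fun y => if y.1 = pos (x - 1) then a else b)
    hn h3 fun c => ?_
  obtain ⟨v, hv⟩ := hf fun v => c (Function.surjInv hsurj v)
  obtain ⟨x, rfl⟩ := hsurj v
  have hinv : ∀ x, Function.surjInv hsurj (pos x) = x := Function.leftInverse_surjInv ⟨hinj, hsurj⟩
  refine ⟨x, ?_⟩
  rw [hinv] at hv
  rw [← hv]
  beta_reduce
  congr 1
  funext y
  split_ifs with h
  · rw [h, hinv]
  · rw [(hnbr x y.1 y.2).resolve_left h, hinv]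

theorem exists_isCycle_of_degree_two [Finite V] (hG : G.Connected)
    (hdeg : ∀ x, (G.neighborSet x).ncard = 2) :
    ∃ (v : V) (p : G.Walk v v), p.IsCycle ∧ ∀ x, x ∈ p.support := by
  obtain ⟨v⟩ := hG.nonempty
  have hcyc : G.IsCycles := fun x _ => hdeg x
  have hne : (G.neighborSet v).Nonempty := by
    rw [← Set.ncard_pos (Set.toFinite _), hdeg]
    omega
  obtain ⟨p, hp, hv⟩ := hcyc.exists_cycle_toSubgraph_verts_eq_connectedComponentSupp
    (c := G.connectedComponentMk v) (v := v) rfl hne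
  refine ⟨v, p, hp, fun x => ?_⟩
  rw [← Walk.mem_verts_toSubgraph, hv]
  exact ConnectedComponent.sound (hG.preconnected x v)

/-- By induction on the number of vertices: leaves are removed, and a connected graph without leaves
and with at most as many edges as vertices is a single vertex or a cycle. -/
theorem not_win (m : ℕ) : ∀ {V : Type u} [Finite V] {G : SimpleGraph V}, Nat.card V = m →
    G.Connected → Nat.card G.edgeSet ≤ Nat.card V →
    (∀ (v : V) (w : G.Walk v v), w.IsCycle → 5 ≤ w.length ∧ ¬ (3 ∣ w.length)) →
    ¬ SagesWin G := by
  induction m with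
  | zero =>
    intro V _ G hm hG
    have := hG.nonempty
    exact absurd hm Nat.card_pos.ne'
  | succ m ih =>
    intro V _ G hm hG hE hcyc hwin
    have := hG.nonempty
    rcases subsingleton_or_nontrivial V with _ | _
    · exact not_win_of_subsingleton hwin
    classical
    have := Fintype.ofFinite V
    by_cases h1 : ∃ u, G.degree u = 1
    · obtain ⟨u, hu⟩ := h1
      obtain ⟨v, hv, hv'⟩ := degree_eq_one_iff_existsUnique_adj.1 hu
      have hcard : Nat.card ({u}ᶜ : Set V) = m := by
        rw [Nat.card_coe_set_eq, Set.ncard_compl, Set.ncard_singleton, hm, Nat.add_sub_cancel]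
      have hedge : Nat.card (G.induce {u}ᶜ).edgeSet = Nat.card G.edgeSet - 1 := by
        rw [Nat.card_eq_fintype_card, Nat.card_eq_fintype_card, ← edgeFinset_card,
          ← edgeFinset_card, card_edgeFinset_induce_compl_singleton,
          card_edgeFinset_deleteIncidenceSet, hu]
      refine ih hcard (hG.induce_compl_singleton_of_degree_eq_one hu) (by rw [hedge, hcard]; omega)
        (fun x w hw => ?_) (win_of_leaf (fun x => ⟨hv' x, fun h => h ▸ hv⟩) hwin)
      have := hcyc _ _ (hw.map (f := (Embedding.induce (G := G) {u}ᶜ).toHom)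
        (Embedding.induce (G := G) {u}ᶜ).injective)
      rwa [Walk.length_map] at this
    · have hpos : ∀ v, 2 ≤ G.degree v := by
        intro v
        have := hG.preconnected.degree_pos_of_nontrivial v
        have : G.degree v ≠ 1 := fun h => h1 ⟨v, h⟩
        omega
      have hsum := G.sum_degrees_eq_twice_card_edges
      rw [edgeFinset_card, ← Nat.card_eq_fintype_card] at hsum
      have hdeg : ∀ v, G.degree v = 2 := by
        have := (Finset.sum_eq_sum_iff_of_le (s := Finset.univ) (f := fun _ => 2)
          (g := fun v => G.degree v) fun v _ => hpos v).1 (by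
            refine le_antisymm (Finset.sum_le_sum fun v _ => hpos v) ?_
            rw [hsum, Finset.sum_const, Finset.card_univ, ← Nat.card_eq_fintype_card, smul_eq_mul]
            omega)
        exact fun v => (this v (Finset.mem_univ v)).symm
      have hdeg' : ∀ v, (G.neighborSet v).ncard = 2 := by
        intro v
        rw [← hdeg v, ← Nat.card_coe_set_eq, Nat.card_eq_fintype_card, card_neighborSet_eq_degree]
      obtain ⟨v, p, hp, hs⟩ := exists_isCycle_of_degree_two hG hdeg'
      obtain ⟨hl, h3⟩ := hcyc v p hp
      exact not_win_of_isCycle hp hs hdeg' hl h3 hwin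

end Reduction

theorem sages_lose_iff {V : Type*} [Fintype V] (G : SimpleGraph V)
    (hG : G.Connected) :
    ¬ SagesWin G ↔
      G.IsTree ∨
        (G.edgeSet.ncard = Fintype.card V ∧
          ∀ (v : V) (w : G.Walk v v), w.IsCycle →
            5 ≤ w.length ∧ ¬ (3 ∣ w.length)) := by
  constructor
  · intro h
    by_contra hc
    exact h (win_of_not hG hc)
  · rintro (h | ⟨hE, hcyc⟩)
    · have := (isTree_iff_connected_and_card.1 h).2
      exact not_win _ rfl hG (by omega) fun v w hw => absurd hw (h.isAcyclic w)
    · refine not_win _ rfl hG ?_ hcyc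
      rw [Nat.card_coe_set_eq, hE, Nat.card_eq_fintype_card]
end

section
/- For every n ≥ 2, on the path graph P_n with endpoint vertices A and B, the sages win with the hint A≠B. -/
/-- The sages win on `G` with the hint that `A` and `B` have different hat colors. -/
def SagesWinNe {V : Type*} (G : SimpleGraph V) (A B : V) : Prop :=
  ∃ f : HatStrategy G, ∀ c : V → Fin 3, c A ≠ c B → ∃ v : V, GuessesRight f c v

/-- The pairs `(x, y)` of consecutive colours, relative to the colour `a` of the first sage, that
can occur while all sages up to the one wearing `x` guess wrong. -/
def Surviving (a x y : Fin 3) : Prop :=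
  (x - a = 0 ∧ y - a = 0) ∨ (x - a = 0 ∧ y - a = 1) ∨ (x - a = 1 ∧ y - a = 2) ∨
    (x - a = 2 ∧ y - a = 0)

instance (a x y : Fin 3) : Decidable (Surviving a x y) := by
  unfold Surviving; infer_instance

/-- The guess of an inner sage seeing `x` on the left and `w` on the right. -/
def innerGuess (x w : Fin 3) : Fin 3 := if w = x + 2 then x else x + 1

lemma surviving_init : ∀ a y : Fin 3, y + 1 ≠ a → Surviving a a y := by decide

lemma surviving_step : ∀ a x y w : Fin 3,
    Surviving a x y → innerGuess x w ≠ y → Surviving a y w := by decide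

lemma surviving_last : ∀ a x y : Fin 3, Surviving a x y → x + 1 ≠ y → a = y := by decide

open Classical in
/-- The colour at position `j`, as seen by the sage at `v`; the value is `0` at positions that
are out of range or not adjacent to `v`. -/
noncomputable def seen {n : ℕ} (v : Fin n)
    (g : (SimpleGraph.pathGraph n).neighborSet v → Fin 3) (j : ℕ) : Fin 3 :=
  if h : ∃ hj : j < n, (⟨j, hj⟩ : Fin n) ∈ (SimpleGraph.pathGraph n).neighborSet v then
    g ⟨⟨j, h.1⟩, h.2⟩ else 0

lemma seen_eq {n : ℕ} (c : Fin n → Fin 3) (v : Fin n) (j : ℕ) (hj : j < n)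
    (h : v.val + 1 = j ∨ j + 1 = v.val) :
    seen v (fun u => c u.1) j = c ⟨j, hj⟩ := by
  have h' : ∃ hj : j < n, (⟨j, hj⟩ : Fin n) ∈ (SimpleGraph.pathGraph n).neighborSet v :=
    ⟨hj, by rw [SimpleGraph.mem_neighborSet, SimpleGraph.pathGraph_adj]; exact h⟩
  rw [seen, dif_pos h']

/-- The winning strategy on the path. -/
noncomputable def pathStrategy (n : ℕ) : HatStrategy (SimpleGraph.pathGraph n) := fun v g =>
  if v.val = 0 then seen v g 1 + 1
  else if v.val = n - 1 then seen v g (v.val - 1) + 1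
  else innerGuess (seen v g (v.val - 1)) (seen v g (v.val + 1))

theorem path_win_with_ne_hint (n : ℕ) (hn : 2 ≤ n) :
    SagesWinNe (SimpleGraph.pathGraph n) ⟨0, by omega⟩ ⟨n - 1, by omega⟩ := by
  refine ⟨pathStrategy n, fun c hc => ?_⟩
  by_contra! hwrong
  have inv : ∀ i (hi : i + 1 < n),
      Surviving (c ⟨0, by omega⟩) (c ⟨i, by omega⟩) (c ⟨i + 1, hi⟩) := by
    intro i
    induction i with
    | zero =>
      intro hi
      have h := hwrong ⟨0, by omega⟩
      simp only [GuessesRight, pathStrategy, if_true] at h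
      rw [seen_eq c _ 1 (by omega) (by simp)] at h
      exact surviving_init _ _ h
    | succ k ih =>
      intro hi
      have h := hwrong ⟨k + 1, by omega⟩
      simp only [GuessesRight, pathStrategy] at h
      rw [if_neg (by omega), if_neg (by omega),
        seen_eq c _ (k + 1 - 1) (by omega) (by simp),
        seen_eq c _ (k + 1 + 1) (by omega) (by simp)] at h
      exact surviving_step _ _ _ _ (ih (by omega)) h
  obtain ⟨m, rfl⟩ : ∃ m, n = m + 2 := ⟨n - 2, by omega⟩
  have h := hwrong ⟨m + 1, by omega⟩
  simp only [GuessesRight, pathStrategy] at h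
  rw [if_neg (by omega), if_pos (by omega),
    seen_eq c _ (m + 1 - 1) (by omega) (by simp)] at h
  exact hc (surviving_last _ _ _ (inv m (by omega)) h)
end

section
/- For every n ≥ 3, every vertex A of the cycle graph C_n, and every color i ∈ Fin 3, the sages win on C_n with the hint A−{i}. -/
/-- The sages win on `G` with the hint `A − {i}`: the sage `A` does not get a hat
of color `i`. -/
def SagesWinAvoid {V : Type*} (G : SimpleGraph V) (A : V) (i : Fin 3) : Prop :=
  ∃ f : HatStrategy G, ∀ c : V → Fin 3, c A ≠ i → ∃ v : V, GuessesRight f c v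

/-- The guess of a sage other than `A` who sees `x` before him and `y` after him. -/
def midGuess (x y : Fin 3) : Fin 3 := if y = 0 then 1 else if x = 1 then 2 else 0

/-- The guess of `A` when he sees `y` before him and `b` after him. -/
def hintGuess (y b : Fin 3) : Fin 3 := if y = 0 ∨ (y = 2 ∧ b ≠ 0) then 0 else 1

theorem zero_persists {n : ℕ} {x : ℕ → Fin 3}
    (h : ∀ k, k + 1 < n → midGuess (x k) (x (k + 2)) ≠ x (k + 1))
    {j : ℕ} (hj : x j ≠ 1) (hj' : x (j + 1) = 0) :
    ∀ d, j + 1 + d ≤ n → x (j + 1 + d) = 0 := by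
  have key : ∀ p q r : Fin 3, midGuess p r ≠ q → p ≠ 1 → q = 0 → r = 0 := by decide
  -- Along the induction the predecessor of each `0` stays different from `1`.
  suffices H : ∀ d, j + 1 + d ≤ n → x (j + d) ≠ 1 ∧ x (j + 1 + d) = 0 from
    fun d hd => (H d hd).2
  intro d
  induction d with
  | zero => intro _; exact ⟨hj, hj'⟩
  | succ d ih =>
    intro hd
    obtain ⟨h1, h2⟩ := ih (by omega)
    have e1 : j + 1 + d = j + d + 1 := by omega
    have e2 : j + 1 + (d + 1) = j + d + 2 := by omega
    have e3 : j + (d + 1) = j + d + 1 := by omega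
    rw [e1] at h2
    rw [e2, e3]
    exact ⟨by rw [h2]; decide, key _ _ _ (h (j + d) (by omega)) h1 h2⟩

/-- On a closed sequence with `x 0 ≠ 2` in which the sages at positions `1, …, n - 1` are all wrong,
the sage at position `0` is right. -/
theorem hintGuess_right {n : ℕ} (hn : 3 ≤ n) {x : ℕ → Fin 3}
    (h : ∀ k, k + 1 < n → midGuess (x k) (x (k + 2)) ≠ x (k + 1))
    (hx : x n = x 0) (h2 : x 0 ≠ 2) : hintGuess (x (n - 1)) (x 1) = x 0 := by
  obtain ⟨m, rfl⟩ : ∃ m, n = m + 3 := ⟨n - 3, by omega⟩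
  change hintGuess (x (m + 2)) (x 1) = x 0
  have h01 : x 0 = 0 ∨ x 0 = 1 := by
    revert h2; generalize x 0 = a; revert a; decide
  rcases h01 with ha | ha
  · have hy : x (m + 2) ≠ 1 := by
      have key : ∀ p q r : Fin 3, midGuess p r ≠ q → r = 0 → q ≠ 1 := by decide
      exact key _ _ _ (h (m + 1) (by omega)) (hx.trans ha)
    have hb : x 1 = 0 → x (m + 2) = 0 := by
      intro hb
      have := zero_persists h (j := 0) (by rw [ha]; decide) hb (m + 1) (by omega)
      rwa [show 0 + 1 + (m + 1) = m + 2 by omega] at this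
    rw [ha]
    have key : ∀ y b : Fin 3, y ≠ 1 → (b = 0 → y = 0) → hintGuess y b = 0 := by decide
    exact key _ _ hy hb
  · -- Since `x n = 1`, no `0` persists, so a `0` is preceded by a `1`.
    have hpre : ∀ j, j < m + 3 → x (j + 1) = 0 → x j = 1 := by
      intro j hj h0
      by_contra h1
      have := zero_persists h h1 h0 (m + 2 - j) (by omega)
      rw [show j + 1 + (m + 2 - j) = m + 3 by omega, hx, ha] at this
      exact absurd this (by decide)
    have hnz : ∀ k, k + 1 < m + 3 → x (k + 2) ≠ 0 := by
      intro k hk h0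
      have key : ∀ p q r : Fin 3, midGuess p r ≠ q → r = 0 → q ≠ 1 := by decide
      exact key _ _ _ (h k hk) h0 (hpre (k + 1) (by omega) h0)
    have hb2 : x 1 ≠ 2 := by
      have key : ∀ p q r : Fin 3, midGuess p r ≠ q → p = 1 → r ≠ 0 → q ≠ 2 := by decide
      exact key _ _ _ (h 0 (by omega)) ha (hnz 0 (by omega))
    have hone : x 1 = 1 → ∀ k, k < m + 2 → x (k + 1) = 1 := by
      intro hb k
      induction k with
      | zero => intro _; exact hb
      | succ k ih =>
        intro hk
        have key : ∀ p q r : Fin 3, midGuess p r ≠ q → p = 1 → q ≠ 0 → r ≠ 0 → q = 1 := by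
          decide
        exact key _ _ _ (h (k + 1) (by omega)) (ih (by omega)) (hnz k (by omega))
          (hnz (k + 1) (by omega))
    rw [ha]
    have key : ∀ y b : Fin 3, y ≠ 0 → b ≠ 2 → (b = 1 → y = 1) → hintGuess y b = 1 := by decide
    exact key _ _ (hnz m (by omega)) hb2 (fun hb => hone hb (m + 1) (by omega))

/-- The vertices of the cycle in order, starting from `A` and returning to it after a full turn. -/
theorem exists_cyclic_enumeration (m : ℕ) (A : Fin (m + 3)) :
    ∃ p : ℕ → Fin (m + 3), p 0 = A ∧ p (m + 3) = A ∧ (∀ k, p (k + 1) = p k + 1) ∧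
      ∀ k, 0 < k → k < m + 3 → p k ≠ A := by
  refine ⟨fun k => A + Fin.ofNat (m + 3) k, ?_, ?_, fun k => ?_, fun k h0 hk h => ?_⟩
  · simp
  · ext; simp
  · ext; simp [Fin.val_add, add_assoc]
  · rw [add_eq_left, Fin.ext_iff] at h
    simp only [Fin.val_ofNat, Fin.val_zero, Nat.mod_eq_of_lt hk] at h
    omega

theorem cycle_win_with_avoid_hint (n : ℕ) (hn : 3 ≤ n)
    (A : Fin n) (i : Fin 3) :
    SagesWinAvoid (SimpleGraph.cycleGraph n) A i := by
  obtain ⟨m, rfl⟩ : ∃ m, n = m + 3 := ⟨n - 3, by omega⟩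
  have hprev : ∀ v : Fin (m + 3), v - 1 ∈ (SimpleGraph.cycleGraph (m + 3)).neighborSet v := by
    intro v
    rw [SimpleGraph.mem_neighborSet, SimpleGraph.cycleGraph_adj]
    left; abel
  have hnext : ∀ v : Fin (m + 3), v + 1 ∈ (SimpleGraph.cycleGraph (m + 3)).neighborSet v := by
    intro v
    rw [SimpleGraph.mem_neighborSet, SimpleGraph.cycleGraph_adj]
    right; abel
  -- The relabeling `t ↦ t + (2 - i)` sends the excluded color `i` to `2`.
  refine ⟨fun v g =>
    (if v = A then hintGuess else midGuess)
      (g ⟨v - 1, hprev v⟩ + (2 - i)) (g ⟨v + 1, hnext v⟩ + (2 - i)) - (2 - i), ?_⟩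
  intro c hc
  by_contra hwrong
  push Not at hwrong
  simp only [GuessesRight, sub_eq_iff_eq_add] at hwrong
  obtain ⟨p, hp0, hpn, hps, hpA⟩ := exists_cyclic_enumeration m A
  let x : ℕ → Fin 3 := fun k => c (p k) + (2 - i)
  have hmid : ∀ k, k + 1 < m + 3 → midGuess (x k) (x (k + 2)) ≠ x (k + 1) := by
    intro k hk
    have := hwrong (p (k + 1))
    rw [if_neg (hpA _ (by omega) hk), ← hps, hps k, add_sub_cancel_right, ← hps] at this
    exact this
  have hx2 : x 0 ≠ 2 := by
    simp only [x, hp0]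
    have key : ∀ a i : Fin 3, a ≠ i → a + (2 - i) ≠ 2 := by decide
    exact key _ _ hc
  have hA := hintGuess_right hn hmid (by simp only [x, hp0, hpn]) hx2
  have hlast : p (m + 3 - 1) = A - 1 := by
    rw [eq_sub_iff_add_eq, ← hps]; exact hpn
  have hfirst : p 1 = A + 1 := by rw [← hp0]; exact hps 0
  simp only [x, hp0, hlast, hfirst] at hA
  apply hwrong A
  rwa [if_pos rfl]
end

section
/- Let G' be a finite simple graph, B a vertex of G' of degree 1, A the unique neighbour of B, and let G be the induced subgraph of G' on the vertex set V(G') \ {B}. If for every color i ∈ Fin 3 the sages win on G with hint A−{i}, then for every color j ∈ Fin 3 the sages win on G' with hint B−{j}. -/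
theorem push_hint {V : Type*} [Fintype V] (G' : SimpleGraph V) (A B : V)
    (hAB : A ≠ B) (hN : G'.neighborSet B = {A})
    (h : ∀ i : Fin 3,
      SagesWinAvoid (G'.induce {v | v ≠ B}) ⟨A, hAB⟩ i) :
    ∀ j : Fin 3, SagesWinAvoid G' B j := by
  classical
  intro j
  obtain ⟨f, hf⟩ := h 0
  have hBA : G'.Adj B A := by
    rw [← SimpleGraph.mem_neighborSet, hN]; rfl
  -- `A` is the only neighbour of `B`, so the test on the color of `B` succeeds only at `A`.
  refine ⟨fun v x => if hv : v = B
      then (if ∃ e : G'.Adj v A, x ⟨A, e⟩ = 0 then j + 2 else j + 1)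
      else (if ∃ e : G'.Adj v B, x ⟨B, e⟩ = j + 1 then 0
        else f ⟨v, hv⟩ (fun u => x ⟨u.1.1, u.2⟩)), fun c hc => ?_⟩
  have hcB : c B = j + 1 ∨ c B = j + 2 := by
    generalize c B = b at hc
    revert b j
    decide
  have hne : j + 2 ≠ j + 1 := by
    clear hc hcB
    revert j
    decide
  by_cases hA : c A = 0
  · rcases hcB with hb | hb
    · exact ⟨A, by simp [GuessesRight, hAB, hA, hb, hBA.symm]⟩
    · exact ⟨B, by simp [GuessesRight, hA, hb, hBA]⟩
  · rcases hcB with hb | hb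
    · exact ⟨B, by simp [GuessesRight, hA, hb]⟩
    · obtain ⟨⟨v, hv⟩, hw⟩ := hf (fun u => c u.1) hA
      have hv' : v ≠ B := hv
      refine ⟨v, ?_⟩
      simp only [GuessesRight, hv', hb, hne, exists_false, dite_false, if_false]
      exact hw
end

section
/- Let G be a finite simple graph whose vertex set is V₀ ∪ V₁ ∪ V₂ ∪ {B}, where V_i ∩ V_j = {A} for all i ≠ j, B ∉ V₀ ∪ V₁ ∪ V₂, every edge of G either lies inside some V_i or is the edge {A, B}, and {A, B} is an edge of G. If for each i ∈ Fin 3 the sages win on the induced subgraph of G on V_i with hint A−{i}, then the sages win on G (without any hint). -/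
/-- The guess at `v` of a strategy on the induced subgraph on `S`, computed from the colors of all
the neighbours of `v` in `G`. -/
def restrictedGuess {V : Type*} {G : SimpleGraph V} {S : Set V}
    (f : HatStrategy (G.induce S)) (v : S) (x : G.neighborSet v.1 → Fin 3) : Fin 3 :=
  f v (fun u => x ⟨u.1.1, u.2⟩)

theorem eq_of_forall_ne {g : Fin 3 → Fin 3} {a b : Fin 3}
    (ha : ∀ i, i ≠ a → g i = a) (hb : ∀ i, i ≠ b → g i = b) : a = b := by
  obtain ⟨k, hka, hkb⟩ : ∃ k : Fin 3, k ≠ a ∧ k ≠ b := by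
    clear ha hb; revert a b; decide
  rw [← ha k hka, ← hb k hkb]

theorem sum_of_graphs_win {V : Type*} [Fintype V] (G : SimpleGraph V)
    (A B : V) (W : Fin 3 → Set V)
    (hA : ∀ i : Fin 3, A ∈ W i)
    (huniv : W 0 ∪ W 1 ∪ W 2 ∪ {B} = Set.univ)
    (hinter : ∀ i j : Fin 3, i ≠ j → W i ∩ W j = {A})
    (hB : B ∉ W 0 ∪ W 1 ∪ W 2)
    (hAdjAB : G.Adj A B)
    (hedges : ∀ u v : V, G.Adj u v →
      (∃ i : Fin 3, u ∈ W i ∧ v ∈ W i) ∨ (u = A ∧ v = B) ∨ (u = B ∧ v = A))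
    (hwin : ∀ i : Fin 3, SagesWinAvoid (G.induce (W i)) ⟨A, hA i⟩ i) :
    SagesWin G := by
  classical
  choose f hf using hwin
  let F : HatStrategy G := fun v x =>
    if hv : v = A then
      if h : ∃ a : Fin 3, ∀ i, i ≠ a →
          restrictedGuess (f i) ⟨v, hv ▸ hA i⟩ x = a then h.choose else 0
    else if h : ∃ i, v ∈ W i then restrictedGuess (f h.choose) ⟨v, h.choose_spec⟩ x else 0
  refine ⟨F, fun c => ?_⟩
  by_contra! hwrong
  have key : ∀ i, i ≠ c A →
      restrictedGuess (f i) ⟨A, hA i⟩ (fun u => c u.1) = c A := by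
    intro i hi
    obtain ⟨⟨v, hv⟩, hr⟩ := hf i (fun u => c u.1) (Ne.symm hi)
    by_cases hvA : v = A
    · subst hvA
      exact hr
    · exfalso
      apply hwrong v
      have h : ∃ j, v ∈ W j := ⟨i, hv⟩
      -- distinct parts meet only in `A`, so the part chosen for `v` is `W i`
      have hj : h.choose = i := by
        by_contra hne
        have hmem : v ∈ W h.choose ∩ W i := ⟨h.choose_spec, hv⟩
        rw [hinter _ _ hne] at hmem
        exact hvA hmem
      have hcongr : ∀ (j : Fin 3) (hvj : v ∈ W j), j = i →
          restrictedGuess (f j) ⟨v, hvj⟩ (fun u => c u.1) = c v := by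
        rintro j hvj rfl
        exact hr
      simp only [GuessesRight, F, dif_neg hvA, dif_pos h]
      exact hcongr _ h.choose_spec hj
  apply hwrong A
  have h : ∃ a : Fin 3, ∀ i, i ≠ a →
      restrictedGuess (f i) ⟨A, hA i⟩ (fun u => c u.1) = a := ⟨c A, key⟩
  simp only [GuessesRight, F, dif_pos h, dite_true]
  exact eq_of_forall_ne h.choose_spec key
end
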